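/- Let c>0, and let H be a graph such that at least one of H and its complement has congestion at most c/(9+15c). Then there exists ε>0 such that for every graph G with |G|>1 that is both H-free and H̄-free, there is a pure pair A,B in G with |A|,|B| ≥ ε·|G|^{1-c}. -/

import Mathlib

noncomputable section

namespace PurePairs

open SimpleGraph

variable {V W : Type*}

/-- A pure pair in `G`: a pair of disjoint vertex sets that are complete
or anticomplete to each other. -/
def PurePair (G : SimpleGraph V) (A B : Set V) : Prop :=
  Disjoint A B ∧
    ((∀ a ∈ A, ∀ b ∈ B, G.Adj a b) ∨ (∀ a ∈ A, ∀ b ∈ B, ¬ G.Adj a b))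

/-- `G` contains `H`: some induced subgraph of `G` is isomorphic to `H`. -/
def Contains (G : SimpleGraph V) (H : SimpleGraph W) : Prop :=
  Nonempty (H ↪g G)

/-- The congestion of a graph `H`: the maximum (here: supremum, together with `0`)
of `1 - (|J|-1)/|E(J)|` over all subgraphs `J` of `H` with at least one edge.
If `H` has no edges this is `0`. -/
def congestion (H : SimpleGraph V) : ℝ :=
  sSup ({0} ∪ {x : ℝ | ∃ J : H.Subgraph, J.edgeSet.Nonempty ∧
    x = 1 - ((J.verts.ncard : ℝ) - 1) / (J.edgeSet.ncard : ℝ)})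

/-- `A` is anticomplete to `B`: no edges between them. -/
def Anticomplete (G : SimpleGraph V) (A B : Set V) : Prop :=
  ∀ a ∈ A, ∀ b ∈ B, ¬ G.Adj a b

/-- `A` covers `B`: every vertex of `B` has a neighbour in `A`. -/
def Covers (G : SimpleGraph V) (A B : Set V) : Prop :=
  ∀ b ∈ B, ∃ a ∈ A, G.Adj a b

/-- `G` is `ε`-sparse: every vertex has degree less than `ε|G|`. -/
def EpsSparse (G : SimpleGraph V) [Fintype V] (ε : ℝ) : Prop :=
  ∀ v : V, ((G.neighborSet v).ncard : ℝ) < ε * (Fintype.card V : ℝ)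

/-- `G` is `(γ,δ)`-coherent: there is no pair of disjoint anticomplete sets `A`, `B`
with `|A| ≥ γ` and `|B| ≥ δ`. -/
def Coherent (G : SimpleGraph V) (γ δ : ℝ) : Prop :=
  ¬ ∃ A B : Set V, Disjoint A B ∧ Anticomplete G A B ∧
      γ ≤ (A.ncard : ℝ) ∧ δ ≤ (B.ncard : ℝ)

/-- `N(X)`: the set of vertices with a neighbour in `X`. -/
def nbhd (G : SimpleGraph V) (X : Set V) : Set V :=
  {v | ∃ x ∈ X, G.Adj x v}

/-- A blockade: a family of nonempty pairwise disjoint vertex sets indexed by a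
finite set of integers. -/
def IsBlockade (I : Finset ℤ) (A : ℤ → Set V) : Prop :=
  (∀ i ∈ I, (A i).Nonempty) ∧
    ∀ i ∈ I, ∀ j ∈ I, i ≠ j → Disjoint (A i) (A j)

/-- The blockade `(A i : i ∈ I)` is `(γ,δ)`-divergent. -/
def Divergent (G : SimpleGraph V) (I : Finset ℤ) (A : ℤ → Set V) (γ δ : ℝ) : Prop :=
  ∃ i ∈ I, ∃ j ∈ I, i ≠ j ∧ ∃ X ⊆ A i, ∃ Y ⊆ A j,
    γ * ((A i).ncard : ℝ) ≤ (X.ncard : ℝ) ∧ δ * ((A j).ncard : ℝ) ≤ (Y.ncard : ℝ) ∧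
    Anticomplete G X Y

/-- The blockade `(A i : i ∈ I)` is `τ`-expanding. -/
def Expanding (G : SimpleGraph V) (I : Finset ℤ) (A : ℤ → Set V) (τ : ℝ) : Prop :=
  ∀ i ∈ I, ∀ j ∈ I, i ≠ j → ∀ X ⊆ A i,
    min (τ * (X.ncard : ℝ) / ((A i).ncard : ℝ)) (1/4)
      ≤ (((nbhd G X) ∩ A j).ncard : ℝ) / ((A j).ncard : ℝ)

/-- The linkage of the blockade `(A i : i ∈ I)` is at most `lam`. -/
def LinkageLE (G : SimpleGraph V) (I : Finset ℤ) (A : ℤ → Set V) (lam : ℝ) : Prop :=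
  ∀ i ∈ I, ∀ j ∈ I, i ≠ j → ∀ v ∈ A i,
    ((G.neighborSet v ∩ A j).ncard : ℝ) ≤ lam * ((A j).ncard : ℝ)

/-- The shrinkage of the blockade `(A i : i ∈ I)` is at most `σ`, i.e. its width is at
least `|G|^{1-σ}`. -/
def ShrinkageLE [Fintype V] (I : Finset ℤ) (A : ℤ → Set V) (σ : ℝ) : Prop :=
  ∀ i ∈ I, (Fintype.card V : ℝ) ^ (1 - σ) ≤ ((A i).ncard : ℝ)

/-- `(L 0, …, L k)` is a levelling in `G`. -/
def IsLevelling (G : SimpleGraph V) (L : ℕ → Set V) (k : ℕ) : Prop :=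
  1 ≤ k ∧ (L 0).ncard = 1 ∧
  (∀ i ≤ k, ∀ j ≤ k, i ≠ j → Disjoint (L i) (L j)) ∧
  (∀ i, 1 ≤ i → i ≤ k → Covers G (L (i-1)) (L i)) ∧
  (∀ i, 2 ≤ i → i ≤ k → ∀ h, h + 2 ≤ i → Anticomplete G (L h) (L i))

/-- The levelling `(L 0, …, L k)` reaches `C`, i.e. `(L 0, …, L k, C)` is a levelling. -/
def Reaches (G : SimpleGraph V) (L : ℕ → Set V) (k : ℕ) (C : Set V) : Prop :=
  IsLevelling G (fun i => if i = k + 1 then C else L i) (k + 1)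

/-- The levelling `(L 0, …, L k)` is `(B i : i ∈ I)`-rainbow. -/
def RainbowLevelling (I : Finset ℤ) (B : ℤ → Set V) (L : ℕ → Set V) (k : ℕ) : Prop :=
  ∃ q : ℕ → ℤ, (∀ i ≤ k, q i ∈ I ∧ L i ⊆ B (q i)) ∧
    ∀ i ≤ k, ∀ j ≤ k, q i = q j → i = j

/-- The levelling `(L 0, …, L k)` grades the blockade `(C j : j ∈ J)` (in some order). -/
def Grades (G : SimpleGraph V) (L : ℕ → Set V) (k : ℕ) (J : Finset ℤ) (C : ℤ → Set V) :
    Prop :=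
  Reaches G L k (⋃ j ∈ J, C j) ∧
  ∃ e : ℕ → ℤ, (∀ g < J.card, e g ∈ J) ∧
    (∀ g < J.card, ∀ h < J.card, e g = e h → g = h) ∧
    ∀ g < J.card, ∃ Y ⊆ L k,
      (∀ h, g ≤ h → h < J.card → Covers G Y (C (e h))) ∧
      (∀ h, h < g → Anticomplete G Y (C (e h)))

/-- The levelling `(L 0, …, L k)` grades the blockade `(C j : j ∈ J)` forwards. -/
def GradesFwd (G : SimpleGraph V) (L : ℕ → Set V) (k : ℕ) (J : Finset ℤ) (C : ℤ → Set V) :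
    Prop :=
  Reaches G L k (⋃ j ∈ J, C j) ∧
  ∀ j ∈ J, ∃ Y ⊆ L k,
    (∀ i ∈ J, j ≤ i → Covers G Y (C i)) ∧
    (∀ i ∈ J, i < j → Anticomplete G Y (C i))

/-- The levelling `(L 0, …, L k)` grades the blockade `(C j : j ∈ J)` backwards. -/
def GradesBwd (G : SimpleGraph V) (L : ℕ → Set V) (k : ℕ) (J : Finset ℤ) (C : ℤ → Set V) :
    Prop :=
  Reaches G L k (⋃ j ∈ J, C j) ∧
  ∀ j ∈ J, ∃ Y ⊆ L k,
    (∀ i ∈ J, i ≤ j → Covers G Y (C i)) ∧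
    (∀ i ∈ J, j < i → Anticomplete G Y (C i))

/-- Two levellings are parallel. -/
def Parallel (G : SimpleGraph V) (L : ℕ → Set V) (k : ℕ) (M : ℕ → Set V) (m : ℕ) : Prop :=
  L 0 = M 0 ∧
  Disjoint (⋃ j ∈ Finset.Icc 1 m, M j) (⋃ i ∈ Finset.Icc 1 k, L i) ∧
  Anticomplete G (⋃ j ∈ Finset.Icc 1 m, M j) (⋃ i ∈ Finset.Icc 1 k, L i)

/-- `(L, M, C)` is a bi-levelling, where `L` has height `k` and `M` has height `m`:
`C` is a blockade, `L, M` are parallel levellings both reaching the union of the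
blocks of `C`, and `L` grades `C` forwards. Its height is `k + m` and its length is
the length of `C`. -/
def IsBiLevelling (G : SimpleGraph V) (L : ℕ → Set V) (k : ℕ) (M : ℕ → Set V) (m : ℕ)
    (J : Finset ℤ) (C : ℤ → Set V) : Prop :=
  IsBlockade J C ∧ IsLevelling G L k ∧ IsLevelling G M m ∧ Parallel G L k M m ∧
    Reaches G M m (⋃ j ∈ J, C j) ∧ GradesFwd G L k J C

/-- A bi-grading: a bi-levelling in which `M` also grades `C` backwards. -/
def IsBiGrading (G : SimpleGraph V) (L : ℕ → Set V) (k : ℕ) (M : ℕ → Set V) (m : ℕ)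
    (J : Finset ℤ) (C : ℤ → Set V) : Prop :=
  IsBiLevelling G L k M m J C ∧ GradesBwd G M m J C

/-- The bi-levelling `(L, M, C)` is `(A i : i ∈ I)`-rainbow: each block of `C`, each
level of `L`, and each level of `M` other than `M 0 = L 0` is included in a block of
`A`, and distinct such sets lie in distinct blocks. -/
def RainbowBiLevelling (I : Finset ℤ) (A : ℤ → Set V)
    (L : ℕ → Set V) (k : ℕ) (M : ℕ → Set V) (m : ℕ)
    (J : Finset ℤ) (C : ℤ → Set V) : Prop :=
  ∃ (qc : ℤ → ℤ) (ql qm : ℕ → ℤ),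
    (∀ j ∈ J, qc j ∈ I ∧ C j ⊆ A (qc j)) ∧
    (∀ i ≤ k, ql i ∈ I ∧ L i ⊆ A (ql i)) ∧
    (∀ i, 1 ≤ i → i ≤ m → qm i ∈ I ∧ M i ⊆ A (qm i)) ∧
    (∀ j ∈ J, ∀ j' ∈ J, qc j = qc j' → j = j') ∧
    (∀ i ≤ k, ∀ i' ≤ k, ql i = ql i' → i = i') ∧
    (∀ i, 1 ≤ i → i ≤ m → ∀ i', 1 ≤ i' → i' ≤ m → qm i = qm i' → i = i') ∧
    (∀ j ∈ J, ∀ i ≤ k, qc j ≠ ql i) ∧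
    (∀ j ∈ J, ∀ i, 1 ≤ i → i ≤ m → qc j ≠ qm i) ∧
    (∀ i ≤ k, ∀ i', 1 ≤ i' → i' ≤ m → ql i ≠ qm i')

/-- Each block of `(C j : j ∈ J)` lies in a block of `(A i : i ∈ I)`; the `A`-size of
`C` is at least `η` when every block of `C` has size at least `η` times the size of the
block of `A` containing it. -/
def SizeGE (I : Finset ℤ) (A : ℤ → Set V) (J : Finset ℤ) (C : ℤ → Set V) (η : ℝ) : Prop :=
  ∀ j ∈ J, ∀ i ∈ I, C j ⊆ A i → η * ((A i).ncard : ℝ) ≤ ((C j).ncard : ℝ)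

/-- A `(B i : i ∈ I)`-rainbow induced path `p 0 - p 1 - ⋯ - p n` in `G`. -/
def RainbowPath (G : SimpleGraph V) (I : Finset ℤ) (B : ℤ → Set V)
    (n : ℕ) (p : ℕ → V) : Prop :=
  (∀ i ≤ n, ∀ j ≤ n, p i = p j → i = j) ∧
  (∀ i < n, G.Adj (p i) (p (i+1))) ∧
  (∀ i j, i + 1 < j → j ≤ n → ¬ G.Adj (p i) (p j)) ∧
  ∃ q : ℕ → ℤ, (∀ i ≤ n, q i ∈ I ∧ p i ∈ B (q i)) ∧
    ∀ i ≤ n, ∀ j ≤ n, q i = q j → i = j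

/-- A `(B i : i ∈ I)`-rainbow copy of `H` in `G`: an induced copy of `H` with each
vertex in a different block. -/
def RainbowCopy (G : SimpleGraph V) (I : Finset ℤ) (B : ℤ → Set V)
    (H : SimpleGraph W) : Prop :=
  ∃ (f : H ↪g G) (q : W → ℤ), Function.Injective q ∧ ∀ w : W, q w ∈ I ∧ f w ∈ B (q w)

/-- `(N,K,σ,lam,c)` forces `H`. -/
def Forces (H : SimpleGraph W) (N K : ℕ) (σ lam c : ℝ) : Prop :=
  ∀ {V : Type} [Fintype V] (G : SimpleGraph V),
    Coherent G ((Fintype.card V : ℝ) ^ (1 - c)) ((Fintype.card V : ℝ) ^ (1 - c)) →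
    N ≤ Fintype.card V →
    ∀ (I : Finset ℤ) (A : ℤ → Set V), IsBlockade I A → I.card = K →
      ShrinkageLE I A σ → LinkageLE G I A lam →
      RainbowCopy G I A H

/-- `p 0 - ⋯ - p n` is a handle of length `n` that can be added to (the graph induced
on) `S` inside the ambient graph `H`: an induced path of `H[S ∪ p]` of length at least
two whose ends lie in `S`, whose internal vertices avoid `S` and have degree two in
`H[S ∪ p]`. -/
def IsHandle (H : SimpleGraph V) (S : Set V) (n : ℕ) (p : ℕ → V) : Prop :=
  2 ≤ n ∧
  (∀ i ≤ n, ∀ j ≤ n, p i = p j → i = j) ∧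
  p 0 ∈ S ∧ p n ∈ S ∧
  (∀ i, 0 < i → i < n → p i ∉ S) ∧
  (∀ i < n, H.Adj (p i) (p (i+1))) ∧
  (∀ i j, i + 1 < j → j ≤ n → ¬ H.Adj (p i) (p j)) ∧
  (∀ i, 0 < i → i < n → ∀ w, (w ∈ S ∨ ∃ j ≤ n, w = p j) → H.Adj (p i) w →
    w = p (i-1) ∨ w = p (i+1))

/-- The vertex sets `S` such that the induced subgraph `H[S]` can be built, starting
from the two-vertex graph with no edges, by repeatedly adding handles of length at
least `β`. -/
inductive BuildableOn (H : SimpleGraph V) (β : ℕ) : Set V → Prop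
  | base (u v : V) (huv : u ≠ v) (hadj : ¬ H.Adj u v) : BuildableOn H β {u, v}
  | handle (S : Set V) (n : ℕ) (p : ℕ → V) (hS : BuildableOn H β S)
      (hh : IsHandle H S n p) (hn : β ≤ n) :
      BuildableOn H β (S ∪ {w | ∃ j ≤ n, w = p j})

/-- `H` is `β`-buildable. -/
def Buildable [Fintype V] (H : SimpleGraph V) (β : ℕ) : Prop :=
  BuildableOn H β Set.univ

/-- The vertex sets `S` such that the induced subgraph `H[S]` can be built, starting
from the null graph, by repeatedly adding a subleaf or a handle of length at least
`β`. -/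
inductive WeaklyBuildableOn (H : SimpleGraph V) (β : ℕ) : Set V → Prop
  | empty : WeaklyBuildableOn H β ∅
  | subleaf (S : Set V) (v : V) (hv : v ∉ S) (hdeg : (S ∩ H.neighborSet v).ncard ≤ 1)
      (hS : WeaklyBuildableOn H β S) : WeaklyBuildableOn H β (insert v S)
  | handle (S : Set V) (n : ℕ) (p : ℕ → V) (hS : WeaklyBuildableOn H β S)
      (hh : IsHandle H S n p) (hn : β ≤ n) :
      WeaklyBuildableOn H β (S ∪ {w | ∃ j ≤ n, w = p j})

/-- `H` is weakly `β`-buildable. -/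
def WeaklyBuildable [Fintype V] (H : SimpleGraph V) (β : ℕ) : Prop :=
  WeaklyBuildableOn H β Set.univ

set_option linter.unusedSectionVars false
set_option linter.unusedVariables false
section Basics
open Classical Finset

variable {V : Type} [Fintype V]

/-- neighbours of `v` inside `B` -/
def nb (G : SimpleGraph V) (v : V) (B : Finset V) : Finset V := B.filter (fun b => G.Adj v b)

/-- vertices of `B` with a neighbour in `X` -/
def NS (G : SimpleGraph V) (X B : Finset V) : Finset V := B.filter (fun b => ∃ x ∈ X, G.Adj x b)

/-- coherence for finsets -/
def Coh (G : SimpleGraph V) (w : ℝ) : Prop :=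
  ∀ A B : Finset V, Disjoint A B → (∀ a ∈ A, ∀ b ∈ B, ¬ G.Adj a b) →
    (A.card : ℝ) < w ∨ (B.card : ℝ) < w

/-- linkage at most `lam` -/
def Link (G : SimpleGraph V) (I : Finset ℕ) (A : ℕ → Finset V) (lam : ℝ) : Prop :=
  ∀ i ∈ I, ∀ j ∈ I, i ≠ j → ∀ v ∈ A i, ((nb G v (A j)).card : ℝ) ≤ lam * ((A j).card : ℝ)

/-- blocks consist of vertices of the matching color -/
def Colored (col : V → ℕ) (I : Finset ℕ) (A : ℕ → Finset V) : Prop :=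
  ∀ i ∈ I, ∀ v ∈ A i, col v = i

lemma mem_nb {G : SimpleGraph V} {v b : V} {B : Finset V} : b ∈ nb G v B ↔ b ∈ B ∧ G.Adj v b := by
  simp [nb]

lemma mem_NS {G : SimpleGraph V} {b : V} {X B : Finset V} :
    b ∈ NS G X B ↔ b ∈ B ∧ ∃ x ∈ X, G.Adj x b := by
  simp [NS]

lemma nb_subset (G : SimpleGraph V) (v : V) (B : Finset V) : nb G v B ⊆ B := filter_subset _ _
lemma NS_subset (G : SimpleGraph V) (X B : Finset V) : NS G X B ⊆ B := filter_subset _ _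

lemma nb_mono {G : SimpleGraph V} {v : V} {B C : Finset V} (h : B ⊆ C) : nb G v B ⊆ nb G v C :=
  filter_subset_filter _ h

lemma NS_mono {G : SimpleGraph V} {X Y B C : Finset V} (hX : X ⊆ Y) (h : B ⊆ C) :
    NS G X B ⊆ NS G Y C := by
  intro b hb
  rw [mem_NS] at *
  exact ⟨h hb.1, let ⟨x, hx, hxb⟩ := hb.2; ⟨x, hX hx, hxb⟩⟩

lemma NS_union (G : SimpleGraph V) (X Y B : Finset V) : NS G (X ∪ Y) B = NS G X B ∪ NS G Y B := by
  ext b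
  simp only [mem_NS, mem_union]
  constructor
  · rintro ⟨hb, x, hx | hx, h⟩
    · exact Or.inl ⟨hb, x, hx, h⟩
    · exact Or.inr ⟨hb, x, hx, h⟩
  · rintro (⟨hb, x, hx, h⟩ | ⟨hb, x, hx, h⟩)
    · exact ⟨hb, x, Or.inl hx, h⟩
    · exact ⟨hb, x, Or.inr hx, h⟩

lemma NS_empty (G : SimpleGraph V) (B : Finset V) : NS G ∅ B = ∅ := by
  ext b; simp [mem_NS]

lemma NS_singleton (G : SimpleGraph V) (v : V) (B : Finset V) : NS G {v} B = nb G v B := by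
  ext b; simp [mem_NS, mem_nb]

/-- coherence: a set of size at least `w` has few non-neighbours in a disjoint set -/
lemma Coh.sdiff_lt {G : SimpleGraph V} {w : ℝ} (h : Coh G w) {X B : Finset V}
    (hd : Disjoint X B) (hX : w ≤ X.card) : ((B \ NS G X B).card : ℝ) < w := by
  have h0 : ∀ a ∈ X, ∀ b ∈ B \ NS G X B, ¬ G.Adj a b := by
    intro a ha b hb hab
    rw [mem_sdiff, mem_NS] at hb
    exact hb.2 ⟨hb.1, a, ha, hab⟩
  exact (h X (B \ NS G X B) (hd.mono_right sdiff_subset) h0).resolve_left (not_lt.mpr hX)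

lemma Coh.NS_card {G : SimpleGraph V} {w : ℝ} (h : Coh G w) {X B : Finset V}
    (hd : Disjoint X B) (hX : w ≤ X.card) : (B.card : ℝ) - w < (NS G X B).card := by
  have h1 := h.sdiff_lt hd hX
  have h2 : ((B \ NS G X B).card : ℝ) = B.card - (NS G X B).card := by
    rw [card_sdiff_of_subset (NS_subset _ _ _), Nat.cast_sub (card_le_card (NS_subset _ _ _))]
  linarith

lemma Link.mono {G : SimpleGraph V} {I I' : Finset ℕ} {A : ℕ → Finset V} {l l' : ℝ}
    (h : Link G I A l) (hI : I' ⊆ I) (hl : l ≤ l') : Link G I' A l' := fun i hi j hj hij v hv =>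
  (h i (hI hi) j (hI hj) hij v hv).trans (by gcongr)

lemma Link.shrink {G : SimpleGraph V} {I : Finset ℕ} {A B : ℕ → Finset V} {l l' t : ℝ}
    (h : Link G I A l) (hB : ∀ i ∈ I, B i ⊆ A i) (hl : 0 ≤ l) (ht : l ≤ l' * t) (hl' : 0 ≤ l')
    (hc : ∀ i ∈ I, t * (A i).card ≤ (B i).card) : Link G I B l' := by
  intro i hi j hj hij v hv
  have h1 := h i hi j hj hij v (hB i hi hv)
  have h2 : ((nb G v (B j)).card : ℝ) ≤ (nb G v (A j)).card := by
    exact_mod_cast card_le_card (nb_mono (hB j hj))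
  have h3 := hc j hj
  calc _ ≤ _ := h2
    _ ≤ _ := h1
    _ ≤ l' * t * (A j).card := by gcongr
    _ = l' * (t * (A j).card) := by ring
    _ ≤ _ := by gcongr

lemma Colored.mono {col : V → ℕ} {I I' : Finset ℕ} {A A' : ℕ → Finset V} (h : Colored col I A)
    (hI : I' ⊆ I) (hA : ∀ i ∈ I', A' i ⊆ A i) : Colored col I' A' :=
  fun i hi v hv => h i (hI hi) v (hA i hi hv)

lemma Colored.disjoint {col : V → ℕ} {I : Finset ℕ} {A : ℕ → Finset V} (h : Colored col I A)
    {i j : ℕ} (hi : i ∈ I) (hj : j ∈ I) (hij : i ≠ j) : Disjoint (A i) (A j) := by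
  rw [Finset.disjoint_left]
  intro v hv hv'
  exact hij ((h i hi v hv).symm.trans (h j hj v hv'))

/-- Markov type bound -/
lemma markov_card {α : Type*} (s : Finset α) (f : α → ℝ) (hf : ∀ x ∈ s, 0 ≤ f x) (t : ℝ) :
    t * ((s.filter (fun x => t < f x)).card : ℝ) ≤ ∑ x ∈ s, f x := by
  calc t * ((s.filter (fun x => t < f x)).card : ℝ) = ∑ x ∈ s.filter (fun x => t < f x), t := by
        rw [sum_const, nsmul_eq_mul]; ring
    _ ≤ ∑ x ∈ s.filter (fun x => t < f x), f x := sum_le_sum fun x hx => (mem_filter.mp hx).2.le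
    _ ≤ _ := sum_le_sum_of_subset_of_nonneg (filter_subset _ _) fun x hx _ => hf x hx

lemma trim_lemma (G : SimpleGraph V) (I : Finset ℕ) (B : ℕ → Finset V) (mu : ℝ) (hmu : 0 < mu)
    (h : ∀ i ∈ I, ∀ j ∈ I, i ≠ j →
      ∑ x ∈ B i, ((nb G x (B j)).card : ℝ) ≤ mu * (B i).card * (B j).card) :
    ∃ B' : ℕ → Finset V, (∀ i, B' i ⊆ B i) ∧ (∀ i ∈ I, ((B i).card : ℝ) ≤ 2 * (B' i).card) ∧
      Link G I B' (4 * I.card * mu) := by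
  set bad : ℕ → ℕ → Finset V := fun i j =>
    (B i).filter (fun x => 2 * I.card * mu * (B j).card < (nb G x (B j)).card) with hbad
  set B' : ℕ → Finset V := fun i => B i \ (I.erase i).biUnion (bad i) with hB'
  have hsz : ∀ i ∈ I, ((B i).card : ℝ) ≤ 2 * (B' i).card := by
    intro i hi
    have hI : (0:ℝ) < I.card := by exact_mod_cast card_pos.mpr ⟨i, hi⟩
    have hb : ∀ j ∈ I.erase i, ((bad i j).card : ℝ) ≤ (B i).card / (2 * I.card) := by
      intro j hj
      have hj' := mem_erase.mp hj
      rcases Nat.eq_zero_or_pos (B j).card with h0 | h0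
      · have : bad i j = ∅ := by
          rw [card_eq_zero] at h0
          simp [hbad, h0, nb]
        rw [this]; simp; positivity
      · have h0' : (0:ℝ) < (B j).card := by exact_mod_cast h0
        have h1 := markov_card (B i) (fun x => ((nb G x (B j)).card : ℝ)) (fun _ _ => by positivity)
          (2 * I.card * mu * (B j).card)
        have h2 := h1.trans (h i hi j hj'.2 hj'.1.symm)
        rw [le_div_iff₀ (by positivity)]
        have h3 : (0:ℝ) < mu * (B j).card := by positivity
        have h4 : mu * (B j).card * ((bad i j).card * (2 * I.card)) ≤ mu * (B j).card * (B i).card := by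
          calc _ = 2 * I.card * mu * (B j).card * (bad i j).card := by ring
            _ ≤ _ := h2
            _ = _ := by ring
        exact le_of_mul_le_mul_left h4 h3
    have h5 : (((I.erase i).biUnion (bad i)).card : ℝ) ≤ (B i).card / 2 := by
      calc (((I.erase i).biUnion (bad i)).card : ℝ) ≤ ∑ j ∈ I.erase i, ((bad i j).card : ℝ) := by
            exact_mod_cast card_biUnion_le
        _ ≤ ∑ j ∈ I.erase i, ((B i).card / (2 * I.card) : ℝ) := sum_le_sum hb
        _ = (I.erase i).card * ((B i).card / (2 * I.card)) := by rw [sum_const, nsmul_eq_mul]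
        _ ≤ I.card * ((B i).card / (2 * I.card)) := by
            gcongr; exact erase_subset _ _
        _ = _ := by field_simp
    have h6 : ((B i).card : ℝ) ≤ (B' i).card + ((I.erase i).biUnion (bad i)).card := by
      exact_mod_cast (card_le_card_sdiff_add_card)
    linarith
  refine ⟨B', fun i => sdiff_subset, hsz, ?_⟩
  intro i hi j hj hij v hv
  have hv' := mem_sdiff.mp hv
  have h1 : ((nb G v (B j)).card : ℝ) ≤ 2 * I.card * mu * (B j).card := by
    by_contra hcon
    push Not at hcon
    exact hv'.2 (mem_biUnion.mpr ⟨j, mem_erase.mpr ⟨hij.symm, hj⟩, mem_filter.mpr ⟨hv'.1, hcon⟩⟩)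
  have h2 : ((nb G v (B' j)).card : ℝ) ≤ (nb G v (B j)).card := by
    exact_mod_cast card_le_card (nb_mono sdiff_subset)
  calc _ ≤ _ := h2
    _ ≤ _ := h1
    _ ≤ 2 * I.card * mu * (2 * (B' j).card) := by gcongr; exact hsz j hj
    _ = _ := by ring

end Basics

set_option linter.unusedSectionVars false
set_option linter.unusedVariables false
section Expand
open Classical Finset

variable {V : Type} [Fintype V]

/-- expansion, in multiplied-out form -/
def Expd (G : SimpleGraph V) (I : Finset ℕ) (A : ℕ → Finset V) (t : ℝ) : Prop :=
  ∀ i ∈ I, ∀ j ∈ I, i ≠ j → ∀ X ⊆ A i, 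
    min (t * X.card / (A i).card) (1/2) * (A j).card ≤ (NS G X (A j)).card

lemma expand_lemma (G : SimpleGraph V) (w t : ℝ) (hw : 0 < w) (ht : 0 < t) (hcoh : Coh G w)
    (col : V → ℕ) (I : Finset ℕ) (A : ℕ → Finset V) (hcol : Colored col I A)
    (h1 : ∀ i ∈ I, 8 * t * w ≤ (A i).card) (h2 : ∀ i ∈ I, 4 * I.card * w ≤ (A i).card) :
    ∃ A' : ℕ → Finset V, (∀ i, A' i ⊆ A i) ∧ (∀ i ∈ I, ((A i).card : ℝ) ≤ 2 * (A' i).card) ∧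
      Expd G I A' (t / 2) := by
  set R : (ℕ → ℕ → Finset V) → ℕ → Finset V := fun D i => A i \ I.biUnion (D i) with hR
  set good : (ℕ → ℕ → Finset V) → Prop := fun D => ∀ i ∈ I, ∀ j ∈ I, D i j ⊆ A i ∧
    ((D i j).card : ℝ) < w ∧
    (i ≠ j → ((NS G (D i j) (R D j)).card : ℝ) * (A i).card ≤ t * (D i j).card * (A j).card) with hgood
  by_contra hcon
  push Not at hcon
  have hRs : ∀ D i, R D i ⊆ A i := fun D i => sdiff_subset
  have hRsz : ∀ D, good D → ∀ i ∈ I, ((A i).card : ℝ) ≤ 2 * (R D i).card := by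
    intro D hD i hi
    have h3 : ((I.biUnion (D i)).card : ℝ) ≤ I.card * w := by
      calc ((I.biUnion (D i)).card : ℝ) ≤ ∑ j ∈ I, ((D i j).card : ℝ) := by
            exact_mod_cast card_biUnion_le
        _ ≤ ∑ j ∈ I, w := sum_le_sum fun j hj => (hD i hi j hj).2.1.le
        _ = _ := by rw [sum_const, nsmul_eq_mul]
    have h4 : ((A i).card : ℝ) ≤ (R D i).card + (I.biUnion (D i)).card := by
      exact_mod_cast (card_le_card_sdiff_add_card)
    have h5 := h2 i hi
    have : (0:ℝ) ≤ (A i).card := by positivity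
    linarith
  have key : ∀ k : ℕ, ∃ D, good D ∧ k ≤ ∑ i ∈ I, ∑ j ∈ I, (D i j).card := by
    intro k
    induction k with
    | zero =>
      refine ⟨fun _ _ => ∅, ?_, Nat.zero_le _⟩
      intro i hi j hj
      refine ⟨empty_subset _, by simpa using hw, fun _ => ?_⟩
      simp [NS_empty]
    | succ k ih =>
      obtain ⟨D, hD, hk⟩ := ih
      have h3 := hcon (R D) (hRs D) (hRsz D hD)
      simp only [Expd] at h3
      push Not at h3
      obtain ⟨i, hi, j, hj, hij, X, hX, hlt⟩ := h3
      have hIpos : (1:ℝ) ≤ I.card := by exact_mod_cast card_pos.mpr ⟨i, hi⟩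
      have hAi : 4 * w ≤ (A i).card := le_trans (by nlinarith) (h2 i hi)
      have hAj : 4 * w ≤ (A j).card := le_trans (by nlinarith) (h2 j hj)
      have hRi := hRsz D hD i hi
      have hRj := hRsz D hD j hj
      have hRi0 : (0:ℝ) < (R D i).card := by linarith
      have hRj0 : (0:ℝ) < (R D j).card := by linarith
      have hAi0 : (0:ℝ) < (A i).card := by linarith
      have hAj0 : (0:ℝ) < (A j).card := by linarith
      have hRjA : ((R D j).card : ℝ) ≤ (A j).card := by exact_mod_cast card_le_card (hRs D j)
      set nx : ℝ := ((NS G X (R D j)).card : ℝ) with hnx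
      have hlt1 : nx < (t / 2 * X.card / (R D i).card) * (R D j).card :=
        lt_of_lt_of_le hlt (by gcongr; exact min_le_left _ _)
      have hlt2 : nx < 1/2 * (R D j).card :=
        lt_of_lt_of_le hlt (by gcongr; exact min_le_right _ _)
      have hX0 : 0 < X.card := by
        rcases Nat.eq_zero_or_pos X.card with h0 | h0
        · rw [h0] at hlt1
          have : (0:ℝ) ≤ nx := by positivity
          simp at hlt1; linarith
        · exact h0
      have hX0' : (0:ℝ) < X.card := by exact_mod_cast hX0
      have hlt3 : nx * (R D i).card < t / 2 * X.card * (R D j).card := by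
        rw [div_mul_eq_mul_div, lt_div_iff₀ hRi0] at hlt1
        exact hlt1
      have hcond : nx * (A i).card ≤ t * X.card * (A j).card := by
        have hnx0 : 0 ≤ nx := by positivity
        calc nx * (A i).card ≤ nx * (2 * (R D i).card) := by gcongr
          _ = 2 * (nx * (R D i).card) := by ring
          _ ≤ 2 * (t / 2 * X.card * (R D j).card) := by linarith
          _ = t * X.card * (R D j).card := by ring
          _ ≤ _ := by gcongr
      have hdisj : Disjoint (A i) (A j) := hcol.disjoint hi hj hij
      have hXw : (X.card : ℝ) < w := by
        by_contra hge
        push Not at hge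
        have := hcoh.NS_card (hdisj.mono (hX.trans (hRs D i)) (hRs D j)) hge
        linarith
      have hDij := hD i hi j hj
      have hXD : Disjoint (D i j) X := by
        rw [Finset.disjoint_left]
        intro v hv hvX
        have := hX hvX
        rw [hR] at this
        simp only [mem_sdiff, mem_biUnion, not_exists, not_and] at this
        exact this.2 j hj hv
      have hcardU : ((D i j ∪ X).card : ℝ) = (D i j).card + X.card := by
        rw [card_union_of_disjoint hXD]; push_cast; ring
      have hNSU : ((NS G (D i j ∪ X) (R D j)).card : ℝ) * (A i).card ≤
          t * (D i j ∪ X).card * (A j).card := by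
        rw [NS_union, hcardU]
        have h4 : ((NS G (D i j) (R D j) ∪ NS G X (R D j)).card : ℝ) ≤
          (NS G (D i j) (R D j)).card + nx := by rw [hnx]; exact_mod_cast card_union_le _ _
        have h5 := hDij.2.2 hij
        calc _ ≤ ((NS G (D i j) (R D j)).card + nx) * (A i).card := by gcongr
          _ ≤ _ := by linarith
      have hUw : ((D i j ∪ X).card : ℝ) < w := by
        by_contra hge
        push Not at hge
        have h6 := hcoh.NS_card (hdisj.mono (union_subset hDij.1 (hX.trans (hRs D i))) (hRs D j)) hge
        have h7 : ((A j).card : ℝ) / 4 < (NS G (D i j ∪ X) (R D j)).card := by linarith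
        have h8 : ((D i j ∪ X).card : ℝ) < 2 * w := by rw [hcardU]; linarith [hDij.2.1]
        have h9 : ((A j).card : ℝ) / 4 * (A i).card < t * (2 * w) * (A j).card := by
          calc _ < ((NS G (D i j ∪ X) (R D j)).card : ℝ) * (A i).card := by gcongr
            _ ≤ _ := hNSU
            _ ≤ _ := by gcongr
        have h10 := h1 i hi
        nlinarith
      set D' : ℕ → ℕ → Finset V := Function.update D i (Function.update (D i) j (D i j ∪ X)) with hD'
      have hD'ij : D' i j = D i j ∪ X := by simp [hD']
      have hD'ne : ∀ a b, (a ≠ i ∨ b ≠ j) → D' a b = D a b := by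
        intro a b hab
        by_cases ha : a = i
        · subst ha
          have hb : b ≠ j := by tauto
          simp [hD', hb]
        · simp [hD', ha]
      have hsub : ∀ a b, D a b ⊆ D' a b := by
        intro a b
        by_cases hab : a ≠ i ∨ b ≠ j
        · rw [hD'ne a b hab]
        · push Not at hab
          rw [hab.1, hab.2, hD'ij]
          exact subset_union_left
      have hR' : ∀ a, R D' a ⊆ R D a := by
        intro a
        apply sdiff_subset_sdiff (Subset.refl _)
        exact biUnion_mono fun b _ => hsub a b
      refine ⟨D', ?_, ?_⟩
      · intro a ha b hb
        by_cases hab : a ≠ i ∨ b ≠ j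
        · rw [hD'ne a b hab]
          refine ⟨(hD a ha b hb).1, (hD a ha b hb).2.1, fun hne => ?_⟩
          refine le_trans ?_ ((hD a ha b hb).2.2 hne)
          gcongr
          exact NS_mono (Subset.refl _) (hR' b)
        · push Not at hab
          obtain ⟨rfl, rfl⟩ := hab
          rw [hD'ij]
          refine ⟨union_subset hDij.1 (hX.trans (hRs D a)), hUw, fun hne => le_trans ?_ hNSU⟩
          gcongr
          exact NS_mono (Subset.refl _) (hR' b)
      · have : ∑ a ∈ I, ∑ b ∈ I, (D a b).card < ∑ a ∈ I, ∑ b ∈ I, (D' a b).card := by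
          apply sum_lt_sum
          · intro a ha
            exact sum_le_sum fun b _ => card_le_card (hsub a b)
          · refine ⟨i, hi, sum_lt_sum (fun b _ => card_le_card (hsub i b)) ⟨j, hj, ?_⟩⟩
            rw [hD'ij, card_union_of_disjoint hXD]; omega
        omega
  obtain ⟨D, hD, hk⟩ := key (I.card * (I.card * (univ : Finset V).card) + 1)
  have : ∑ i ∈ I, ∑ j ∈ I, (D i j).card ≤ I.card * (I.card * (univ : Finset V).card) := by
    calc _ ≤ ∑ i ∈ I, ∑ j ∈ I, (univ : Finset V).card :=
          sum_le_sum fun i _ => sum_le_sum fun j _ => card_le_card (subset_univ _)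
      _ = _ := by simp
  omega

end Expand

set_option linter.unusedSectionVars false
set_option linter.unusedVariables false
section Paths
open Classical Finset

variable {V : Type} [Fintype V]

/-- the list is an induced path -/
def IP (G : SimpleGraph V) (l : List V) : Prop :=
  ∀ (i j : ℕ) (hi : i < l.length) (hj : j < l.length), i < j → (G.Adj l[i] l[j] ↔ j = i + 1)

lemma IP.cons {G : SimpleGraph V} {a : V} {l : List V} (h : IP G l)
    (h2 : ∀ (j : ℕ) (hj : j < l.length), G.Adj a l[j] ↔ j = 0) : IP G (a :: l) := by
  intro i j hi hj hij
  cases j with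
  | zero => omega
  | succ j =>
    cases i with
    | zero => simpa using h2 j (by simpa using hj)
    | succ i =>
      have := h i j (by simpa using hi) (by simpa using hj) (by omega)
      simpa using this

lemma IP.append {G : SimpleGraph V} {a b : List V} (ha : IP G a) (hb : IP G b)
    (h : ∀ (i j : ℕ) (hi : i < a.length) (hj : j < b.length),
      G.Adj a[i] b[j] ↔ (i + 1 = a.length ∧ j = 0)) : IP G (a ++ b) := by
  intro i j hi hj hij
  simp only [List.getElem_append]
  have hlen : (a ++ b).length = a.length + b.length := List.length_append
  split_ifs with h1 h2 h2
  · exact ha i j h1 h2 hij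
  · rw [h i (j - a.length) h1 (by omega)]; omega
  · omega
  · rw [hb (i - a.length) (j - a.length) (by omega) (by omega) (by omega)]; omega

lemma IP.reverse {G : SimpleGraph V} {a : List V} (ha : IP G a) : IP G a.reverse := by
  intro i j hi hj hij
  simp only [List.length_reverse] at hi hj
  simp only [List.getElem_reverse]
  rw [G.adj_comm, ha _ _ (by omega) (by omega) (by omega)]; omega

lemma IP.take {G : SimpleGraph V} {a : List V} (ha : IP G a) (k : ℕ) : IP G (a.take k) := by
  intro i j hi hj hij
  simp only [List.length_take] at hi hj
  simp only [List.getElem_take]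
  exact ha _ _ _ _ hij

lemma IP.tail {G : SimpleGraph V} {x : V} {a : List V} (ha : IP G (x :: a)) : IP G a := by
  intro i j hi hj hij
  have := ha (i+1) (j+1) (by simpa using hi) (by simpa using hj) (by omega)
  simpa using this

/-- joining two induced paths with a common last vertex -/
lemma hit_lemma (G : SimpleGraph V) (col : V → ℕ) (k l : ℕ) (hk : 1 ≤ k) (r : V) (P Q : List V)
    (hP : IP G P) (hQ : IP G Q) (hPl : P.length = k + 1) (hQl : Q.length = l + 1)
    (hPr : P[k] = r) (hQr : Q[l] = r) (hPc : (P.map col).Nodup) (hQc : (Q.map col).Nodup)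
    (hPQ : ∀ p ∈ P, ∀ q ∈ Q, col p = col q → p = r) :
    ∃ (R : List V) (d : ℕ) (hR : R.length = d + 1), 1 ≤ d ∧ d ≤ k + l ∧ IP G R ∧ R[0] = P[0] ∧
      R[d] = Q[0] ∧ (R.map col).Nodup ∧ (∀ x ∈ R, x ∈ P ∨ x ∈ Q) := by
  have hex : ∃ i, ∃ h : i < P.length, ∃ q ∈ Q, G.Adj P[i] q := by
    refine ⟨k - 1, by omega, r, ?_, ?_⟩
    · rw [← hQr]; exact List.getElem_mem _
    · rw [← hPr]; rw [hP _ _ _ _ (by omega)]; omega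
  have hik : Nat.find hex ≤ k - 1 := Nat.find_min' hex (by
    refine ⟨by omega, r, ?_, ?_⟩
    · rw [← hQr]; exact List.getElem_mem _
    · rw [← hPr]; rw [hP _ _ _ _ (by omega)]; omega)
  set i := Nat.find hex with hi
  obtain ⟨hiP, hadj⟩ := Nat.find_spec hex
  have himin : ∀ a, (ha : a < P.length) → a < i → ∀ q ∈ Q, ¬ G.Adj P[a] q := by
    intro a ha hai q hq hadj
    exact Nat.find_min hex hai ⟨ha, q, hq, hadj⟩
  have hex2 : ∃ j, ∃ h : j < Q.length, G.Adj P[i] Q[j] := by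
    obtain ⟨q, hq, hadj⟩ := hadj
    obtain ⟨j, hj, rfl⟩ := List.mem_iff_getElem.mp hq
    exact ⟨j, hj, hadj⟩
  set j := Nat.find hex2 with hj
  obtain ⟨hjQ, hadj2⟩ := Nat.find_spec hex2
  have hjmin : ∀ b, (hb : b < Q.length) → b < j → ¬ G.Adj P[i] Q[b] := by
    intro b hb hbj hadj
    exact Nat.find_min hex2 hbj ⟨hb, hadj⟩
  have hPinj : ∀ a b (ha : a < P.length) (hb : b < P.length), P[a] = P[b] → a = b := by
    intro a b ha hb hab
    have h1 := List.Nodup.of_map _ hPc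
    exact (h1.getElem_inj_iff).mp hab
  refine ⟨P.take (i+1) ++ (Q.take (j+1)).reverse, i + j + 1, ?_, by omega, by omega, ?_, ?_, ?_, ?_, ?_⟩
  · simp; omega
  · apply (hP.take _).append (hQ.take _).reverse
    intro a b ha hb
    simp only [List.length_take, List.length_reverse] at ha hb
    simp only [List.getElem_take, List.getElem_reverse, List.length_take]
    rcases Nat.lt_or_ge a i with h1 | h1
    · have := himin a (by omega) h1 _ (List.getElem_mem (l := Q) (n := min (j + 1) Q.length - 1 - b) (by omega))
      simp only [this, false_iff]; omega
    · have h2 : a = i := by omega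
      subst h2
      rcases Nat.eq_zero_or_pos b with h3 | h3
      · subst h3
        have h4 : min (j + 1) Q.length - 1 - 0 = j := by omega
        simp only [h4]
        constructor
        · intro _; exact ⟨by omega, trivial⟩
        · intro _; exact hadj2
      · have := hjmin (min (j + 1) Q.length - 1 - b) (by omega) (by omega)
        simp only [this, false_iff]; omega
  · rw [List.getElem_append_left (by simp; omega)]
    simp
  · rw [List.getElem_append_right (by simp)]
    simp only [List.getElem_reverse, List.getElem_take, List.length_take]
    congr 1
    omega
  · rw [List.map_append, List.nodup_append]
    refine ⟨?_, ?_, ?_⟩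
    · rw [List.map_take]; exact hPc.take
    · rw [List.map_reverse, List.nodup_reverse, List.map_take]; exact hQc.take
    · intro a ha b hb hab
      rw [List.mem_map] at ha hb
      obtain ⟨p, hp, rfl⟩ := ha
      obtain ⟨q, hq, rfl⟩ := hb
      rw [List.mem_reverse] at hq
      have hp2 := List.mem_of_mem_take hp
      have hq2 := List.mem_of_mem_take hq
      have hpr := hPQ p hp2 q hq2 hab
      obtain ⟨a, ha, rfl⟩ := List.mem_iff_getElem.mp hp
      simp only [List.length_take] at ha
      simp only [List.getElem_take] at hpr
      rw [← hPr] at hpr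
      have := hPinj _ _ _ _ hpr
      omega
  · intro x hx
    rw [List.mem_append, List.mem_reverse] at hx
    exact hx.imp List.mem_of_mem_take List.mem_of_mem_take

/-- the cone lemma -/
lemma cone_lemma (G : SimpleGraph V) (col : V → ℕ) (I : Finset ℕ) (A : ℕ → Finset V)
    (hcol : Colored col I A) (hne : ∀ i ∈ I, (A i).Nonempty) (t th lam : ℝ) (hlam : lam ≤ th) (hth : 0 < th)
    (ht : 2 ≤ t) (hexp : Expd G I A t) (hlink : Link G I A lam) 
    (i0 : ℕ) (hi0 : i0 ∈ I) (r : V) (hr : r ∈ A i0) (m : ℕ) (hm : m + 1 ≤ I.card)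
    (htm : 4 * m ≤ t) (hthm : (2 * m + 1) * th ≤ 1/2) :
    ∃ (J : Finset ℕ) (i : ℕ) (X U : Finset V) (s : ℝ), J ⊆ I ∧ J.card = m + 1 ∧ i0 ∈ J ∧ i ∈ J ∧
      X ⊆ A i ∧ 0 < s ∧ s ≤ th ∧ s * (A i).card ≤ X.card ∧ 
      min ((t/2)^m / (A i0).card) th ≤ s ∧
      (∀ j ∈ I \ J, ((NS G U (A j)).card : ℝ) ≤ 2 * m * s * (A j).card) ∧
      ∀ x ∈ X, ∃ rest : List V, ∃ hl : rest.length = m, IP G (x :: rest) ∧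
        (x :: rest)[m]'(by simp [hl]) = r ∧ ((x :: rest).map col).Nodup ∧
        (∀ v ∈ x :: rest, col v ∈ J) ∧ ∀ v ∈ rest, v ∈ U := by
  have hA0 : (0:ℝ) < (A i0).card := by exact_mod_cast card_pos.mpr ⟨r, hr⟩
  induction m with
  | zero =>
    refine ⟨{i0}, i0, {r}, ∅, min (1 / (A i0).card) th, by simpa using hi0, by simp, by simp, by simp,
      by simpa using hr, by positivity, min_le_right _ _, ?_, by simp, ?_, ?_⟩
    · have : min (1 / ((A i0).card:ℝ)) th * (A i0).card ≤ 1 / ((A i0).card:ℝ) * (A i0).card := by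
        gcongr; exact min_le_left _ _
      simpa [hA0.ne'] using this
    · intro j hj; simp [NS_empty]
    · intro x hx
      rw [mem_singleton] at hx
      subst hx
      refine ⟨[], rfl, ?_, rfl, by simp, by simpa using hcol i0 hi0 x hr, by simp⟩
      intro i j hi hj hij
      simp at hi hj; omega
  | succ m ih =>
    push_cast at htm hthm
    obtain ⟨J, i, X, U, s, hJI, hJc, hi0J, hiJ, hXA, hs0, hsth, hXc, hsmin, hU, hpath⟩ :=
      ih (by omega) (by linarith) (by nlinarith)
    set IJ := I \ J with hIJ
    have hIJne : IJ.Nonempty := by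
      rw [← card_pos, hIJ, card_sdiff_of_subset hJI]; omega
    have hApos : ∀ j ∈ I, (0:ℝ) < (A j).card := fun j hj => by exact_mod_cast card_pos.mpr (hne j hj)
    have hAi := hApos i (hJI hiJ)
    have hij : ∀ j ∈ IJ, i ≠ j := fun j hj h => (mem_sdiff.mp hj).2 (h ▸ hiJ)
    have hIJI : ∀ j ∈ IJ, j ∈ I := fun j hj => (mem_sdiff.mp hj).1
    set cov : Finset V → ℕ → Finset V := fun Y j => NS G Y (A j) \ NS G U (A j) with hcov
    set g : ℝ := min (t * s / 2) th with hg
    have hg0 : 0 < g := by positivity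
    have hgs : s ≤ g := le_min (by nlinarith) hsth
    have hgth : g ≤ th := min_le_right _ _
    have hm0 : (0:ℝ) ≤ m := by positivity
    -- the full set has large cover
    have hXcov : ∀ j ∈ IJ, g * (A j).card ≤ (cov X j).card := by
      intro j hj
      have h1 := hexp i (hJI hiJ) j (hIJI j hj) (hij j hj) X hXA
      have h2 := hU j hj
      have h3 : ((NS G X (A j)).card : ℝ) ≤ (cov X j).card + (NS G U (A j)).card := by
        exact_mod_cast card_le_card_sdiff_add_card
      have h4 : g + 2 * m * s ≤ min (t * X.card / (A i).card) (1/2) := by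
        apply le_min
        · have h5 : t * s ≤ t * X.card / (A i).card := by
            rw [le_div_iff₀ hAi, mul_assoc]; gcongr
          have h6 : g ≤ t * s / 2 := min_le_left _ _
          nlinarith
        · nlinarith
      have h7 : (g + 2 * m * s) * (A j).card ≤ (NS G X (A j)).card := le_trans (by gcongr) h1
      nlinarith
    -- minimal Y
    have hexY : ∃ k, ∃ Y ⊆ X, Y.card = k ∧ ∃ j ∈ IJ, g * (A j).card ≤ (cov Y j).card := by
      obtain ⟨j, hj⟩ := hIJne
      exact ⟨X.card, X, Subset.refl _, rfl, j, hj, hXcov j hj⟩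
    obtain ⟨Y, hYX, hYk, j1, hj1, hYj1⟩ := Nat.find_spec hexY
    have hYmin : ∀ Y' ⊆ X, Y'.card < Y.card → ∀ j ∈ IJ, ((cov Y' j).card : ℝ) < g * (A j).card := by
      intro Y' hY' hlt j hj
      by_contra hc
      push Not at hc
      exact Nat.find_min hexY (hYk ▸ hlt) ⟨Y', hY', rfl, j, hj, hc⟩
    have hYne : Y.Nonempty := by
      by_contra hc
      rw [not_nonempty_iff_eq_empty] at hc
      rw [hc] at hYj1
      simp only [hcov, NS_empty, empty_sdiff, card_empty, Nat.cast_zero] at hYj1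
      have := hApos j1 (hIJI j1 hj1)
      have : 0 < g * (A j1).card := by positivity
      linarith
    obtain ⟨y0, hy0⟩ := hYne
    have hYup : ∀ j ∈ IJ, ((cov Y j).card : ℝ) ≤ (g + lam) * (A j).card := by
      intro j hj
      have h1 := hYmin (Y.erase y0) ((erase_subset _ _).trans hYX) (card_erase_lt_of_mem hy0) j hj
      have h2 : cov Y j ⊆ cov (Y.erase y0) j ∪ nb G y0 (A j) := by
        intro v hv
        simp only [hcov, mem_sdiff, mem_NS, mem_union, mem_nb] at hv ⊢
        obtain ⟨⟨hv1, x, hx, hxv⟩, hv2⟩ := hv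
        by_cases hxy : x = y0
        · right; exact ⟨hv1, hxy ▸ hxv⟩
        · left; exact ⟨⟨hv1, x, mem_erase.mpr ⟨hxy, hx⟩, hxv⟩, hv2⟩
      have h3 : ((cov Y j).card : ℝ) ≤ (cov (Y.erase y0) j).card + (nb G y0 (A j)).card := by
        exact_mod_cast (card_le_card h2).trans (card_union_le _ _)
      have h4 := hlink i (hJI hiJ) j (hIJI j hj) (hij j hj) y0 (hXA (hYX hy0))
      linarith
    obtain ⟨j', hj', hmax⟩ := exists_max_image IJ (fun j => ((cov Y j).card : ℝ) / (A j).card) ⟨j1, hj1⟩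
    have hAj' := hApos j' (hIJI j' hj')
    set f : ℝ := ((cov Y j').card : ℝ) / (A j').card with hf
    have hgf : g ≤ f := by
      refine le_trans ?_ (hmax j1 hj1)
      rw [le_div_iff₀ (hApos j1 (hIJI j1 hj1))]; exact hYj1
    have hfup : f ≤ g + lam := by
      rw [hf, div_le_iff₀ hAj']; exact hYup j' hj'
    have hfj : ∀ j ∈ IJ, ((cov Y j).card : ℝ) ≤ f * (A j).card := by
      intro j hj
      have := hmax j hj
      rwa [div_le_iff₀ (hApos j (hIJI j hj))] at this
    set s' : ℝ := min f th with hs'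
    have hgs' : g ≤ s' := le_min hgf hgth
    have hfs' : f ≤ 2 * s' := by
      rcases le_total f th with h1 | h1
      · rw [hs', min_eq_left h1]; linarith
      · rw [hs', min_eq_right h1]; linarith
    have hs'0 : 0 < s' := by linarith
    have hj'J : j' ∉ J := (mem_sdiff.mp hj').2
    refine ⟨insert j' J, j', cov Y j', U ∪ Y, s', ?_, ?_, mem_insert_of_mem hi0J, mem_insert_self _ _,
      ?_, hs'0, min_le_right _ _, ?_, ?_, ?_, ?_⟩
    · exact insert_subset (hIJI j' hj') hJI
    · rw [card_insert_of_notMem hj'J, hJc]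
    · exact sdiff_subset.trans (NS_subset _ _ _)
    · have : s' * (A j').card ≤ f * (A j').card := by gcongr; exact min_le_left _ _
      rw [hf, div_mul_cancel₀ _ hAj'.ne'] at this
      exact this
    · refine le_trans ?_ hgs'
      apply le_min
      · rcases le_total ((t/2)^m / (A i0).card) th with h1 | h1
        · rw [min_eq_left h1] at hsmin
          refine (min_le_left _ _).trans ?_
          rw [pow_succ]
          calc (t/2)^m * (t/2) / (A i0).card = (t/2)^m / (A i0).card * (t/2) := by ring
            _ ≤ s * (t/2) := by gcongr
            _ = _ := by ring
        · rw [min_eq_right h1] at hsmin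
          refine (min_le_right _ _).trans ?_
          nlinarith
      · exact min_le_right _ _
    · intro j hj
      have hj2 : j ∈ IJ := by
        rw [mem_sdiff, mem_insert] at hj
        rw [hIJ, mem_sdiff]; tauto
      have h1 := hU j hj2
      have h2 := hfj j hj2
      have h3 : NS G (U ∪ Y) (A j) ⊆ NS G U (A j) ∪ cov Y j := by
        intro v hv
        rw [NS_union] at hv
        simp only [hcov, mem_union, mem_sdiff] at hv ⊢
        tauto
      have h4 : ((NS G (U ∪ Y) (A j)).card : ℝ) ≤ (NS G U (A j)).card + (cov Y j).card := by
        exact_mod_cast (card_le_card h3).trans (card_union_le _ _)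
      have hAj := hApos j (hIJI j hj2)
      push_cast
      have h5 : s ≤ s' := hgs.trans hgs'
      have h6 : 2 * m * s * (A j).card ≤ 2 * m * s' * (A j).card := by gcongr
      have h7 : f * (A j).card ≤ 2 * s' * (A j).card := by gcongr
      linarith
    · intro x hx
      simp only [hcov, mem_sdiff, mem_NS] at hx
      obtain ⟨⟨hxA, y, hy, hyx⟩, hxU⟩ := hx
      obtain ⟨rest, hl, hIP, hlast, hnd, hcJ, hrU⟩ := hpath y (hYX hy)
      have hxcol : col x = j' := hcol j' (hIJI j' hj') x hxA
      refine ⟨y :: rest, by simp [hl], ?_, ?_, ?_, ?_, ?_⟩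
      · apply hIP.cons
        intro j hj
        cases j with
        | zero => simpa using hyx.symm
        | succ j =>
          simp only [List.getElem_cons_succ, Nat.add_eq_zero_iff, one_ne_zero, and_false, iff_false]
          intro hadj
          exact hxU ⟨hxA, _, hrU _ (List.getElem_mem _), hadj.symm⟩
      · simpa using hlast
      · rw [List.map_cons, List.nodup_cons]
        refine ⟨?_, hnd⟩
        intro hmem
        rw [List.mem_map] at hmem
        obtain ⟨v, hv, hvx⟩ := hmem
        have := hcJ v hv
        rw [hvx, hxcol] at this
        exact hj'J this
      · intro v hv
        rw [List.mem_cons] at hv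
        rcases hv with rfl | hv
        · rw [hxcol]; exact mem_insert_self _ _
        · exact mem_insert_of_mem (hcJ v hv)
      · intro v hv
        rw [List.mem_cons] at hv
        rcases hv with rfl | hv
        · exact mem_union_right _ hy
        · exact mem_union_left _ (hrU v hv)

lemma cone_cor (G : SimpleGraph V) (col : V → ℕ) (I : Finset ℕ) (A : ℕ → Finset V)
    (hcol : Colored col I A) (hne : ∀ i ∈ I, (A i).Nonempty) (t th lam : ℝ) (hlam : lam ≤ th)
    (hth : 0 < th) (ht : 2 ≤ t) (hexp : Expd G I A t) (hlink : Link G I A lam) 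
    (i0 : ℕ) (hi0 : i0 ∈ I) (r : V) (hr : r ∈ A i0) (m : ℕ) (hm : m + 1 ≤ I.card)
    (htm : 4 * m ≤ t) (hthm : (2 * m + 1) * th ≤ 1/2) (hbig : (A i0).card ≤ (t/2)^m) :
    ∃ (J : Finset ℕ) (i : ℕ) (X U : Finset V), J ⊆ I ∧ J.card = m + 1 ∧ i0 ∈ J ∧ i ∈ J ∧
      X ⊆ A i ∧ th * (A i).card ≤ X.card ∧ 
      (∀ j ∈ I \ J, ((NS G U (A j)).card : ℝ) ≤ 2 * m * th * (A j).card) ∧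
      ∀ x ∈ X, ∃ rest : List V, ∃ hl : rest.length = m, IP G (x :: rest) ∧
        (x :: rest)[m]'(by simp [hl]) = r ∧ ((x :: rest).map col).Nodup ∧
        (∀ v ∈ x :: rest, col v ∈ J) ∧ ∀ v ∈ rest, v ∈ U := by
  obtain ⟨J, i, X, U, s, h1, h2, h3, h4, h5, h6, h7, h8, h9, h10, h11⟩ :=
    cone_lemma G col I A hcol hne t th lam hlam hth ht hexp hlink i0 hi0 r hr m hm htm hthm
  have hA0 : (0:ℝ) < (A i0).card := by exact_mod_cast card_pos.mpr ⟨r, hr⟩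
  have hth1 : th ≤ 1 := by nlinarith [(by positivity : (0:ℝ) ≤ m)]
  have hs : s = th := by
    apply le_antisymm h7
    refine le_trans (le_min ?_ le_rfl) h9
    refine hth1.trans ?_
    rw [le_div_iff₀ hA0]; linarith
  subst hs
  exact ⟨J, i, X, U, h1, h2, h3, h4, h5, h8, h10, h11⟩

end Paths

set_option linter.unusedSectionVars false
set_option linter.unusedVariables false
section Rand
open Classical Finset

variable {V : Type} [Fintype V]

/-- indicator that both `x` and `y` belong to the random set -/
def two (x y : V) : Finset V → ℝ := fun Y => if x ∈ Y ∧ y ∈ Y then 1 else 0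

lemma two_eq (x y : V) (Y : Finset V) :
    two x y Y = (if x ∈ Y then 1 else 0) * (if y ∈ Y then 1 else 0) := by
  unfold two; split_ifs <;> simp_all

lemma exists_rand (M : ℕ) (hM : 1 ≤ M) : ∃ E : (Finset V → ℝ) →ₗ[ℝ] ℝ,
    (∀ f g : Finset V → ℝ, (∀ Y, f Y ≤ g Y) → E f ≤ E g) ∧
    (∀ r : ℝ, E (fun _ => r) = r) ∧ 
    (∀ x y : V, E (two x y) = if x = y then 1 / (M:ℝ) else (1 / (M:ℝ))^2) := by
  obtain ⟨M, rfl⟩ : ∃ M', M = M' + 1 := ⟨M - 1, by omega⟩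
  set w : ℝ := 1 / ((M + 1 : ℕ) : ℝ) ^ (Fintype.card V) with hw
  set Yf : (V → Fin (M+1)) → Finset V := fun φ => univ.filter (fun v => φ v = 0) with hYf
  have hM0 : (0:ℝ) < ((M + 1 : ℕ) : ℝ) := by positivity
  refine ⟨{ toFun := fun f => ∑ φ : V → Fin (M+1), w * f (Yf φ), map_add' := ?_, map_smul' := ?_ },
    ?_, ?_, ?_⟩
  · intro f g
    simp only [Pi.add_apply, mul_add, sum_add_distrib]
  · intro r f
    simp only [Pi.smul_apply, smul_eq_mul, RingHom.id_apply, mul_sum]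
    refine sum_congr rfl fun φ _ => by ring
  · intro f g h
    exact sum_le_sum fun φ _ => mul_le_mul_of_nonneg_left (h _) (by positivity)
  · intro r
    simp only [LinearMap.coe_mk, AddHom.coe_mk, sum_const, card_univ, nsmul_eq_mul, Fintype.card_fun,
      Fintype.card_fin]
    rw [hw]; push_cast; field_simp
  · intro x y
    simp only [LinearMap.coe_mk, AddHom.coe_mk]
    have hcount : ∀ S : Finset V, ((univ.filter (fun φ : V → Fin (M+1) => ∀ v ∈ S, φ v = 0)).card : ℝ) * w
        = (1 / ((M + 1 : ℕ) : ℝ)) ^ S.card := by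
      intro S
      have h1 : univ.filter (fun φ : V → Fin (M+1) => ∀ v ∈ S, φ v = 0) =
          Fintype.piFinset (fun v => if v ∈ S then {0} else univ) := by
        ext φ
        simp only [mem_filter, mem_univ, true_and, Fintype.mem_piFinset]
        refine forall_congr' fun v => ?_
        by_cases hv : v ∈ S <;> simp [hv]
      rw [h1, Fintype.card_piFinset]
      have h2 : ∏ v : V, (if v ∈ S then ({0} : Finset (Fin (M+1))) else univ).card =
          (M+1) ^ (Fintype.card V - S.card) := by
        have : ∀ v : V, (if v ∈ S then ({0} : Finset (Fin (M+1))) else univ).card =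
            if v ∈ S then 1 else M + 1 := by
          intro v; split_ifs <;> simp
        simp only [this]
        rw [prod_ite]
        simp only [prod_const, one_pow, one_mul]
        congr 1
        rw [← card_compl]
        congr 1
        ext v; simp
      rw [h2, hw]
      have h3 : S.card ≤ Fintype.card V := card_le_univ S
      push_cast
      rw [pow_sub₀ _ (by positivity) h3]
      have : (0:ℝ) < (M:ℝ) + 1 := by positivity
      rw [one_div_pow]
      field_simp
    have h4 : ∑ φ : V → Fin (M+1), w * two x y (Yf φ) =
        ((univ.filter (fun φ : V → Fin (M+1) => ∀ v ∈ ({x, y} : Finset V), φ v = 0)).card : ℝ) * w := by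
      rw [card_filter, Nat.cast_sum, sum_mul]
      refine sum_congr rfl fun φ _ => ?_
      simp only [two, hYf, mem_filter, mem_univ, true_and, mem_insert, mem_singleton, forall_eq_or_imp,
        forall_eq]
      split_ifs <;> simp
    rw [h4, hcount]
    split_ifs with hxy
    · subst hxy; simp
    · rw [card_pair hxy]

lemma E_exists (E : (Finset V → ℝ) →ₗ[ℝ] ℝ) (h1 : ∀ f g : Finset V → ℝ, (∀ Y, f Y ≤ g Y) → E f ≤ E g)
    (h2 : ∀ r : ℝ, E (fun _ => r) = r) (f : Finset V → ℝ) : ∃ Y, E f ≤ f Y := by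
  obtain ⟨Y, -, hY⟩ := exists_max_image (univ : Finset (Finset V)) f ⟨∅, mem_univ _⟩
  refine ⟨Y, ?_⟩
  calc E f ≤ E (fun _ => f Y) := h1 _ _ fun Z => hY Z (mem_univ _)
    _ = f Y := h2 _

/-- vertices of `B` with no neighbour in `Y` -/
def surv (G : SimpleGraph V) (Y B : Finset V) : Finset V := B \ NS G Y B

set_option maxHeartbeats 2000000 in
lemma core_step (G : SimpleGraph V) (X : Finset V) (I : Finset ℕ) (B : ℕ → Finset V)
    (N : V → Finset V) (R : V → V → Prop) (d D M K : ℕ) (z mu : ℝ) (hz : 0 ≤ z) (hmu : 0 < mu)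
    (hd : 1 ≤ d) (hK : I.card ≤ K) (hK1 : 1 ≤ K)
    (hN : ∀ b ∈ I, ∀ c ∈ B b, N c ⊆ nb G c X ∧ (N c).card = d ∧ (nb G c X).card ≤ D)
    (hR : ∀ b ∈ I, ∀ c ∈ B b, ∀ b' ∈ I, ∀ c' ∈ B b', ¬ R c c' → ((N c ∩ nb G c' X).card : ℝ) ≤ z * d)
    (hRd : ∀ b ∈ I, ∀ b' ∈ I, b ≠ b' →
      (((B b ×ˢ B b').filter (fun q => R q.1 q.2)).card : ℝ) ≤ mu * (B b).card * (B b').card)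
    (hne : ∀ b ∈ I, (B b).Nonempty)
    (hMD : 48 * K * D ≤ M) (hzK : 48 * K * z ≤ 1) (hmuK : 48 * K * mu ≤ 1) (hD : 1 ≤ D)
    (a : ℕ) (ha : a ∈ I) :
    ∃ Y ⊆ X, ∃ C ⊆ B a, (∀ c ∈ C, ∃ y ∈ Y, G.Adj y c) ∧
      ((d:ℝ) / (4 * M)) * (B a).card ≤ C.card ∧
      (∀ b ∈ I, b ≠ a → ((B b).card : ℝ) ≤ 2 * (surv G Y (B b)).card) ∧
      (∀ b ∈ I, b ≠ a → (((C ×ˢ surv G Y (B b)).filter (fun q => R q.1 q.2)).card : ℝ) ≤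
        16 * K * mu * C.card * (surv G Y (B b)).card) := by
  have hM1 : 1 ≤ M := by nlinarith
  obtain ⟨E, hE1, hE2, hE3⟩ := exists_rand (V := V) M hM1
  set p : ℝ := 1 / (M:ℝ) with hp
  have hM0 : (0:ℝ) < M := by exact_mod_cast hM1
  have hp0 : 0 < p := by positivity
  have hK0 : (0:ℝ) < K := by exact_mod_cast hK1
  have hpD : 48 * K * (p * D) ≤ 1 := by
    have : (48 * K * D : ℝ) ≤ M := by exact_mod_cast hMD
    rw [hp]
    calc 48 * K * (1 / (M:ℝ) * D) = (48 * K * D) / M := by ring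
      _ ≤ 1 := by rw [div_le_one hM0]; exact this
  have hdpos : (0:ℝ) < d := by exact_mod_cast hd
  set beta : ℝ := 1 / (8 * K * mu) with hbeta
  have hbeta0 : 0 < beta := by positivity
  -- functions
  set S1 : V → Finset V → ℝ := fun c => ∑ x ∈ N c, two x x with hS1
  set S2 : V → Finset V → ℝ := fun c => ∑ x ∈ N c, ∑ x' ∈ (N c).erase x, two x x' with hS2
  set LL : V → V → Finset V → ℝ := fun c c' => ∑ x ∈ N c, ∑ x' ∈ nb G c' X, two x x' with hLL
  set r1 : V → V → ℝ := fun c c' => if R c c' then 1 else 0 with hr1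
  set F : Finset V → ℝ := ∑ c ∈ B a, (S1 c - S2 c - ∑ b ∈ I.erase a, (1 / ((B b).card : ℝ)) •
    ∑ c' ∈ B b, ((2:ℝ) • LL c c' + (beta * r1 c c') • S1 c)) with hF
  have hBpos : ∀ b ∈ I, (0:ℝ) < (B b).card := fun b hb => by exact_mod_cast card_pos.mpr (hne b hb)
  -- expectations
  have hES1 : ∀ c ∈ B a, E (S1 c) = p * d := by
    intro c hc
    simp only [hS1, map_sum, hE3, if_true, sum_const, nsmul_eq_mul, (hN a ha c hc).2.1]
    ring
  have hES2 : ∀ c ∈ B a, E (S2 c) ≤ p * d * (p * D) := by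
    intro c hc
    have hNc := hN a ha c hc
    have hdD : (d:ℝ) ≤ D := by
      have := card_le_card hNc.1
      exact_mod_cast (by omega : d ≤ D)
    simp only [hS2, map_sum]
    calc ∑ x ∈ N c, ∑ x' ∈ (N c).erase x, E (two x x') = ∑ x ∈ N c, ∑ x' ∈ (N c).erase x, p^2 := by
          refine sum_congr rfl fun x hx => sum_congr rfl fun x' hx' => ?_
          rw [hE3, if_neg (fun h => (mem_erase.mp hx').1 h.symm)]
      _ ≤ ∑ x ∈ N c, (d * p^2) := by
          refine sum_le_sum fun x hx => ?_
          rw [sum_const, nsmul_eq_mul]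
          gcongr
          exact (card_le_card (erase_subset _ _)).trans hNc.2.1.le
      _ = d * (d * p^2) := by rw [sum_const, nsmul_eq_mul, hNc.2.1]
      _ ≤ d * (D * p^2) := by gcongr
      _ = _ := by ring
  have hELL : ∀ c ∈ B a, ∀ b ∈ I, ∀ c' ∈ B b, E (LL c c') ≤ p * d * (z + r1 c c' + p * D) := by
    intro c hc b hb c' hc'
    have hNc := hN a ha c hc
    have hNc' := hN b hb c' hc'
    simp only [hLL, map_sum]
    have h1 : ∀ x ∈ N c, ∑ x' ∈ nb G c' X, E (two x x') ≤
        (if x ∈ nb G c' X then p else 0) + D * p^2 := by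
      intro x hx
      calc ∑ x' ∈ nb G c' X, E (two x x') ≤ ∑ x' ∈ nb G c' X, ((if x = x' then p else 0) + p^2) := by
            refine sum_le_sum fun x' _ => ?_
            rw [hE3]
            split_ifs
            · linarith [sq_nonneg p]
            · linarith
        _ = (if x ∈ nb G c' X then p else 0) + (nb G c' X).card * p^2 := by
            rw [sum_add_distrib, sum_ite_eq, sum_const, nsmul_eq_mul]
        _ ≤ _ := by
            have : ((nb G c' X).card : ℝ) ≤ D := by exact_mod_cast hNc'.2.2
            gcongr
    have h2 : ((N c ∩ nb G c' X).card : ℝ) ≤ d * (z + r1 c c') := by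
      by_cases hRR : R c c'
      · have : ((N c ∩ nb G c' X).card : ℝ) ≤ d := by
          have := card_le_card (inter_subset_left (s₁ := N c) (s₂ := nb G c' X))
          rw [hNc.2.1] at this
          exact_mod_cast this
        simp only [hr1, if_pos hRR]
        nlinarith
      · have := hR a ha c hc b hb c' hc' hRR
        simp only [hr1, if_neg hRR]
        linarith
    calc _ ≤ ∑ x ∈ N c, ((if x ∈ nb G c' X then p else 0) + D * p^2) := sum_le_sum h1
      _ = (N c ∩ nb G c' X).card * p + d * (D * p^2) := by
          rw [sum_add_distrib, sum_const, nsmul_eq_mul, hNc.2.1, ← sum_filter, sum_const, nsmul_eq_mul,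
            filter_mem_eq_inter]
      _ ≤ d * (z + r1 c c') * p + d * (D * p^2) := by gcongr
      _ = _ := by ring
  have hEF : p * d * (B a).card / 4 ≤ E F := by
    simp only [hF, map_sum, map_sub, map_smul, map_add, smul_eq_mul]
    have h1 : ∀ c ∈ B a, p * d * (1 - p * D - ∑ b ∈ I.erase a, (1 / ((B b).card : ℝ)) *
        ∑ c' ∈ B b, (2 * (z + p * D) + (2 + beta) * r1 c c')) ≤
        E (S1 c) - E (S2 c) - ∑ b ∈ I.erase a, (1 / ((B b).card : ℝ)) *
          ∑ c' ∈ B b, (2 * E (LL c c') + (beta * r1 c c') * E (S1 c)) := by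
      intro c hc
      rw [hES1 c hc, mul_sub, mul_sub, mul_one, mul_sum]
      have h2 := hES2 c hc
      apply sub_le_sub (by linarith)
      apply sum_le_sum
      intro b hb
      have hbI := (mem_erase.mp hb).2
      have := hBpos b hbI
      rw [mul_left_comm]
      gcongr
      rw [mul_sum]
      apply sum_le_sum
      intro c' hc'
      have := hELL c hc b hbI c' hc'
      nlinarith
    refine le_trans ?_ (sum_le_sum h1)
    rw [← mul_sum]
    have h3 : ((B a).card : ℝ) / 4 ≤ ∑ c ∈ B a, (1 - p * D - ∑ b ∈ I.erase a, (1 / ((B b).card : ℝ)) *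
        ∑ c' ∈ B b, (2 * (z + p * D) + (2 + beta) * r1 c c')) := by
      rw [sum_sub_distrib, sum_const, nsmul_eq_mul, sum_comm]
      have h4 : ∀ b ∈ I.erase a, ∑ c ∈ B a, (1 / ((B b).card : ℝ)) *
        ∑ c' ∈ B b, (2 * (z + p * D) + (2 + beta) * r1 c c') ≤
          (2 * (z + p * D) + (2 + beta) * mu) * (B a).card := by
        intro b hb
        have hb' := mem_erase.mp hb
        have hb0 := hBpos b hb'.2
        rw [← mul_sum]
        simp only [sum_add_distrib, sum_const, nsmul_eq_mul, ← mul_sum]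
        have h5 : ∑ c ∈ B a, ∑ c' ∈ B b, r1 c c' ≤ mu * (B a).card * (B b).card := by
          refine le_trans (le_of_eq ?_) (hRd a ha b hb'.2 hb'.1.symm)
          rw [card_filter, Nat.cast_sum, sum_product]
          refine sum_congr rfl fun c _ => sum_congr rfl fun c' _ => ?_
          simp only [hr1]; split_ifs <;> simp
        rw [one_div, inv_mul_le_iff₀ hb0]
        have : (2 + beta) * ∑ c ∈ B a, ∑ c' ∈ B b, r1 c c' ≤
          (2 + beta) * (mu * (B a).card * (B b).card) := by gcongr
        linarith
      have h6 := sum_le_sum h4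
      rw [sum_const, nsmul_eq_mul] at h6
      have h7 : ((I.erase a).card : ℝ) ≤ K := by
        exact_mod_cast (card_le_card (erase_subset _ _)).trans hK
      have h8 : beta * mu * K = 1/8 := by rw [hbeta]; field_simp
      have hBa := hBpos a ha
      have hD0 : (0:ℝ) < D := by exact_mod_cast hD
      have h9 : ((I.erase a).card : ℝ) * ((2 * (z + p * D) + (2 + beta) * mu) * (B a).card) ≤
         K * ((2 * (z + p * D) + (2 + beta) * mu) * (B a).card) := by gcongr
      have h10 : K * (2 * (z + p * D) + (2 + beta) * mu) ≤ 1/2 := by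
        have : K * (2 * (z + p * D) + (2 + beta) * mu) =
          2 * (K * z) + 2 * (K * (p * D)) + 2 * (K * mu) + beta * mu * K := by ring
        rw [this, h8]; linarith
      have h11 : p * D ≤ 1/48 := by
        have : (1:ℝ) ≤ K := by exact_mod_cast hK1
        have : p * D ≤ K * (p * D) := by
          have : 0 < p * D := by positivity
          nlinarith
        linarith
      nlinarith
    calc p * d * (B a).card / 4 = p * d * ((B a).card / 4) := by ring
      _ ≤ _ := by gcongr
  obtain ⟨Y0, hY0⟩ := E_exists E hE1 hE2 F
  set Y := Y0 ∩ X with hY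
  set C := (B a).filter (fun c => ∃ x ∈ N c, x ∈ Y0) with hC
  have hCB : C ⊆ B a := filter_subset _ _
  -- pointwise bound
  have hpt : F Y0 ≤ ∑ c ∈ C, (1 - ∑ b ∈ I.erase a, (1 / ((B b).card : ℝ)) *
      (2 * (NS G Y (B b)).card + beta * ∑ c' ∈ B b, r1 c c')) := by
    rw [hC, sum_filter, hF]
    simp only [Finset.sum_apply, Pi.sub_apply, Pi.smul_apply, Pi.add_apply, smul_eq_mul]
    apply sum_le_sum
    intro c hc
    have hNc := hN a ha c hc
    set k := ((N c).filter (fun x => x ∈ Y0)).card with hk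
    have hS1k : S1 c Y0 = k := by
      simp only [hS1, Finset.sum_apply, two, and_self]
      rw [hk, card_filter]; push_cast; rfl
    have hsumk : ∑ x ∈ N c, (if x ∈ Y0 then (1:ℝ) else 0) = k := by
      rw [hk, card_filter]; push_cast; rfl
    have hS2k : S2 c Y0 = k * k - k := by
      simp only [hS2, Finset.sum_apply]
      have : ∀ x ∈ N c, ∑ x' ∈ (N c).erase x, two x x' Y0 = (if x ∈ Y0 then 1 else 0) * k -
          (if x ∈ Y0 then 1 else 0) := by
        intro x hx
        have h1 := add_sum_erase (N c) (fun x' => two x x' Y0) hx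
        have h2 : ∑ x' ∈ N c, two x x' Y0 = (if x ∈ Y0 then 1 else 0) * k := by
          simp only [two_eq]
          rw [← mul_sum, hsumk]
        have h3 : two x x Y0 = if x ∈ Y0 then 1 else 0 := by simp [two]
        simp only [h3, h2] at h1
        linarith
      rw [sum_congr rfl this, sum_sub_distrib, ← sum_mul, hsumk]
    have hLLk : ∀ c', LL c c' Y0 = k * (nb G c' Y).card := by
      intro c'
      simp only [hLL, Finset.sum_apply, two_eq]
      simp only [← mul_sum]
      rw [← sum_mul, hsumk]
      congr 1
      have : nb G c' Y = (nb G c' X).filter (fun x => x ∈ Y0) := by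
        ext x; simp only [hY, mem_nb, mem_inter, mem_filter]; tauto
      rw [this, card_filter]; push_cast; rfl
    by_cases hex : ∃ x ∈ N c, x ∈ Y0
    · rw [if_pos hex]
      have hk1 : 1 ≤ k := by
        rw [hk]; apply card_pos.mpr
        obtain ⟨x, hx, hx'⟩ := hex
        exact ⟨x, mem_filter.mpr ⟨hx, hx'⟩⟩
      have hk1' : (1:ℝ) ≤ k := by exact_mod_cast hk1
      apply sub_le_sub
      · rw [hS1k, hS2k]; nlinarith
      · apply sum_le_sum
        intro b hb
        have hb' := mem_erase.mp hb
        have hb0 := hBpos b hb'.2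
        gcongr
        rw [sum_add_distrib]
        apply add_le_add
        · rw [← mul_sum]
          gcongr
          have : ((NS G Y (B b)).card : ℝ) = ∑ c' ∈ B b, if (∃ y ∈ Y, G.Adj y c') then 1 else 0 := by
            rw [NS, card_filter]; push_cast; rfl
          rw [this]
          apply sum_le_sum
          intro c' hc'
          rw [hLLk]
          split_ifs with h5
          · obtain ⟨y, hy, hyc⟩ := h5
            have : (1:ℝ) ≤ (nb G c' Y).card := by
              exact_mod_cast card_pos.mpr ⟨y, mem_nb.mpr ⟨hy, hyc.symm⟩⟩
            nlinarith
          · positivity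
        · rw [mul_sum]
          apply sum_le_sum
          intro c' hc'
          rw [hS1k]
          have : 0 ≤ beta * r1 c c' := by
            simp only [hr1]; positivity
          nlinarith
    · rw [if_neg hex]
      have hk0 : k = 0 := by
        rw [hk, card_eq_zero, filter_eq_empty_iff]
        push Not at hex; exact fun {x} hx => hex x hx
      rw [hS1k, hS2k, hk0]
      have : ∀ b ∈ I.erase a, (0:ℝ) ≤ (1 / ((B b).card : ℝ)) * ∑ c' ∈ B b, (2 * LL c c' Y0 + beta * r1 c c' * ((0:ℕ):ℝ)) := by
        intro b hb
        apply mul_nonneg (by positivity)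
        apply sum_nonneg
        intro c' _
        rw [hLLk]; simp
        positivity
      have := sum_nonneg this
      simp only [Nat.cast_zero] at this ⊢
      linarith
  have hCpos : p * d * (B a).card / 4 ≤ ∑ c ∈ C, (1 - ∑ b ∈ I.erase a, (1 / ((B b).card : ℝ)) *
      (2 * (NS G Y (B b)).card + beta * ∑ c' ∈ B b, r1 c c')) := (hEF.trans hY0).trans hpt
  have hr1n : ∀ c c', 0 ≤ r1 c c' := fun c c' => by simp only [hr1]; positivity
  rw [sum_sub_distrib, sum_const, nsmul_eq_mul, mul_one, sum_comm] at hCpos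
  set T : ℕ → ℝ := fun b => ∑ c ∈ C, (1 / ((B b).card : ℝ)) *
      (2 * (NS G Y (B b)).card + beta * ∑ c' ∈ B b, r1 c c') with hT
  have hTn : ∀ b, 0 ≤ T b := fun b => sum_nonneg fun c _ => by
    have := sum_nonneg (s := B b) fun c' (_ : c' ∈ B b) => hr1n c c'
    positivity
  have hBa := hBpos a ha
  have hC0 : (0:ℝ) < C.card := by
    have h1 : 0 ≤ ∑ b ∈ I.erase a, T b := sum_nonneg fun b _ => hTn b
    have h2 : 0 < p * d * (B a).card / 4 := by positivity
    simp only [hT] at h1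
    linarith
  have hTC : ∀ b ∈ I.erase a, T b ≤ C.card := by
    intro b hb
    have h1 : T b ≤ ∑ b ∈ I.erase a, T b := single_le_sum (fun b _ => hTn b) hb
    have h2 : 0 < p * d * (B a).card / 4 := by positivity
    simp only [hT] at h1 ⊢
    linarith
  have hTeq : ∀ b, T b * (B b).card = (if (B b).card = 0 then 0 else 2 * (NS G Y (B b)).card * C.card + beta *
      ∑ c ∈ C, ∑ c' ∈ B b, r1 c c') := by
    intro b
    split_ifs with h0
    · rw [h0]; simp
    · have : ((B b).card : ℝ) ≠ 0 := by exact_mod_cast h0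
      simp only [hT]
      rw [← mul_sum, sum_add_distrib, sum_const, nsmul_eq_mul, ← mul_sum]
      field_simp
  have hlost : ∀ b ∈ I, b ≠ a → ((B b).card : ℝ) ≤ 2 * (surv G Y (B b)).card := by
    intro b hb hba
    have hb0 := hBpos b hb
    have hb0' : (B b).card ≠ 0 := by
      intro h; rw [h] at hb0; simp at hb0
    have h1 := hTC b (mem_erase.mpr ⟨hba, hb⟩)
    have h2 := hTeq b
    rw [if_neg hb0'] at h2
    have h3 : 0 ≤ ∑ c ∈ C, ∑ c' ∈ B b, r1 c c' := sum_nonneg fun c _ => sum_nonneg fun c' _ => hr1n c c'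
    have h4 : T b * (B b).card ≤ C.card * (B b).card := by gcongr
    have h5 : C.card * (2 * (NS G Y (B b)).card : ℝ) ≤ C.card * (B b).card := by
      have := mul_nonneg hbeta0.le h3
      linarith
    have h6 := le_of_mul_le_mul_left h5 hC0
    have h7 : ((surv G Y (B b)).card : ℝ) = (B b).card - (NS G Y (B b)).card := by
      rw [surv, card_sdiff_of_subset (NS_subset _ _ _), Nat.cast_sub (card_le_card (NS_subset _ _ _))]
    linarith
  refine ⟨Y, inter_subset_right, C, hCB, ?_, ?_, hlost, ?_⟩
  · intro c hc
    rw [hC, mem_filter] at hc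
    obtain ⟨hcB, x, hx, hxY⟩ := hc
    have := mem_nb.mp ((hN a ha c hcB).1 hx)
    exact ⟨x, mem_inter.mpr ⟨hxY, this.1⟩, this.2.symm⟩
  · have h1 : 0 ≤ ∑ b ∈ I.erase a, T b := sum_nonneg fun b _ => hTn b
    simp only [hT] at h1
    calc (d:ℝ) / (4 * M) * (B a).card = p * d * (B a).card / 4 := by rw [hp]; ring
      _ ≤ _ := by linarith
  · intro b hb hba
    have hb0 := hBpos b hb
    have hb0' : (B b).card ≠ 0 := by
      intro h; rw [h] at hb0; simp at hb0
    have h1 := hTC b (mem_erase.mpr ⟨hba, hb⟩)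
    have h2 := hTeq b
    rw [if_neg hb0'] at h2
    have h4 : T b * (B b).card ≤ C.card * (B b).card := by gcongr
    have h5 : beta * ∑ c ∈ C, ∑ c' ∈ B b, r1 c c' ≤ C.card * (B b).card := by
      have : (0:ℝ) ≤ 2 * (NS G Y (B b)).card * C.card :=
        mul_nonneg (mul_nonneg zero_le_two (Nat.cast_nonneg _)) (Nat.cast_nonneg _)
      linarith
    have h6 : (((C ×ˢ surv G Y (B b)).filter (fun q => R q.1 q.2)).card : ℝ) ≤
        ∑ c ∈ C, ∑ c' ∈ B b, r1 c c' := by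
      have : ∑ c ∈ C, ∑ c' ∈ B b, r1 c c' = (((C ×ˢ B b).filter (fun q => R q.1 q.2)).card : ℝ) := by
        rw [card_filter, Nat.cast_sum, sum_product]
        refine sum_congr rfl fun c _ => sum_congr rfl fun c' _ => ?_
        simp only [hr1]; split_ifs <;> simp
      rw [this]
      exact_mod_cast card_le_card (filter_subset_filter _ (product_subset_product_right sdiff_subset))
    have h7 : ∑ c ∈ C, ∑ c' ∈ B b, r1 c c' ≤ 8 * K * mu * (C.card * (B b).card) := by
      rw [hbeta, one_div, inv_mul_le_iff₀ (by positivity)] at h5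
      exact h5
    calc _ ≤ _ := h6
      _ ≤ _ := h7
      _ ≤ 8 * K * mu * (C.card * (2 * (surv G Y (B b)).card)) := by
          refine mul_le_mul_of_nonneg_left ?_ (by positivity)
          exact mul_le_mul_of_nonneg_left (hlost b hb hba) hC0.le
      _ = _ := by ring

end Rand

set_option linter.unusedSectionVars false
set_option linter.unusedVariables false
section Priv
open Classical Finset

variable {V : Type} [Fintype V]

lemma mem_surv {G : SimpleGraph V} {Y B : Finset V} {c : V} :
    c ∈ surv G Y B ↔ c ∈ B ∧ ∀ y ∈ Y, ¬ G.Adj y c := by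
  simp only [surv, mem_sdiff, mem_NS, not_and, not_exists]
  constructor
  · rintro ⟨h1, h2⟩; exact ⟨h1, fun y hy h => h2 h1 y hy h⟩
  · rintro ⟨h1, h2⟩; exact ⟨h1, fun _ y hy h => h2 y hy h⟩

lemma core_iter (G : SimpleGraph V) (X : Finset V) (I : Finset ℕ) (B : ℕ → Finset V)
    (N : V → Finset V) (R : V → V → Prop) (hRs : ∀ c c', R c c' → R c' c)
    (d D M K : ℕ) (z mu : ℝ) (hz : 0 ≤ z) (hmu : 0 < mu)
    (hd : 1 ≤ d) (hK : I.card ≤ K) (hK1 : 1 ≤ K)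
    (hN : ∀ b ∈ I, ∀ c ∈ B b, N c ⊆ nb G c X ∧ (N c).card = d ∧ (nb G c X).card ≤ D)
    (hR : ∀ b ∈ I, ∀ c ∈ B b, ∀ b' ∈ I, ∀ c' ∈ B b', ¬ R c c' → ((N c ∩ nb G c' X).card : ℝ) ≤ z * d)
    (hRd : ∀ b ∈ I, ∀ b' ∈ I, b ≠ b' →
      (((B b ×ˢ B b').filter (fun q => R q.1 q.2)).card : ℝ) ≤ mu * (B b).card * (B b').card)
    (hne : ∀ b ∈ I, (B b).Nonempty)
    (hMD : 48 * K * D ≤ M) (hzK : 48 * K * z ≤ 1) (hmuK : 48 * K * ((16 * K)^K * mu) ≤ 1) (hD : 1 ≤ D)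
    (P : Finset ℕ) (hP : P ⊆ I) :
    ∃ B' Yf : ℕ → Finset V, (∀ b ∈ I, B' b ⊆ B b) ∧ (∀ b ∈ I, (B' b).Nonempty) ∧
      (∀ b ∈ I, (if b ∈ P then (d:ℝ) / (4 * M) else 1) * (1/2)^P.card * (B b).card ≤ (B' b).card) ∧
      (∀ a ∈ P, Yf a ⊆ X) ∧ (∀ a ∈ P, ∀ c ∈ B' a, ∃ y ∈ Yf a, G.Adj y c) ∧
      (∀ a ∈ P, ∀ b ∈ I, b ≠ a → ∀ y ∈ Yf a, ∀ c ∈ B' b, ¬ G.Adj y c) ∧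
      (∀ b ∈ I, ∀ b' ∈ I, b ≠ b' → (((B' b ×ˢ B' b').filter (fun q => R q.1 q.2)).card : ℝ) ≤
        (16 * K)^P.card * mu * (B' b).card * (B' b').card) := by
  have hK0 : (1:ℝ) ≤ K := by exact_mod_cast hK1
  have hM1 : 1 ≤ M := by nlinarith
  have hM0 : (0:ℝ) < M := by exact_mod_cast hM1
  have hd0 : (0:ℝ) < d := by exact_mod_cast hd
  induction P using Finset.induction_on with
  | empty =>
    refine ⟨B, fun _ => ∅, fun b _ => Subset.refl _, hne, ?_, by simp, by simp, by simp, ?_⟩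
    · intro b hb; simp
    · intro b hb b' hb' hbb; simpa using hRd b hb b' hb' hbb
  | insert a P haP ih =>
    have haI : a ∈ I := hP (mem_insert_self _ _)
    have hPI : P ⊆ I := fun x hx => hP (mem_insert_of_mem hx)
    obtain ⟨B', Yf, h1, h2, h3, h4, h5, h6, h7⟩ := ih hPI
    have hPK : P.card ≤ K := (card_le_card hPI).trans hK
    set mu' : ℝ := (16 * K)^P.card * mu with hmu'
    have hmu'0 : 0 < mu' := by positivity
    have hmu'K : 48 * K * mu' ≤ 1 := by
      refine le_trans ?_ hmuK
      rw [hmu']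
      gcongr
      linarith
    obtain ⟨Y, hYX, C, hCB, hC1, hC2, hC3, hC4⟩ := core_step G X I B' N R d D M K z mu' hz hmu'0 hd hK hK1
      (fun b hb c hc => hN b hb c (h1 b hb hc))
      (fun b hb c hc b' hb' c' hc' => hR b hb c (h1 b hb hc) b' hb' c' (h1 b' hb' hc')) h7 h2 hMD hzK hmu'K hD a haI
    set B'' : ℕ → Finset V := fun b => if b = a then C else surv G Y (B' b) with hB''
    have hB''a : B'' a = C := by simp [hB'']
    have hB''n : ∀ b, b ≠ a → B'' b = surv G Y (B' b) := fun b hb => by simp [hB'', hb]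
    have hB''s : ∀ b, B'' b ⊆ B' b := by
      intro b
      by_cases hb : b = a
      · subst hb; rw [hB''a]; exact hCB
      · rw [hB''n b hb]; exact sdiff_subset
    have hC0 : (0:ℝ) < C.card := by
      have : (0:ℝ) < (B' a).card := by exact_mod_cast card_pos.mpr (h2 a haI)
      have : 0 < (d:ℝ) / (4 * M) * (B' a).card := by positivity
      linarith
    have hne' : ∀ b ∈ I, (B'' b).Nonempty := by
      intro b hb
      by_cases hba : b = a
      · subst hba; rw [hB''a, ← card_pos]; exact_mod_cast hC0
      · rw [hB''n b hba, ← card_pos]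
        have h8 := hC3 b hb hba
        have : (0:ℝ) < (B' b).card := by exact_mod_cast card_pos.mpr (h2 b hb)
        have : (0:ℝ) < (surv G Y (B' b)).card := by linarith
        exact_mod_cast this
    have hcardP : (insert a P).card = P.card + 1 := card_insert_of_notMem haP
    refine ⟨B'', fun b => if b = a then Y else Yf b, fun b hb => (hB''s b).trans (h1 b hb), hne', ?_, ?_, ?_, ?_, ?_⟩
    · intro b hb
      have h8 := h3 b hb
      rw [hcardP]
      by_cases hba : b = a
      · subst hba
        rw [hB''a, if_pos (mem_insert_self _ _)]
        rw [if_neg haP] at h8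
        calc (d:ℝ) / (4 * M) * (1/2)^(P.card + 1) * (B b).card 
            ≤ (d:ℝ) / (4 * M) * (1/2)^(P.card) * (B b).card := by
              gcongr ?_ * ?_ * _
              exact pow_le_pow_of_le_one (by norm_num) (by norm_num) (by omega)
          _ = (d:ℝ) / (4 * M) * (1 * (1/2)^(P.card) * (B b).card) := by ring
          _ ≤ (d:ℝ) / (4 * M) * (B' b).card := by gcongr
          _ ≤ _ := hC2
      · rw [hB''n b hba]
        have h9 := hC3 b hb hba
        have h10 : (if b ∈ insert a P then (d:ℝ) / (4 * M) else 1) = if b ∈ P then (d:ℝ) / (4 * M) else 1 := by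
          simp [hba]
        rw [h10, pow_succ]
        linarith
    · intro b hb
      by_cases hba : b = a
      · simpa [hba] using hYX
      · simp only [hba, if_false]; exact h4 b (mem_of_mem_insert_of_ne hb hba)
    · intro b hb c hc
      by_cases hba : b = a
      · subst hba; rw [hB''a] at hc; simpa using hC1 c hc
      · simp only [hba, if_false]; exact h5 b (mem_of_mem_insert_of_ne hb hba) c (hB''s b hc)
    · intro b hb b' hb' hbb y hy c hc
      by_cases hba : b = a
      · subst hba
        simp only [if_true] at hy
        rw [hB''n b' hbb] at hc
        exact (mem_surv.mp hc).2 y hy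
      · simp only [hba, if_false] at hy
        exact h6 b (mem_of_mem_insert_of_ne hb hba) b' hb' hbb y hy c (hB''s b' hc)
    · intro b hb b' hb' hbb
      have hmueq : (16 * (K:ℝ))^(insert a P).card * mu = 16 * K * mu' := by
        rw [hcardP, hmu', pow_succ]; ring
      rw [hmueq]
      by_cases hba : b = a
      · subst hba
        rw [hB''a, hB''n b' hbb.symm]
        exact hC4 b' hb' hbb.symm
      · by_cases hb'a : b' = a
        · subst hb'a
          rw [hB''a, hB''n b hbb]
          have h8 := hC4 b hb hbb
          have h9 : ((surv G Y (B' b) ×ˢ C).filter (fun q => R q.1 q.2)).card ≤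
             ((C ×ˢ surv G Y (B' b)).filter (fun q => R q.1 q.2)).card := by
            apply card_le_card_of_injOn Prod.swap
            · intro q hq
              simp only [coe_filter, mem_product, Set.mem_ofPred_eq, Prod.fst_swap, Prod.snd_swap] at hq ⊢
              exact ⟨⟨hq.1.2, hq.1.1⟩, hRs _ _ hq.2⟩
            · exact Prod.swap_injective.injOn
          have h9' : (((surv G Y (B' b) ×ˢ C).filter (fun q => R q.1 q.2)).card : ℝ) ≤
             ((C ×ˢ surv G Y (B' b)).filter (fun q => R q.1 q.2)).card := by exact_mod_cast h9
          linarith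
        · have h8 := h7 b hb b' hb' hbb
          have h9 : (((B'' b ×ˢ B'' b').filter (fun q => R q.1 q.2)).card : ℝ) ≤
              ((B' b ×ˢ B' b').filter (fun q => R q.1 q.2)).card := by
            exact_mod_cast card_le_card (filter_subset_filter _ (product_subset_product (hB''s b) (hB''s b')))
          have h10 := hC3 b hb hba
          have h11 := hC3 b' hb' hb'a
          rw [← hB''n b hba] at h10
          rw [← hB''n b' hb'a] at h11
          have key : ∀ p q u v : ℝ, 0 ≤ p → 0 ≤ q → 0 ≤ u → 0 ≤ v → p ≤ 2 * u → q ≤ 2 * v →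
              mu' * p * q ≤ 16 * K * mu' * u * v := by
            intro p q u v hp hq hu hv hpu hqv
            calc mu' * p * q = mu' * (p * q) := by ring
              _ ≤ mu' * ((2 * u) * (2 * v)) := by
                apply mul_le_mul_of_nonneg_left _ hmu'0.le
                exact mul_le_mul hpu hqv hq (by linarith)
              _ = 4 * (mu' * (u * v)) := by ring
              _ ≤ 16 * K * (mu' * (u * v)) := by
                apply mul_le_mul_of_nonneg_right (by linarith)
                exact mul_nonneg hmu'0.le (mul_nonneg hu hv)
              _ = _ := by ring
          exact h9.trans (h8.trans (key _ _ _ _ (Nat.cast_nonneg _) (Nat.cast_nonneg _)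
            (Nat.cast_nonneg _) (Nat.cast_nonneg _) (by linarith) (by linarith)))

/-- private neighbourhoods, with degrees to `X` in the range `[d,D]` -/
lemma core_private (G : SimpleGraph V) (X : Finset V) (I : Finset ℕ) (B : ℕ → Finset V)
    (d D K : ℕ) (lam : ℝ) (hlam : 0 < lam) (hd : 1 ≤ d) (hK : I.card = K) (hK1 : 1 ≤ K)
    (hdeg : ∀ b ∈ I, ∀ c ∈ B b, d ≤ (nb G c X).card ∧ (nb G c X).card ≤ D)
    (hXB : ∀ x ∈ X, ∀ b ∈ I, ((nb G x (B b)).card : ℝ) ≤ lam * (B b).card)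
    (hlink : Link G I B lam) (hne : ∀ b ∈ I, (B b).Nonempty) 
    (hl : 48 * K * ((16 * K)^K * (lam * (1 + 96 * K))) ≤ 1) :
    ∃ C Yf : ℕ → Finset V, (∀ b ∈ I, C b ⊆ B b) ∧ 
      (∀ b ∈ I, (d:ℝ) / (192 * K * D * 2^(K+1)) * (B b).card ≤ (C b).card) ∧
      (∀ a ∈ I, Yf a ⊆ X) ∧ (∀ a ∈ I, ∀ c ∈ C a, ∃ y ∈ Yf a, G.Adj y c) ∧
      (∀ a ∈ I, ∀ b ∈ I, b ≠ a → ∀ y ∈ Yf a, ∀ c ∈ C b, ¬ G.Adj y c) ∧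
      Link G I C (4 * K * ((16 * K)^K * (lam * (1 + 96 * K)))) := by
  have hK0 : (1:ℝ) ≤ K := by exact_mod_cast hK1
  have hd0 : (0:ℝ) < d := by exact_mod_cast hd
  obtain ⟨i1, hi1⟩ : I.Nonempty := by rw [← card_pos]; omega
  have hD : 1 ≤ D := by
    obtain ⟨c, hc⟩ := hne i1 hi1
    have := hdeg i1 hi1 c hc; omega
  have hD0 : (0:ℝ) < D := by exact_mod_cast hD
  have hNex : ∀ c : V, ∃ S : Finset V, d ≤ (nb G c X).card → S ⊆ nb G c X ∧ S.card = d := by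
    intro c
    by_cases h : d ≤ (nb G c X).card
    · obtain ⟨S, hS, hS'⟩ := exists_subset_card_eq h
      exact ⟨S, fun _ => ⟨hS, hS'⟩⟩
    · exact ⟨∅, fun h' => absurd h' h⟩
  choose N hN using hNex
  set z : ℝ := 1 / (48 * K) with hz
  have hz0 : 0 < z := by positivity
  set mu : ℝ := lam * (1 + 96 * K) with hmu
  have hmu0 : 0 < mu := by positivity
  set R : V → V → Prop := fun c c' => G.Adj c c' ∨ z * d < (N c ∩ nb G c' X).card ∨
    z * d < (N c' ∩ nb G c X).card with hR
  have hRs : ∀ c c', R c c' → R c' c := by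
    intro c c' h
    rcases h with h | h | h
    · exact Or.inl h.symm
    · exact Or.inr (Or.inr h)
    · exact Or.inr (Or.inl h)
  -- one-sided count
  have hone : ∀ b ∈ I, ∀ b' ∈ I, ∀ c ∈ B b,
      (((B b').filter (fun c' => z * d < (N c ∩ nb G c' X).card)).card : ℝ) ≤ lam * (48 * K) * (B b').card := by
    intro b hb b' hb' c hc
    have hNc := hN c (hdeg b hb c hc).1
    have h1 := markov_card (B b') (fun c' => ((N c ∩ nb G c' X).card : ℝ)) (fun _ _ => by positivity) (z * d)
    have h2 : ∑ c' ∈ B b', ((N c ∩ nb G c' X).card : ℝ) = ∑ x ∈ N c, ((nb G x (B b')).card : ℝ) := by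
      have h3 : ∀ c' ∈ B b', ((N c ∩ nb G c' X).card : ℝ) = ∑ x ∈ N c, if G.Adj x c' then 1 else 0 := by
        intro c' hc'
        have : N c ∩ nb G c' X = (N c).filter (fun x => G.Adj x c') := by
          ext x
          simp only [mem_inter, mem_nb, mem_filter]
          constructor
          · rintro ⟨h, h', h''⟩; exact ⟨h, h''.symm⟩
          · rintro ⟨h, h'⟩; exact ⟨h, (mem_nb.mp (hNc.1 h)).1, h'.symm⟩
        rw [this, card_filter]; push_cast; rfl
      rw [sum_congr rfl h3, sum_comm]
      refine sum_congr rfl fun x _ => ?_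
      rw [nb, card_filter]; push_cast; rfl
    have h4 : ∑ x ∈ N c, ((nb G x (B b')).card : ℝ) ≤ d * (lam * (B b').card) := by
      calc _ ≤ ∑ x ∈ N c, (lam * (B b').card : ℝ) :=
            sum_le_sum fun x hx => hXB x (mem_nb.mp (hNc.1 hx)).1 b' hb'
        _ = _ := by rw [sum_const, nsmul_eq_mul, hNc.2]
    rw [h2] at h1
    have h5 := h1.trans h4
    generalize (((B b').filter (fun c' => z * d < (N c ∩ nb G c' X).card)).card : ℝ) = cnt at h5 ⊢
    rw [mul_comm z (d:ℝ), mul_assoc] at h5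
    have h6 := le_of_mul_le_mul_left h5 hd0
    rw [hz, one_div, inv_mul_le_iff₀ (by positivity)] at h6
    linarith
  have hprodcard : ∀ (A A' : Finset V) (Q : V → V → Prop) (t : ℝ),
      (∀ c ∈ A, ((A'.filter (fun c' => Q c c')).card : ℝ) ≤ t) →
      (((A ×ˢ A').filter (fun q => Q q.1 q.2)).card : ℝ) ≤ A.card * t := by
    intro A A' Q t h
    rw [card_filter, Nat.cast_sum, sum_product]
    calc _ ≤ ∑ c ∈ A, t := by
          apply sum_le_sum; intro c hc
          refine le_trans (le_of_eq ?_) (h c hc)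
          rw [card_filter]; push_cast; rfl
      _ = _ := by rw [sum_const, nsmul_eq_mul]
  have hRd : ∀ b ∈ I, ∀ b' ∈ I, b ≠ b' →
      (((B b ×ˢ B b').filter (fun q => R q.1 q.2)).card : ℝ) ≤ mu * (B b).card * (B b').card := by
    intro b hb b' hb' hbb
    have e1 := hprodcard (B b) (B b') (fun c c' => G.Adj c c') (lam * (B b').card)
      (fun c hc => hlink b hb b' hb' hbb c hc)
    have e2 := hprodcard (B b) (B b') (fun c c' => z * d < (N c ∩ nb G c' X).card) _
      (fun c hc => hone b hb b' hb' c hc)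
    have e3 := hprodcard (B b') (B b) (fun c c' => z * d < (N c ∩ nb G c' X).card) _
      (fun c hc => hone b' hb' b hb c hc)
    have e3' : (((B b ×ˢ B b').filter (fun q => z * d < (N q.2 ∩ nb G q.1 X).card)).card : ℝ) ≤
       ((B b' ×ˢ B b).filter (fun q => z * d < (N q.1 ∩ nb G q.2 X).card)).card := by
      have : ((B b ×ˢ B b').filter (fun q => z * d < (N q.2 ∩ nb G q.1 X).card)).card ≤
         ((B b' ×ˢ B b).filter (fun q => z * d < (N q.1 ∩ nb G q.2 X).card)).card := by
        apply card_le_card_of_injOn Prod.swap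
        · intro q hq
          simp only [coe_filter, mem_product, Set.mem_ofPred_eq, Prod.fst_swap, Prod.snd_swap] at hq ⊢
          exact ⟨⟨hq.1.2, hq.1.1⟩, hq.2⟩
        · exact Prod.swap_injective.injOn
      exact_mod_cast this
    have e4 : ((B b ×ˢ B b').filter (fun q => R q.1 q.2)) ⊆
        ((B b ×ˢ B b').filter (fun q => G.Adj q.1 q.2)) ∪
        (((B b ×ˢ B b').filter (fun q => z * d < (N q.1 ∩ nb G q.2 X).card)) ∪
        ((B b ×ˢ B b').filter (fun q => z * d < (N q.2 ∩ nb G q.1 X).card))) := by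
      intro q hq
      simp only [hR, mem_filter, mem_union] at hq ⊢
      tauto
    have e5 := (card_le_card e4).trans ((card_union_le _ _).trans (Nat.add_le_add_left (card_union_le _ _) _))
    have e6 : (((B b ×ˢ B b').filter (fun q => R q.1 q.2)).card : ℝ) ≤
        ((B b ×ˢ B b').filter (fun q => G.Adj q.1 q.2)).card +
        (((B b ×ˢ B b').filter (fun q => z * d < (N q.1 ∩ nb G q.2 X).card)).card +
        ((B b ×ˢ B b').filter (fun q => z * d < (N q.2 ∩ nb G q.1 X).card)).card) := by
      exact_mod_cast e5
    rw [hmu]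
    linarith
  obtain ⟨B', Yf, h1, h2, h3, h4, h5, h6, h7⟩ := core_iter G X I B N R hRs d D (48 * K * D) K z mu hz0.le hmu0 hd hK.le hK1
    (fun b hb c hc => ⟨(hN c (hdeg b hb c hc).1).1, (hN c (hdeg b hb c hc).1).2, (hdeg b hb c hc).2⟩)
    (fun b hb c hc b' hb' c' hc' hnR => by
      simp only [hR] at hnR
      push Not at hnR
      exact hnR.2.1) (by intro b hb b' hb' hbb; convert hRd b hb b' hb' hbb) hne le_rfl (by rw [hz]; field_simp; rfl) hl hD I (Subset.refl _)
  set mK : ℝ := (16 * K)^K * mu with hmK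
  have hmK0 : 0 < mK := by positivity
  obtain ⟨C, hC1, hC2, hC3⟩ := trim_lemma G I B' mK hmK0 (by
    intro i hi j hj hij
    have h8 := h7 i hi j hj hij
    rw [hK] at h8
    refine le_trans ?_ h8
    calc ∑ x ∈ B' i, ((nb G x (B' j)).card : ℝ) = (((B' i ×ˢ B' j).filter (fun q => G.Adj q.1 q.2)).card : ℝ) := by
          rw [card_filter, Nat.cast_sum, sum_product]
          refine sum_congr rfl fun x _ => ?_
          rw [nb, card_filter]; push_cast; rfl
      _ ≤ _ := by
          have : ((B' i ×ˢ B' j).filter (fun q => G.Adj q.1 q.2)) ⊆ ((B' i ×ˢ B' j).filter (fun q => R q.1 q.2)) := by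
            intro q hq
            simp only [hR, mem_filter] at hq ⊢
            tauto
          have h9 := card_le_card this
          have h10 : (((B' i ×ˢ B' j).filter (fun q => G.Adj q.1 q.2)).card : ℝ) ≤
            (((B' i ×ˢ B' j).filter (fun q => R q.1 q.2)).card : ℝ) := Nat.cast_le.mpr h9
          convert h10)
  refine ⟨C, Yf, fun b hb => (hC1 b).trans (h1 b hb), ?_, h4, fun a ha c hc => h5 a ha c (hC1 a hc),
    fun a ha b hb hba y hy c hc => h6 a ha b hb hba y hy c (hC1 b hc), ?_⟩
  · intro b hb
    have h8 := h3 b hb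
    have h9 := hC2 b hb
    rw [if_pos hb, hK] at h8
    have h10 : (d:ℝ) / (192 * K * D * 2^(K+1)) * (B b).card = 
      (1/2) * ((d:ℝ) / (4 * (48 * K * D : ℕ)) * (1/2)^K * (B b).card) := by
      push_cast
      rw [one_div_pow, pow_succ]
      field_simp
      norm_num
    rw [h10]; linarith
  · rw [hK] at hC3; exact hC3

end Priv

set_option linter.unusedSectionVars false
set_option linter.unusedVariables false
section PrivTwo
open Classical Finset

lemma large_rpow (e : ℝ) (he : 0 < e) (C : ℝ) : ∃ N : ℕ, 2 ≤ N ∧ ∀ n : ℕ, N ≤ n → C ≤ (n:ℝ) ^ e := by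
  have h := (tendsto_rpow_atTop he).comp (tendsto_natCast_atTop_atTop (R := ℝ))
  have h2 := h.eventually_ge_atTop C
  rw [Filter.eventually_atTop] at h2
  obtain ⟨N, hN⟩ := h2
  exact ⟨max N 2, le_max_right _ _, fun n hn => hN n ((le_max_left _ _).trans hn)⟩

lemma popular {α : Type*} (s : Finset α) (f : α → ℕ) (Q : ℕ) (hf : ∀ a ∈ s, f a ∈ range (Q + 1)) :
    ∃ t ∈ range (Q+1), (s.card : ℝ) ≤ (Q + 1) * (s.filter (fun a => f a = t)).card := by
  have h0 : (0:ℝ) < Q + 1 := by positivity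
  obtain ⟨t, ht, h⟩ := exists_le_card_fiber_of_nsmul_le_card_of_maps_to (M := ℝ)
    (b := (s.card : ℝ) / (Q + 1)) hf ⟨0, by simp⟩ (by
      rw [card_range, nsmul_eq_mul]; push_cast
      rw [mul_div_cancel₀ _ h0.ne'])
  refine ⟨t, ht, ?_⟩
  rw [div_le_iff₀ h0] at h
  linarith

set_option maxHeartbeats 1000000 in
lemma private_lemma (K' : ℕ) (hK' : 1 ≤ K') (lam' κ : ℝ) (hlam' : 0 < lam') (hκ : 0 < κ) :
    ∃ K : ℕ, ∃ lam : ℝ, 0 < lam ∧ ∃ N : ℕ, ∀ (V : Type) [Fintype V] (G : SimpleGraph V) (w : ℝ),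
      N ≤ Fintype.card V → 0 < w → Coh G w → ∀ (X : Finset V) (I : Finset ℕ) (B : ℕ → Finset V),
      K ≤ I.card → (∀ b ∈ I, Disjoint X (B b)) → w ≤ X.card → (∀ b ∈ I, 2 * w ≤ (B b).card) →
      (∀ x ∈ X, ∀ b ∈ I, ((nb G x (B b)).card : ℝ) ≤ lam * (B b).card) → Link G I B lam →
      ∃ I' ⊆ I, I'.card = K' ∧ ∃ C Yf : ℕ → Finset V, (∀ b ∈ I', C b ⊆ B b) ∧
        (∀ b ∈ I', (Fintype.card V : ℝ) ^ (-κ) * (B b).card ≤ (C b).card) ∧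
        (∀ a ∈ I', Yf a ⊆ X) ∧ (∀ a ∈ I', ∀ c ∈ C a, ∃ y ∈ Yf a, G.Adj y c) ∧
        (∀ a ∈ I', ∀ b ∈ I', b ≠ a → ∀ y ∈ Yf a, ∀ c ∈ C b, ¬ G.Adj y c) ∧
        Link G I' C lam' := by
  obtain ⟨Q, hQ⟩ := exists_nat_gt (2 / κ)
  have hQ0 : (0:ℝ) < Q := lt_trans (by positivity) hQ
  have hQ1 : 1 / (Q:ℝ) ≤ κ / 2 := by
    rw [div_lt_iff₀ hκ] at hQ
    rw [div_le_div_iff₀ hQ0 two_pos]; linarith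
  have hK0 : (1:ℝ) ≤ K' := by exact_mod_cast hK'
  set M0 : ℝ := 4 * K' * ((16 * K')^K' * (1 + 96 * K')) * (2 * (Q + 1)) with hM0
  have hM0p : 0 < M0 := by positivity
  set lam : ℝ := min (1 / (12 * M0)) (lam' / M0) with hlam
  have hlam0 : 0 < lam := lt_min (by positivity) (by positivity)
  have hl1 : 12 * M0 * lam ≤ 1 := by
    have : lam ≤ 1 / (12 * M0) := min_le_left _ _
    rw [le_div_iff₀ (by positivity)] at this; linarith
  have hl2 : M0 * lam ≤ lam' := by
    have : lam ≤ lam' / M0 := min_le_right _ _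
    rw [le_div_iff₀ (by positivity)] at this; linarith
  obtain ⟨N, hN2, hN⟩ := large_rpow (κ / 2) (by positivity) (192 * K' * 2^(K'+1) * (2 * (Q+1)))
  refine ⟨K' * (Q + 1), lam, hlam0, N, ?_⟩
  intro V _ G w hn hw hcoh X I B hI hdisj hX hB hXB hlink
  set n := Fintype.card V with hnV
  have hn2 : 2 ≤ n := hN2.trans hn
  have hn0 : (1:ℝ) < n := by exact_mod_cast hn2
  have hn00 : (0:ℝ) < n := by linarith
  set β : ℝ := (n:ℝ) ^ (1 / (Q:ℝ)) with hβ
  have hβ1 : 1 < β := Real.one_lt_rpow hn0 (by positivity)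
  have hβQ : β ^ Q = n := by
    rw [hβ, ← Real.rpow_natCast, ← Real.rpow_mul hn00.le, one_div, inv_mul_cancel₀ hQ0.ne', Real.rpow_one]
  have hcl : ∀ v : V, ∃ t : ℕ, 1 ≤ (nb G v X).card → β^t ≤ (nb G v X).card ∧ ((nb G v X).card : ℝ) < β^(t+1) := by
    intro v
    by_cases h : 1 ≤ (nb G v X).card
    · obtain ⟨t, ht⟩ := exists_nat_pow_near (x := ((nb G v X).card : ℝ)) (by exact_mod_cast h) hβ1
      exact ⟨t, fun _ => ht⟩
    · exact ⟨0, fun h' => absurd h' h⟩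
  choose cl hcl using hcl
  have hNS1 : ∀ b, ∀ v ∈ NS G X (B b), 1 ≤ (nb G v X).card := by
    intro b v hv
    obtain ⟨hv, x, hx, hxv⟩ := mem_NS.mp hv
    exact card_pos.mpr ⟨x, mem_nb.mpr ⟨hx, hxv.symm⟩⟩
  have hclQ : ∀ b, ∀ v ∈ NS G X (B b), cl v ∈ range (Q + 1) := by
    intro b v hv
    have h1 := (hcl v (hNS1 b v hv)).1
    have h2 : ((nb G v X).card : ℝ) ≤ n := by exact_mod_cast card_le_univ _
    have h3 : β ^ cl v ≤ β ^ Q := by rw [hβQ]; linarith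
    rw [pow_le_pow_iff_right₀ hβ1] at h3
    rw [mem_range]; omega
  have hpop := fun b => popular (NS G X (B b)) cl Q (hclQ b)
  choose tt htt hpop using hpop
  obtain ⟨t, ht, hcard⟩ := exists_le_card_fiber_of_mul_le_card_of_maps_to (s := I) (t := range (Q+1)) (f := tt) (n := K')
    (fun a _ => htt a) ⟨0, by simp⟩ (by rw [card_range, mul_comm]; exact hI)
  obtain ⟨I', hI', hI'c⟩ := exists_subset_card_eq hcard
  have hI's : I' ⊆ I := hI'.trans (filter_subset _ _)
  set B' : ℕ → Finset V := fun b => (NS G X (B b)).filter (fun v => cl v = t) with hB'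
  have hB's : ∀ b, B' b ⊆ B b := fun b => (filter_subset _ _).trans (NS_subset _ _ _)
  have hB'c : ∀ b ∈ I', (1 / (2 * ((Q:ℝ) + 1))) * (B b).card ≤ (B' b).card := by
    intro b hb
    have h1 := hpop b
    rw [(mem_filter.mp (hI' hb)).2] at h1
    have h2 := hcoh.NS_card (hdisj b (hI's hb)) hX
    have h3 := hB b (hI's hb)
    rw [div_mul_eq_mul_div, div_le_iff₀ (by positivity)]
    have h4 : ((NS G X (B b)).card : ℝ) ≤ (Q+1) * (B' b).card := h1
    nlinarith
  have hB'ne : ∀ b ∈ I', (B' b).Nonempty := by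
    intro b hb
    rw [← card_pos]
    have h3 := hB b (hI's hb)
    have h1 : (0:ℝ) < (1 / (2 * ((Q:ℝ) + 1))) * (B b).card := mul_pos (by positivity) (by linarith)
    exact_mod_cast h1.trans_le (hB'c b hb)
  set d := ⌈β^t⌉₊ with hd
  set D := ⌊β^(t+1)⌋₊ with hD
  have hdeg : ∀ b ∈ I', ∀ c ∈ B' b, d ≤ (nb G c X).card ∧ (nb G c X).card ≤ D := by
    intro b hb c hc
    obtain ⟨hc1, hc2⟩ := mem_filter.mp hc
    have := hcl c (hNS1 b c hc1)
    rw [hc2] at this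
    exact ⟨Nat.ceil_le.mpr this.1, Nat.le_floor this.2.le⟩
  have hd1 : 1 ≤ d := Nat.one_le_iff_ne_zero.mpr (by
    rw [hd]; exact (Nat.ceil_pos.mpr (by positivity)).ne')
  set lam2 : ℝ := lam * (2 * (Q + 1)) with hlam2
  have hlam20 : 0 < lam2 := by positivity
  have hlink' : Link G I' B' lam2 := by
    refine (hlink.mono hI's le_rfl).shrink (t := 1 / (2 * ((Q:ℝ) + 1))) (fun i _ => hB's i) hlam0.le ?_ hlam20.le hB'c
    rw [hlam2]; field_simp; rfl
  have hXB' : ∀ x ∈ X, ∀ b ∈ I', ((nb G x (B' b)).card : ℝ) ≤ lam2 * (B' b).card := by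
    intro x hx b hb
    have h1 := hXB x hx b (hI's hb)
    have h2 : ((nb G x (B' b)).card : ℝ) ≤ (nb G x (B b)).card := by
      exact_mod_cast card_le_card (nb_mono (hB's b))
    have h3 := hB'c b hb
    calc _ ≤ _ := h2
      _ ≤ _ := h1
      _ = lam2 * ((1 / (2 * ((Q:ℝ) + 1))) * (B b).card) := by rw [hlam2]; field_simp
      _ ≤ _ := mul_le_mul_of_nonneg_left h3 hlam20.le
  have hMlam : 4 * K' * ((16 * K')^K' * (lam2 * (1 + 96 * K'))) = M0 * lam := by
    rw [hlam2, hM0]; ring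
  obtain ⟨C, Yf, g1, g2, g3, g4, g5, g6⟩ := core_private G X I' B' d D K' lam2 hlam20 hd1 hI'c hK' hdeg hXB' hlink' hB'ne (by
    calc _ = 12 * (4 * K' * ((16 * K')^K' * (lam2 * (1 + 96 * K')))) := by ring
      _ ≤ 1 := by rw [hMlam]; linarith)
  rw [hMlam] at g6
  refine ⟨I', hI's, hI'c, C, Yf, fun b hb => (g1 b hb).trans (hB's b), ?_, g3, g4, g5, g6.mono (Subset.refl _) hl2⟩
  intro b hb
  have h1 := g2 b hb
  have h2 := hB'c b hb
  have hD1 : (1:ℝ) ≤ D := by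
    have : 1 ≤ D := Nat.le_floor (by push_cast; exact one_le_pow₀ hβ1.le)
    exact_mod_cast this
  have h3 : (D:ℝ) ≤ β * d := by
    have e1 : (D:ℝ) ≤ β^(t+1) := Nat.floor_le (by positivity)
    have e2 : β^t ≤ (d:ℝ) := Nat.le_ceil _
    rw [pow_succ] at e1
    nlinarith
  have hD0 : (0:ℝ) < D := by linarith
  have h4 : (n:ℝ)^(-κ) ≤ (d:ℝ) / (192 * K' * D * 2^(K'+1)) * (1 / (2 * ((Q:ℝ) + 1))) := by
    have e1 : β ≤ (n:ℝ)^(κ/2) := Real.rpow_le_rpow_of_exponent_le hn0.le hQ1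
    have e2 := hN n hn
    have e3 : β * (192 * K' * 2^(K'+1) * (2 * (Q+1))) ≤ (n:ℝ)^κ := by
      calc _ ≤ (n:ℝ)^(κ/2) * (n:ℝ)^(κ/2) := mul_le_mul e1 e2 (by positivity) (by positivity)
        _ = _ := by rw [← Real.rpow_add hn00]; ring_nf
    rw [Real.rpow_neg hn00.le, div_mul_div_comm, mul_one, inv_le_comm₀ (by positivity) (by
      have : (0:ℝ) < d := by exact_mod_cast hd1
      positivity), inv_div, div_le_iff₀ (by exact_mod_cast hd1)]
    calc 192 * K' * D * 2^(K'+1) * (2 * ((Q:ℝ)+1)) = D * (192 * K' * 2^(K'+1) * (2 * (Q+1))) := by ring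
      _ ≤ (β * d) * (192 * K' * 2^(K'+1) * (2 * (Q+1))) := mul_le_mul_of_nonneg_right h3 (by positivity)
      _ = (β * (192 * K' * 2^(K'+1) * (2 * (Q+1)))) * d := by ring
      _ ≤ _ := mul_le_mul_of_nonneg_right e3 (by positivity)
  calc (n:ℝ)^(-κ) * (B b).card ≤ (d:ℝ) / (192 * K' * D * 2^(K'+1)) * (1 / (2 * ((Q:ℝ) + 1))) * (B b).card :=
        mul_le_mul_of_nonneg_right h4 (Nat.cast_nonneg _)
    _ = (d:ℝ) / (192 * K' * D * 2^(K'+1)) * ((1 / (2 * ((Q:ℝ) + 1))) * (B b).card) := by ring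
    _ ≤ (d:ℝ) / (192 * K' * D * 2^(K'+1)) * (B' b).card := mul_le_mul_of_nonneg_left h2 (by positivity)
    _ ≤ _ := h1

end PrivTwo

set_option linter.unusedSectionVars false
set_option linter.unusedVariables false
section Forcing
open Classical Finset

/-- `Frc H c S`: rainbow induced copies of `H[S]` are forced -/
def Frc {W : Type*} (H : SimpleGraph W) (c : ℝ) (S : Finset W) : Prop :=
  ∃ K : ℕ, ∃ σ : ℝ, 0 < σ ∧ ∃ lam : ℝ, 0 < lam ∧ ∃ N : ℕ, ∀ (V : Type) [Fintype V] (G : SimpleGraph V),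
    N ≤ Fintype.card V → Coh G ((Fintype.card V : ℝ) ^ (1 - c)) →
    ∀ (col : V → ℕ) (I : Finset ℕ) (A : ℕ → Finset V), K ≤ I.card → Colored col I A →
    (∀ i ∈ I, (Fintype.card V : ℝ) ^ (1 - σ) ≤ (A i).card) → Link G I A lam →
    ∃ f : W → V, (∀ w ∈ S, col (f w) ∈ I ∧ f w ∈ A (col (f w))) ∧
      Set.InjOn (fun w => col (f w)) S ∧
      ∀ w ∈ S, ∀ w' ∈ S, H.Adj w w' ↔ G.Adj (f w) (f w')

lemma Frc.empty {W : Type*} (H : SimpleGraph W) (c : ℝ) : Frc H c ∅ := by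
  refine ⟨0, 1, one_pos, 1, one_pos, 1, ?_⟩
  intro V _ G hn hcoh col I A hI hcol hA hl
  have : Nonempty V := Fintype.card_pos_iff.mp hn
  exact ⟨fun _ => Classical.arbitrary V, by simp, by simp, by simp⟩

lemma pow_split {n : ℕ} (hn : 2 ≤ n) (a b x : ℝ) (h : x ≤ a + b) (y z : ℝ) 
    (hy : (n:ℝ)^a * z ≤ y) (hz : (n:ℝ)^b ≤ z) : (n:ℝ)^x ≤ y := by
  have hn1 : (1:ℝ) ≤ n := by exact_mod_cast (by omega : 1 ≤ n)
  have hn0 : (0:ℝ) < n := by linarith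
  calc (n:ℝ)^x ≤ (n:ℝ)^(a+b) := Real.rpow_le_rpow_of_exponent_le hn1 h
    _ = (n:ℝ)^a * (n:ℝ)^b := Real.rpow_add hn0 _ _
    _ ≤ (n:ℝ)^a * z := mul_le_mul_of_nonneg_left hz (by positivity)
    _ ≤ y := hy

lemma Frc.leaf {W : Type*} (H : SimpleGraph W) (c : ℝ) (hc : 0 < c) (S : Finset W) (v : W) (hvS : v ∉ S)
    (hv : (∃ u ∈ S, ∀ w ∈ S, H.Adj v w ↔ w = u) ∨ ∀ w ∈ S, ¬ H.Adj v w)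
    (hF : Frc H c S) : Frc H c (insert v S) := by
  obtain ⟨K1, σ1, hσ1, lam1, hlam1, N1, hF⟩ := hF
  obtain ⟨K2, lam2, hlam2, N2, hP⟩ := private_lemma (K1 + 1) (by omega) lam1 (σ1 / 2) hlam1 (by positivity)
  obtain ⟨N3, hN32, hN3⟩ := large_rpow (c/2) (by positivity) 2
  refine ⟨K2 + 1, min (σ1 / 2) (c / 2), by positivity, lam2, hlam2, max N1 (max N2 N3), ?_⟩
  intro V _ G hn hcoh col I A hI hcol hA hl
  set n := Fintype.card V with hnV
  have hnN1 : N1 ≤ n := (le_max_left _ _).trans hn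
  have hnN2 : N2 ≤ n := (le_max_left _ _).trans ((le_max_right _ _).trans hn)
  have hnN3 : N3 ≤ n := (le_max_right _ _).trans ((le_max_right _ _).trans hn)
  have hn2 : 2 ≤ n := hN32.trans hnN3
  have hn1 : (1:ℝ) ≤ n := by exact_mod_cast (by omega : 1 ≤ n)
  have hn0 : (0:ℝ) < n := by linarith
  have hw : (0:ℝ) < (n:ℝ)^(1-c) := by positivity
  have hA2 : ∀ i ∈ I, 2 * (n:ℝ)^(1-c) ≤ (A i).card := by
    intro i hi
    refine le_trans ?_ (hA i hi)
    calc 2 * (n:ℝ)^(1-c) ≤ (n:ℝ)^(c/2) * (n:ℝ)^(1-c) := mul_le_mul_of_nonneg_right (hN3 n hnN3) hw.le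
      _ = (n:ℝ)^(c/2 + (1-c)) := (Real.rpow_add hn0 _ _).symm
      _ ≤ _ := Real.rpow_le_rpow_of_exponent_le hn1 (by linarith [min_le_right (σ1/2) (c/2)])
  obtain ⟨i0, hi0⟩ : I.Nonempty := by rw [← card_pos]; omega
  have herase : I.erase i0 ⊆ I := erase_subset _ _
  obtain ⟨I', hI', hI'c, C, Yf, g1, g2, g3, g4, g5, g6⟩ := hP V G _ hnN2 hw hcoh (A i0) (I.erase i0) A
    (by rw [card_erase_of_mem hi0]; omega)
    (fun b hb => hcol.disjoint hi0 (herase hb) (ne_of_mem_erase hb).symm)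
    (by linarith [hA2 i0 hi0]) (fun b hb => hA2 b (herase hb))
    (fun x hx b hb => hl i0 hi0 b (herase hb) (ne_of_mem_erase hb).symm x hx)
    (hl.mono herase le_rfl)
  have hI'I : I' ⊆ I := hI'.trans herase
  have hCs : ∀ b ∈ I', (n:ℝ)^(1-σ1) ≤ (C b).card := fun b hb =>
    pow_split hn2 (-(σ1/2)) (1 - min (σ1/2) (c/2)) _ (by linarith [min_le_left (σ1/2) (c/2)]) _ _ (g2 b hb) (hA b (hI'I hb))
  obtain ⟨b0, hb0⟩ : I'.Nonempty := by rw [← card_pos]; omega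
  have hI'' : I'.erase b0 ⊆ I' := erase_subset _ _
  obtain ⟨f, f1, f2, f3⟩ := hF V G hnN1 hcoh col (I'.erase b0) C (by rw [card_erase_of_mem hb0]; omega)
    (hcol.mono (hI''.trans hI'I) (fun i hi => g1 i (hI'' hi))) (fun i hi => hCs i (hI'' hi)) (g6.mono hI'' le_rfl)
  have f1' : ∀ w ∈ S, col (f w) ∈ I' ∧ col (f w) ≠ b0 := fun w hw =>
    ⟨hI'' (f1 w hw).1, ne_of_mem_erase (f1 w hw).1⟩
  obtain ⟨y, hy1, hy2⟩ : ∃ y ∈ A i0, ∀ w ∈ S, H.Adj v w ↔ G.Adj y (f w) := by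
    rcases hv with ⟨u, hu, huv⟩ | hv
    · obtain ⟨y, hy, hyu⟩ := g4 _ (f1' u hu).1 (f u) (f1 u hu).2
      refine ⟨y, g3 _ (f1' u hu).1 hy, fun w hw => ?_⟩
      rw [huv w hw]
      constructor
      · rintro rfl; exact hyu
      · intro hyw
        by_contra hwu
        refine g5 _ (f1' u hu).1 _ (f1' w hw).1 ?_ y hy (f w) (f1 w hw).2 hyw
        exact fun h => hwu (f2 hw hu h)
    · have : (C b0).Nonempty := by
        rw [← card_pos]
        have : (0:ℝ) < (C b0).card := lt_of_lt_of_le (by positivity) (hCs b0 hb0)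
        exact_mod_cast this
      obtain ⟨c0, hc0⟩ := this
      obtain ⟨y, hy, _⟩ := g4 b0 hb0 c0 hc0
      refine ⟨y, g3 _ hb0 hy, fun w hw => ?_⟩
      refine iff_of_false (hv w hw) (g5 _ hb0 _ (f1' w hw).1 (f1' w hw).2 y hy _ (f1 w hw).2)
  have hycol : col y = i0 := hcol i0 hi0 y hy1
  have hfv : ∀ w ∈ S, Function.update f v y w = f w := fun w hw =>
    Function.update_of_ne (by rintro rfl; exact hvS hw) _ _
  have hfvv : Function.update f v y v = y := Function.update_self _ _ _
  have hcolne : ∀ w ∈ S, col (f w) ≠ i0 := fun w hw => ne_of_mem_erase (hI' (f1' w hw).1)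
  refine ⟨Function.update f v y, ?_, ?_, ?_⟩
  · intro w hw
    rcases mem_insert.mp hw with rfl | hw
    · rw [hfvv, hycol]; exact ⟨hi0, hy1⟩
    · rw [hfv w hw]
      refine ⟨hI'I (f1' w hw).1, g1 _ (f1' w hw).1 (f1 w hw).2⟩
  · intro w hw w' hw' h
    simp only at h
    rcases mem_insert.mp hw with rfl | hw1 <;> rcases mem_insert.mp hw' with rfl | hw1'
    · rfl
    · rw [hfvv, hfv w' hw1', hycol] at h; exact absurd h.symm (hcolne w' hw1')
    · rw [hfvv, hfv w hw1, hycol] at h; exact absurd h (hcolne w hw1)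
    · rw [hfv w hw1, hfv w' hw1'] at h; exact f2 hw1 hw1' h
  · intro w hw w' hw'
    rcases mem_insert.mp hw with rfl | hw1 <;> rcases mem_insert.mp hw' with rfl | hw1'
    · simp
    · rw [hfvv, hfv w' hw1']; exact hy2 w' hw1'
    · rw [hfvv, hfv w hw1, H.adj_comm, G.adj_comm]; exact hy2 w hw1
    · rw [hfv w hw1, hfv w' hw1']; exact f3 w hw1 w' hw1'

end Forcing

set_option linter.unusedSectionVars false
set_option linter.unusedVariables false
section PhaseOne
open Classical Finset
variable {V : Type} [Fintype V]

lemma cone_cor2 (G : SimpleGraph V) (col : V → ℕ) (I : Finset ℕ) (A : ℕ → Finset V)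
    (hcol : Colored col I A) (hne : ∀ i ∈ I, (A i).Nonempty) (t th lam : ℝ) (hlam : lam ≤ th)
    (hth : 0 < th) (ht : 2 ≤ t) (hexp : Expd G I A t) (hlink : Link G I A lam) 
    (i0 : ℕ) (hi0 : i0 ∈ I) (r : V) (hr : r ∈ A i0) (m : ℕ) (hm1 : 1 ≤ m) (hm : m + 1 ≤ I.card)
    (htm : 4 * m ≤ t) (hthm : (2 * m + 1) * th ≤ 1/2) (hbig : (A i0).card ≤ (t/2)^m) :
    ∃ (J : Finset ℕ) (i : ℕ) (X U : Finset V), J ⊆ I ∧ J.card = m + 1 ∧ i0 ∈ J ∧ i ∈ J ∧ i ≠ i0 ∧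
      X ⊆ A i ∧ th * (A i).card ≤ X.card ∧ 
      (∀ j ∈ I \ J, ((NS G U (A j)).card : ℝ) ≤ 2 * m * th * (A j).card) ∧
      ∀ x ∈ X, ∃ rest : List V, ∃ hl : rest.length = m, IP G (x :: rest) ∧
        (x :: rest)[m]'(by simp [hl]) = r ∧ ((x :: rest).map col).Nodup ∧
        (∀ v ∈ x :: rest, col v ∈ J ∧ v ∈ A (col v)) ∧ ∀ v ∈ rest, v ∈ U := by
  set col' : V → ℕ := fun v => if col v ∈ I ∧ v ∈ A (col v) then col v else (I.sup id + 1) with hcol'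
  have hc : ∀ v, col' v ∈ I → col v ∈ I ∧ v ∈ A (col v) ∧ col' v = col v := by
    intro v hv
    by_cases h : col v ∈ I ∧ v ∈ A (col v)
    · simp only [hcol', h, and_self, if_true]
    · simp only [hcol', if_neg h] at hv
      have := Finset.le_sup (f := id) hv
      simp only [id] at this
      omega
  have hcolC : Colored col' I A := by
    intro i hi v hv
    have := hcol i hi v hv
    simp only [hcol', this, hi, hv, and_self, if_true]
  obtain ⟨J, i, X, U, h1, h2, h3, h4, h5, h6, h7, h8⟩ :=
    cone_cor G col' I A hcolC hne t th lam hlam hth ht hexp hlink i0 hi0 r hr m hm htm hthm hbig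
  have h8' : ∀ x ∈ X, ∃ rest : List V, ∃ hl : rest.length = m, IP G (x :: rest) ∧
        (x :: rest)[m]'(by simp [hl]) = r ∧ ((x :: rest).map col).Nodup ∧
        (∀ v ∈ x :: rest, col v ∈ J ∧ v ∈ A (col v)) ∧ ∀ v ∈ rest, v ∈ U := by
    intro x hx
    obtain ⟨rest, hl, g1, g2, g3, g4, g5⟩ := h8 x hx
    have g6 : ∀ v ∈ x :: rest, col' v = col v := fun v hv => (hc v (h1 (g4 v hv))).2.2
    refine ⟨rest, hl, g1, g2, ?_, ?_, g5⟩
    · rwa [List.map_congr_left g6] at g3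
    · intro v hv
      have := g4 v hv
      exact ⟨by rwa [g6 v hv] at this, (hc v (h1 this)).2.1⟩
  refine ⟨J, i, X, U, h1, h2, h3, h4, ?_, h5, h6, h7, h8'⟩
  rintro rfl
  have hX : X.Nonempty := by
    rw [← card_pos]
    have : (0:ℝ) < (A i).card := by exact_mod_cast card_pos.mpr (hne i hi0)
    have : (0:ℝ) < X.card := lt_of_lt_of_le (by positivity) h6
    exact_mod_cast this
  obtain ⟨x, hx⟩ := hX
  obtain ⟨rest, hl, g1, g2, g3, g4, g5⟩ := h8' x hx
  have e1 : col x = i := hcol i hi0 x (h5 hx)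
  have e2 : col r = i := hcol i hi0 r hr
  rw [List.nodup_iff_injective_get] at g3
  have := @g3 ⟨0, by simp⟩ ⟨m, by simp [hl]⟩ (by simp only [List.get_eq_getElem, List.getElem_map, g2]; simp [e1, e2])
  simp only [Fin.mk.injEq] at this
  omega

lemma Expd.mono {G : SimpleGraph V} {I I' : Finset ℕ} {A : ℕ → Finset V} {t : ℝ} (h : Expd G I A t)
    (hI : I' ⊆ I) : Expd G I' A t := fun i hi j hj => h i (hI hi) j (hI hj)

lemma phase1 (G : SimpleGraph V) (col : V → ℕ) (I : Finset ℕ) (A : ℕ → Finset V)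
    (hcol : Colored col I A) (hne : ∀ i ∈ I, (A i).Nonempty) (t th lam : ℝ) (hlam : lam ≤ th)
    (hth : 0 < th) (ht : 2 ≤ t) (hexp : Expd G I A t) (hlink : Link G I A lam) 
    (T : ℕ) (hT : 1 ≤ T) (hI : 2 * T + 2 ≤ I.card) (htT : 4 * T ≤ t) (hthT : (2 * T + 1) * th ≤ 1/2)
    (hbig : ∀ i ∈ I, ((A i).card : ℝ) ≤ (t/2)^T) :
    ∃ (J : Finset ℕ) (iL iP : ℕ) (X S U : Finset V), J ⊆ I ∧ J.card ≤ 2 * T + 2 ∧ iL ∈ J ∧ iP ∈ J ∧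
      X ⊆ A iL ∧ S ⊆ A iP ∧ th * (A iL).card ≤ X.card ∧ th * (A iP).card ≤ S.card ∧
      (∀ j ∈ I \ J, ((NS G U (A j)).card : ℝ) ≤ 4 * T * th * (A j).card) ∧
      ∀ y ∈ X, ∀ s ∈ S, ∃ (R : List V) (d : ℕ) (hR : R.length = d + 1), 1 ≤ d ∧ d ≤ 2 * T ∧ IP G R ∧
        R[0] = y ∧ R[d] = s ∧ (R.map col).Nodup ∧ (∀ v ∈ R, col v ∈ J ∧ v ∈ A (col v)) ∧
        ∀ v ∈ R, v ∈ U ∨ v = y ∨ v = s := by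
  obtain ⟨i0, hi0⟩ : I.Nonempty := by rw [← card_pos]; omega
  obtain ⟨r, hr⟩ := hne i0 hi0
  obtain ⟨JL, iL, X, UL, a1, a2, a3, a4, a5, a6, a7, a8, a9⟩ := cone_cor2 G col I A hcol hne t th lam hlam hth ht
    hexp hlink i0 hi0 r hr T hT (by omega) htT hthT (hbig i0 hi0)
  set I2 := insert i0 (I \ JL) with hI2
  have hI2s : I2 ⊆ I := insert_subset hi0 sdiff_subset
  have hI2c : T + 1 ≤ I2.card := by
    have h1 : (I \ JL).card ≤ I2.card := card_le_card (subset_insert _ _)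
    rw [card_sdiff_of_subset a1] at h1
    omega
  obtain ⟨JP, iP, S, UP, b1, b2, b3, b4, b5, b6, b7, b8, b9⟩ := cone_cor2 G col I2 A (hcol.mono hI2s (fun _ _ => Subset.refl _))
    (fun i hi => hne i (hI2s hi)) t th lam hlam hth ht
    (hexp.mono hI2s) (hlink.mono hI2s le_rfl) i0 (mem_insert_self _ _) r hr T hT (by omega) htT hthT (hbig i0 hi0)
  refine ⟨JL ∪ JP, iL, iP, X, S, UL ∪ UP, union_subset a1 (b1.trans hI2s), ?_, mem_union_left _ a4, mem_union_right _ b4,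
    a6, b6, a7, b7, ?_, ?_⟩
  · exact (card_union_le _ _).trans (by omega)
  · intro j hj
    simp only [mem_sdiff, mem_union, not_or] at hj
    have h1 := a8 j (mem_sdiff.mpr ⟨hj.1, hj.2.1⟩)
    have h2 := b8 j (mem_sdiff.mpr ⟨mem_insert_of_mem (mem_sdiff.mpr ⟨hj.1, hj.2.1⟩), hj.2.2⟩)
    rw [NS_union]
    have h3 : ((NS G UL (A j) ∪ NS G UP (A j)).card : ℝ) ≤ (NS G UL (A j)).card + (NS G UP (A j)).card := by
      exact_mod_cast card_union_le _ _
    linarith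
  · intro y hy s hs
    obtain ⟨l1, hl1, c1, c2, c3, c4, c5⟩ := a9 y hy
    obtain ⟨l2, hl2, d1, d2, d3, d4, d5⟩ := b9 s hs
    have hcolr : col r = i0 := hcol i0 hi0 r hr
    obtain ⟨R, d, hR, e1, e2, e3, e4, e5, e6, e7⟩ := hit_lemma G col T T hT r (y :: l1) (s :: l2) c1 d1 (by simp [hl1]) (by simp [hl2])
      c2 d2 c3 d3 (by
        intro p hp q hq hpq
        have h1 := (c4 p hp).1
        have h2 := b1 (d4 q hq).1
        rw [← hpq, hI2, mem_insert, mem_sdiff] at h2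
        have h3 : col p = i0 := by tauto
        have hrm : r ∈ y :: l1 := by rw [← c2]; exact List.getElem_mem _
        exact List.inj_on_of_nodup_map c3 hp hrm (h3.trans hcolr.symm))
    refine ⟨R, d, hR, e1, by omega, e3, by simpa using e4, by simpa using e5, e6, ?_, ?_⟩
    · intro v hv
      rcases e7 v hv with h | h
      · exact ⟨mem_union_left _ (c4 v h).1, (c4 v h).2⟩
      · exact ⟨mem_union_right _ (d4 v h).1, (d4 v h).2⟩
    · intro v hv
      rcases e7 v hv with h | h
      · rcases List.mem_cons.mp h with h | h
        · exact Or.inr (Or.inl h)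
        · exact Or.inl (mem_union_left _ (c5 v h))
      · rcases List.mem_cons.mp h with h | h
        · exact Or.inr (Or.inr h)
        · exact Or.inl (mem_union_right _ (d5 v h))

end PhaseOne

set_option linter.unusedSectionVars false
set_option linter.unusedVariables false
section PhaseTwo
open Classical Finset

lemma glue {V : Type} [Fintype V] (G : SimpleGraph V) (col : V → ℕ) (R M : List V) (d m : ℕ) (s : V) (hR : R.length = d + 1)
    (hM : M.length = m + 1) (hm : 1 ≤ m) (hRp : IP G R) (hMp : IP G M) (hRs : R[d] = s) (hMs : M[m] = s)
    (hRc : (R.map col).Nodup) (hMc : (M.map col).Nodup)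
    (hx : ∀ v ∈ R, v ≠ s → ∀ z ∈ M, z ≠ s → ¬ G.Adj v z)
    (hc : ∀ v ∈ R, ∀ z ∈ M, z ≠ s → col v ≠ col z) :
    ∃ (L : List V) (hL : L.length = d + m + 1), IP G L ∧ L[0] = R[0] ∧ L[d + m] = M[0] ∧ (L.map col).Nodup ∧
      ∀ v ∈ L, v ∈ R ∨ v ∈ M := by
  set Mt := (M.take m).reverse with hMt
  have hMtl : Mt.length = m := by simp [hMt, hM]
  have hMtg : ∀ j (hj : j < Mt.length), Mt[j] = M[m - 1 - j]'(by omega) := by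
    intro j hj
    simp only [hMt, List.getElem_reverse, List.getElem_take, List.length_take, hM]
    congr 1
    rw [min_eq_left (by omega)]
  have hMne : ∀ j (hj : j < m), M[j]'(by omega) ≠ s := by
    intro j hj h
    rw [← hMs] at h
    have := (List.nodup_iff_injective_get.mp hMc)
    have h2 := @this ⟨j, by simp; omega⟩ ⟨m, by simp; omega⟩ (by simp [h])
    simp only [Fin.mk.injEq] at h2
    omega
  have hRne : ∀ j (hj : j < d), R[j]'(by omega) ≠ s := by
    intro j hj h
    rw [← hRs] at h
    have := (List.nodup_iff_injective_get.mp hRc)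
    have h2 := @this ⟨j, by simp; omega⟩ ⟨d, by simp; omega⟩ (by simp [h])
    simp only [Fin.mk.injEq] at h2
    omega
  have hMtmem : ∀ v ∈ Mt, v ∈ M ∧ v ≠ s := by
    intro v hv
    obtain ⟨j, hj, rfl⟩ := List.getElem_of_mem hv
    rw [hMtg j hj]
    exact ⟨List.getElem_mem _, hMne _ (by omega)⟩
  refine ⟨R ++ Mt, by simp [hR, hMtl]; omega, ?_, ?_, ?_, ?_, ?_⟩
  · apply IP.append hRp ((hMp.take m).reverse)
    intro i j hi hj
    have hj' : j < m := by rw [← hMtl]; exact hj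
    change G.Adj R[i] Mt[j] ↔ _
    rw [hMtg j hj]
    by_cases hid : i = d
    · subst hid
      rw [hRs, ← hMs, G.adj_comm, hMp _ _ _ _ (by omega)]
      omega
    · have h1 := hx R[i] (List.getElem_mem _) (hRne i (by omega)) (M[m-1-j]'(by omega)) (List.getElem_mem _) (hMne _ (by omega))
      refine iff_of_false h1 (by omega)
  · rw [List.getElem_append_left]
  · rw [List.getElem_append_right (by omega), hMtg]
    congr 1
    omega
  · rw [List.map_append, List.nodup_append]
    refine ⟨hRc, ?_, ?_⟩
    · rw [hMt, List.map_reverse, List.nodup_reverse]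
      exact hMc.sublist ((List.take_sublist m M).map col)
    · intro a ha b hb
      obtain ⟨v, hv, rfl⟩ := List.mem_map.mp ha
      obtain ⟨z, hz, rfl⟩ := List.mem_map.mp hb
      exact hc v hv z (hMtmem z hz).1 (hMtmem z hz).2
  · intro v hv
    rcases List.mem_append.mp hv with h | h
    · exact Or.inl h
    · exact Or.inr (hMtmem v h).1

set_option maxHeartbeats 1000000 in
lemma phase2 (T q : ℕ) (hT : 1 ≤ T) (hq : 3 * T + 2 ≤ q) (K' : ℕ) (hK' : 1 ≤ K') (lam' κ : ℝ) (hlam' : 0 < lam') (hκ : 0 < κ) :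
    ∃ K : ℕ, ∃ lam : ℝ, 0 < lam ∧ ∃ th : ℝ, 0 < th ∧ ∃ N : ℕ, ∀ (V : Type) [Fintype V] (G : SimpleGraph V) (w : ℝ),
      N ≤ Fintype.card V → 0 < w → Coh G w → ∀ (col : V → ℕ) (I : Finset ℕ) (iP : ℕ) (D : ℕ → Finset V) (t : ℝ),
      K ≤ I.card → iP ∉ I → Colored col (insert iP I) D → (∀ i ∈ insert iP I, (D i).Nonempty) →
      2 ≤ t → Expd G (insert iP I) D t → Link G (insert iP I) D lam → 4 * q ≤ t →
      (∀ i ∈ insert iP I, ((D i).card : ℝ) ≤ (t/2)^T) →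
      (∀ i ∈ insert iP I, w ≤ th * (D i).card) → ∀ s ∈ D iP, ∀ dd : V → ℕ, 
      (∀ i ∈ I, ∀ c ∈ D i, dd c ≤ 2 * T) →
      ∃ I' ⊆ I, I'.card = K' ∧ ∃ (J : Finset ℕ) (F : ℕ → Finset V) (d : ℕ), J ⊆ insert iP I ∧ Disjoint J I' ∧
        d ≤ 2 * T ∧ (∀ j ∈ I', F j ⊆ D j) ∧ (∀ j ∈ I', ∀ c ∈ F j, dd c = d) ∧
        (∀ j ∈ I', (Fintype.card V : ℝ) ^ (-κ) / (2 * (2 * T + 1)) * (D j).card ≤ (F j).card) ∧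
        Link G I' F lam' ∧ 
        ∀ b ∈ I', ∀ u ∈ F b, ∃ (x : V) (rest : List V) (hl : rest.length = q - 1 - d), IP G (x :: rest) ∧
          (x :: rest)[q - 1 - d]'(by simp [hl]) = s ∧ ((x :: rest).map col).Nodup ∧
          (∀ v ∈ x :: rest, col v ∈ J ∧ v ∈ D (col v)) ∧
          (∀ v ∈ rest, ∀ a ∈ I', ∀ z ∈ F a, ¬ G.Adj v z) ∧ G.Adj x u ∧
          ∀ a ∈ I', a ≠ b → ∀ z ∈ F a, ¬ G.Adj x z := by
  obtain ⟨K4, lam4, hlam4, N, hP⟩ := private_lemma K' hK' lam' κ hlam' hκ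
  have hT0 : (1:ℝ) ≤ T := by exact_mod_cast hT
  have hq0 : (1:ℝ) ≤ q := by exact_mod_cast (by omega : 1 ≤ q)
  set TT : ℝ := 2 * (2 * T + 1) with hTT
  have hTT0 : 1 ≤ TT := by linarith
  set th : ℝ := 1 / (4 * (q + 1) * TT) with hth
  have hth0 : 0 < th := by positivity
  have hthq : 4 * (q + 1) * TT * th = 1 := by rw [hth]; field_simp
  set lam : ℝ := min th (lam4 / TT) with hlam
  have hlam0 : 0 < lam := lt_min hth0 (by positivity)
  have hlam1 : lam ≤ th := min_le_left _ _
  have hlam2 : lam * TT ≤ lam4 := by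
    have : lam ≤ lam4 / TT := min_le_right _ _
    rwa [le_div_iff₀ (by positivity)] at this
  refine ⟨(2 * T + 1) * (K4 + q), lam, hlam0, th, hth0, N, ?_⟩
  intro V _ G w hn hw hcoh col I iP D t hI hiP hcol hne ht hexp hlink hqt hbig hDw s hs dd hdd
  have hIP : I ⊆ insert iP I := subset_insert _ _
  -- popular distance
  have hpop' : ∀ j, ∃ e ∈ range (2 * T + 1), j ∈ I → ((D j).card : ℝ) ≤ ((2 * T : ℕ) + 1) * ((D j).filter (fun a => dd a = e)).card := by
    intro j
    by_cases hj : j ∈ I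
    · obtain ⟨e, he, h⟩ := popular (D j) dd (2 * T) (fun c hc => by
        rw [mem_range]; have := hdd j hj c hc; omega)
      exact ⟨e, he, fun _ => h⟩
    · exact ⟨0, by simp, fun h => absurd h hj⟩
  choose e he hpe using hpop'
  obtain ⟨d, hd, hcard⟩ := exists_le_card_fiber_of_mul_le_card_of_maps_to (s := I) (t := range (2*T+1)) (f := e) (n := K4 + q)
    (fun a _ => he a) ⟨0, by simp⟩ (by rw [card_range]; exact hI)
  have hd2 : d ≤ 2 * T := by rw [mem_range] at hd; omega
  set I3 := I.filter (fun j => e j = d) with hI3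
  have hI3s : I3 ⊆ I := filter_subset _ _
  set m := q - 1 - d with hm
  have hmT : T + 1 ≤ m := by omega
  have hmq : (m:ℝ) ≤ q := by exact_mod_cast (by omega : m ≤ q)
  have hI3P : insert iP I3 ⊆ insert iP I := insert_subset_insert _ hI3s
  have hiP3 : iP ∉ I3 := fun h => hiP (hI3s h)
  have ht2 : 1 ≤ t / 2 := by linarith
  have hthm1 : q * th * TT ≤ 1/4 := by nlinarith
  obtain ⟨J, iM, X, U, a1, a2, a3, a4, a5, a6, a7, a8, a9⟩ := cone_cor2 G col (insert iP I3) D 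
    (hcol.mono hI3P (fun _ _ => Subset.refl _)) (fun i hi => hne i (hI3P hi)) t th lam hlam1 hth0 ht
    (hexp.mono hI3P) (hlink.mono hI3P le_rfl) iP (mem_insert_self _ _) s hs m (by omega)
    (by rw [card_insert_of_notMem hiP3]; omega) (by linarith) (by
      have h1 : (2 * (m:ℝ) + 1) * th ≤ (2 * (q + 1)) * th := by
        apply mul_le_mul_of_nonneg_right _ hth0.le; linarith
      have h2 : (q + 1) * th ≤ (q+1) * th * TT := le_mul_of_one_le_right (by positivity) hTT0
      linarith)
    ((hbig iP (mem_insert_self _ _)).trans (pow_le_pow_right₀ ht2 (by omega)))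
  set I4 := I3 \ J with hI4
  have hI4s : I4 ⊆ I3 := sdiff_subset
  have hI4I : I4 ⊆ I := hI4s.trans hI3s
  have hI4c : K4 ≤ I4.card := by
    have h1 : I3.card - J.card ≤ I4.card := le_card_sdiff J I3
    omega
  set E : ℕ → Finset V := fun j => (D j).filter (fun a => dd a = d) \ NS G U (D j) with hE
  have hEs : ∀ j, E j ⊆ D j := fun j => sdiff_subset.trans (filter_subset _ _)
  have hEc : ∀ j ∈ I4, 1 / TT * (D j).card ≤ (E j).card := by
    intro j hj
    have h1 := hpe j (hI4I hj)
    rw [(mem_filter.mp (hI4s hj)).2] at h1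
    have h2 := a8 j (mem_sdiff.mpr ⟨mem_insert_of_mem (hI4s hj), (mem_sdiff.mp hj).2⟩)
    have h3 : (((D j).filter (fun a => dd a = d)).card : ℝ) - (NS G U (D j)).card ≤ (E j).card := by
      have := le_card_sdiff (NS G U (D j)) ((D j).filter (fun a => dd a = d))
      have h4 : ((D j).filter (fun a => dd a = d)).card ≤ (E j).card + (NS G U (D j)).card := by
        simp only [hE]; omega
      have h5 : (((D j).filter (fun a => dd a = d)).card : ℝ) ≤ (E j).card + (NS G U (D j)).card := by exact_mod_cast h4
      linarith
    have hD0 : (0:ℝ) ≤ (D j).card := Nat.cast_nonneg _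
    have h4 : 2 * (m:ℝ) * th * (D j).card * TT ≤ 1/2 * (D j).card := by
      have e1 : (m:ℝ) * th * TT ≤ q * th * TT := by gcongr
      calc _ = 2 * ((m:ℝ) * th * TT) * (D j).card := by ring
        _ ≤ _ := mul_le_mul_of_nonneg_right (by linarith) hD0
    rw [div_mul_eq_mul_div, div_le_iff₀ (by positivity)]
    push_cast at h1
    have h5 : 2 * ((D j).card : ℝ) ≤ TT * ((D j).filter (fun a => dd a = d)).card := by rw [hTT]; linarith
    have h6 := mul_le_mul_of_nonneg_right h3 (by linarith : 0 ≤ TT)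
    have h7 := mul_le_mul_of_nonneg_right h2 (by linarith : 0 ≤ TT)
    linarith
  have hlinkE : Link G I4 E lam4 := by
    refine (hlink.mono (hI4I.trans hIP) le_rfl).shrink (t := 1 / TT) (fun i _ => hEs i) hlam0.le ?_ hlam4.le hEc
    rw [mul_one_div, le_div_iff₀ (by positivity)]; exact hlam2
  have hiMI : iM ∈ insert iP I := hI3P (a1 a4)
  obtain ⟨I', hI', hI'c, F, Y, g1, g2, g3, g4, g5, g6⟩ := hP V G w hn hw hcoh X I4 E hI4c
    (fun b hb => (hcol.disjoint hiMI (hIP (hI4I hb)) (by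
      rintro rfl; exact (mem_sdiff.mp hb).2 a4)).mono a6 (hEs b))
    ((hDw iM hiMI).trans a7)
    (fun b hb => by
      refine le_trans ?_ (hEc b hb)
      have := hDw b (hIP (hI4I hb))
      rw [div_mul_eq_mul_div, le_div_iff₀ (by positivity), one_mul]
      have hD0 : (0:ℝ) ≤ (D b).card := Nat.cast_nonneg _
      have e1 : th * (D b).card * (2 * TT) ≤ (D b).card := by
        have : th * (2 * TT) ≤ 1 := by
          have : th * TT ≤ q * (th * TT) := le_mul_of_one_le_left (by positivity) hq0
          linarith
        calc th * (D b).card * (2 * TT) = (th * (2 * TT)) * (D b).card := by ring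
          _ ≤ 1 * (D b).card := mul_le_mul_of_nonneg_right this hD0
          _ = _ := one_mul _
      have e2 := mul_le_mul_of_nonneg_right this (by linarith : 0 ≤ 2 * TT)
      linarith)
    (fun x hx b hb => by
      have h1 := hlink iM hiMI b (hIP (hI4I hb)) (by rintro rfl; exact (mem_sdiff.mp hb).2 a4) x (a6 hx)
      have h2 : ((nb G x (E b)).card : ℝ) ≤ (nb G x (D b)).card := by
        exact_mod_cast card_le_card (nb_mono (hEs b))
      have h3 := hEc b hb
      have hD0 : (0:ℝ) ≤ (D b).card := Nat.cast_nonneg _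
      calc _ ≤ lam * (D b).card := h2.trans h1
        _ = (lam * TT) * (1 / TT * (D b).card) := by field_simp
        _ ≤ lam4 * (1 / TT * (D b).card) := mul_le_mul_of_nonneg_right hlam2 (by positivity)
        _ ≤ _ := mul_le_mul_of_nonneg_left h3 hlam4.le)
    hlinkE
  have hFE : ∀ j ∈ I', F j ⊆ E j := g1
  refine ⟨I', hI'.trans hI4I, hI'c, J, F, d, a1.trans hI3P, ?_, hd2, fun j hj => (g1 j hj).trans (hEs j), ?_, ?_, g6, ?_⟩
  · rw [Finset.disjoint_left]; intro j hj hj'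
    exact (mem_sdiff.mp (hI' hj')).2 hj
  · intro j hj c hc
    exact (mem_filter.mp (mem_sdiff.mp (g1 j hj hc)).1).2
  · intro j hj
    refine le_trans ?_ (g2 j hj)
    have h1 := hEc j (hI' hj)
    calc _ = (Fintype.card V : ℝ) ^ (-κ) * (1 / TT * (D j).card) := by rw [hTT]; ring
      _ ≤ _ := mul_le_mul_of_nonneg_left h1 (by positivity)
  · intro b hb u hu
    obtain ⟨x, hx, hxu⟩ := g4 b hb u hu
    obtain ⟨rest, hl, b1, b2, b3, b4, b5⟩ := a9 x (g3 b hb hx)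
    refine ⟨x, rest, hl, b1, b2, b3, b4, ?_, hxu, fun a ha hab z hz => g5 b hb a ha hab x hx z hz⟩
    intro v hv a ha z hz hvz
    have h1 := mem_sdiff.mp (g1 a ha hz)
    exact h1.2 (mem_NS.mpr ⟨hEs a (g1 a ha hz), v, b5 v hv, hvz⟩)

end PhaseTwo

set_option linter.unusedSectionVars false
set_option linter.unusedVariables false
section Machine
open Classical Finset

/-- combining the two path systems -/
lemma ear_path {V : Type} [Fintype V] (G : SimpleGraph V) (col : V → ℕ) (q d : ℕ) (hd : d + 2 ≤ q) (J1 J2 I2 I' : Finset ℕ) (iP : ℕ)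
    (A F C : ℕ → Finset V) (U : Finset V) (s x y u w' : V) (R rest : List V) (a b : ℕ) (ha : a ∈ I') (hb : b ∈ I') (hab : a ≠ b)
    (hu : u ∈ F a) (hw' : w' ∈ F b)
    (hJ2 : J2 ⊆ insert iP I2) (hJ2' : Disjoint J2 I') (hJ1 : Disjoint J1 I2) (hI' : I' ⊆ I2)
    (hFC : ∀ j ∈ I', F j ⊆ C j)
    (hCA : ∀ j ∈ I2, C j ⊆ A j)
    (hU : ∀ v ∈ U, ∀ j ∈ I2, ∀ z ∈ C j, ¬ G.Adj v z)
    (hyu : G.Adj y u) (hy : ∀ j ∈ I2, j ≠ a → ∀ z ∈ C j, ¬ G.Adj y z)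
    (hR : R.length = d + 1) (hRp : IP G R) (hR0 : R[0] = y) (hRd : R[d] = s) (hRc : (R.map col).Nodup)
    (hRA : ∀ v ∈ R, col v ∈ J1 ∧ v ∈ A (col v)) (hRU : ∀ v ∈ R, v ∈ U ∨ v = y ∨ v = s) (hscol : col s = iP)
    (hl : rest.length = q - 1 - d) (hMp : IP G (x :: rest))
    (hMs : (x :: rest)[q - 1 - d]'(by simp [hl]) = s) (hMc : ((x :: rest).map col).Nodup)
    (hMD : ∀ v ∈ x :: rest, col v ∈ J2 ∧ (col v ∈ I2 → v ∈ C (col v)))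
    (hrest : ∀ v ∈ rest, ∀ a ∈ I', ∀ z ∈ F a, ¬ G.Adj v z) (hxw : G.Adj x w')
    (hx : ∀ a ∈ I', a ≠ b → ∀ z ∈ F a, ¬ G.Adj x z) :
    ∃ (L : List V) (hL : L.length = q), IP G L ∧ (L.map col).Nodup ∧
      (∀ v ∈ L, (col v ∈ J1 ∪ (I2 \ I')) ∧ v ∈ A (col v)) ∧
      ∀ (i : ℕ) (hi : i < q), (G.Adj (L[i]'(by omega)) u ↔ i = 0) ∧ (G.Adj (L[i]'(by omega)) w' ↔ i + 1 = q) ∧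
        ∀ a' ∈ I', a' ≠ a → a' ≠ b → ∀ z ∈ F a', ¬ G.Adj (L[i]'(by omega)) z := by
  have hsM : s ∈ x :: rest := by rw [← hMs]; exact List.getElem_mem _
  have hsR : s ∈ R := by rw [← hRd]; exact List.getElem_mem _
  have hMcol : ∀ z ∈ x :: rest, z ≠ s → col z ∈ I2 \ I' ∧ z ∈ C (col z) := by
    intro z hz hzs
    have h1 := hMD z hz
    have h2 : col z ≠ iP := by
      intro h
      exact hzs (List.inj_on_of_nodup_map hMc hz hsM (h.trans hscol.symm))
    have h3 : col z ∈ I2 := (mem_insert.mp (hJ2 h1.1)).resolve_left h2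
    exact ⟨mem_sdiff.mpr ⟨h3, fun h => Finset.disjoint_left.mp hJ2' h1.1 h⟩, h1.2 h3⟩
  have hsrest : s ∈ rest := by
    have h1 : (x :: rest)[q - 1 - d]'(by simp [hl]) = rest[q - 1 - d - 1]'(by omega) := by
      rw [List.getElem_cons]; simp [show q - 1 - d ≠ 0 by omega]
    rw [← hMs, h1]; exact List.getElem_mem _
  obtain ⟨L, hL, l1, l2, l3, l4, l5⟩ := glue G col R (x :: rest) d (q - 1 - d) s hR (by simp [hl]) (by omega) hRp hMp hRd hMs hRc hMc
    (by
      intro v hv hvs z hz hzs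
      obtain ⟨h1, h2⟩ := hMcol z hz hzs
      rcases hRU v hv with h | h | h
      · exact hU v h _ (mem_sdiff.mp h1).1 z h2
      · subst h; exact hy _ (mem_sdiff.mp h1).1 (by rintro h; rw [h] at h1; exact (mem_sdiff.mp h1).2 ha) z h2
      · exact absurd h hvs)
    (by
      intro v hv z hz hzs h
      obtain ⟨h1, h2⟩ := hMcol z hz hzs
      rw [← h] at h1
      exact Finset.disjoint_left.mp hJ1 (hRA v hv).1 (mem_sdiff.mp h1).1)
  have hLq : L.length = q := by omega
  have hLcat : ∀ v ∈ L, v = y ∨ v = x ∨ ∀ a' ∈ I', ∀ z ∈ F a', ¬ G.Adj v z := by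
    intro v hv
    rcases l5 v hv with h | h
    · rcases hRU v h with h | h | h
      · exact Or.inr (Or.inr fun a' ha' z hz => hU v h a' (hI' ha') z (hFC a' ha' hz))
      · exact Or.inl h
      · subst h; exact Or.inr (Or.inr (hrest v hsrest))
    · rcases List.mem_cons.mp h with h | h
      · exact Or.inr (Or.inl h)
      · exact Or.inr (Or.inr (hrest v h))
  have hLinj : ∀ (i j : ℕ) (hi : i < L.length) (hj : j < L.length), L[i] = L[j] → i = j := by
    intro i j hi hj h
    have := (List.Nodup.of_map _ l4)
    exact (List.Nodup.getElem_inj_iff this).mp h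
  have hL0 : L[0] = y := l2.trans hR0
  have hL1 : L[q - 1]'(by omega) = x := by
    rw [show L[q - 1]'(by omega) = L[d + (q - 1 - d)]'(by omega) from by congr 1; omega, l3]; rfl
  refine ⟨L, hLq, l1, l4, ?_, ?_⟩
  · intro v hv
    by_cases hvs : v = s
    · subst hvs
      exact ⟨mem_union_left _ (hRA v hsR).1, (hRA v hsR).2⟩
    · rcases l5 v hv with h | h
      · exact ⟨mem_union_left _ (hRA v h).1, (hRA v h).2⟩
      · obtain ⟨h1, h2⟩ := hMcol v h hvs
        exact ⟨mem_union_right _ h1, hCA _ (mem_sdiff.mp h1).1 h2⟩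
  · intro i hi
    have hmem : L[i]'(by omega) ∈ L := List.getElem_mem _
    have hyn : ∀ j ∈ I', j ≠ a → ∀ z ∈ F j, ¬ G.Adj y z := fun j hj hja z hz => hy j (hI' hj) hja z (hFC j hj hz)
    refine ⟨⟨?_, ?_⟩, ⟨?_, ?_⟩, ?_⟩
    · intro h
      rcases hLcat _ hmem with h1 | h1 | h1
      · rw [← hL0] at h1; exact hLinj _ _ _ _ h1
      · rw [h1] at h; exact absurd h (hx a ha hab u hu)
      · exact absurd h (h1 a ha u hu)
    · rintro rfl; rw [hL0]; exact hyu
    · intro h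
      rcases hLcat _ hmem with h1 | h1 | h1
      · rw [h1] at h; exact absurd h (hyn b hb hab.symm w' hw')
      · rw [← hL1] at h1; have := hLinj _ _ _ _ h1; omega
      · exact absurd h (h1 b hb w' hw')
    · intro h
      have : i = q - 1 := by omega
      subst this; rw [hL1]; exact hxw
    · intro a' ha' haa hbb z hz
      rcases hLcat _ hmem with h1 | h1 | h1
      · rw [h1]; exact hyn a' ha' haa z hz
      · rw [h1]; exact hx a' ha' hbb z hz
      · exact h1 a' ha' z hz

end Machine

set_option linter.unusedSectionVars false
set_option linter.unusedVariables false
section MachineTwo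
open Classical Finset

lemma half_trans {V : Type} {P Q : Finset V} {a : ℝ} (h : (P.card : ℝ) ≤ 2 * Q.card) (h2 : 2 * a ≤ P.card) : a ≤ Q.card := by
  linarith

set_option maxHeartbeats 4000000 in
lemma machine (c : ℝ) (hc : 0 < c) (T q : ℕ) (hT : 1 ≤ T) (hcT : 1 < c * T) (hq : 3 * T + 2 ≤ q) 
    (K' : ℕ) (hK' : 1 ≤ K') (lam' σ' : ℝ) (hlam' : 0 < lam') (hσ' : 0 < σ') :
    ∃ K : ℕ, ∃ σ : ℝ, 0 < σ ∧ ∃ lam : ℝ, 0 < lam ∧ ∃ N : ℕ, ∀ (V : Type) [Fintype V] (G : SimpleGraph V),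
    N ≤ Fintype.card V → Coh G ((Fintype.card V : ℝ) ^ (1 - c)) →
    ∀ (col : V → ℕ) (I : Finset ℕ) (A : ℕ → Finset V), K ≤ I.card → Colored col I A →
    (∀ i ∈ I, (Fintype.card V : ℝ) ^ (1 - σ) ≤ (A i).card) → Link G I A lam →
    ∃ I' ⊆ I, I'.card = K' ∧ ∃ F : ℕ → Finset V, (∀ j ∈ I', F j ⊆ A j) ∧
      (∀ j ∈ I', (Fintype.card V : ℝ) ^ (1 - σ') ≤ (F j).card) ∧ Link G I' F lam' ∧
      ∀ a ∈ I', ∀ b ∈ I', a ≠ b → ∀ u ∈ F a, ∀ w' ∈ F b, 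
        ∃ (L : List V) (hL : L.length = q), IP G L ∧ (L.map col).Nodup ∧
          (∀ v ∈ L, (col v ∈ I \ I') ∧ v ∈ A (col v)) ∧
          ∀ (i : ℕ) (hi : i < q), (G.Adj (L[i]'(by omega)) u ↔ i = 0) ∧ (G.Adj (L[i]'(by omega)) w' ↔ i + 1 = q) ∧
            ∀ a' ∈ I', a' ≠ a → a' ≠ b → ∀ z ∈ F a', ¬ G.Adj (L[i]'(by omega)) z := by
  have hT0 : (1:ℝ) ≤ T := by exact_mod_cast hT
  -- exponent
  obtain ⟨σ0, hσ0, hσT, hσs⟩ : ∃ σ0 : ℝ, 0 < σ0 ∧ 1 ≤ (c - 9 * σ0) * T ∧ 8 * σ0 ≤ σ' := by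
    refine ⟨min ((c * T - 1) / (9 * T)) (σ' / 8), ?_, ?_, ?_⟩
    · apply lt_min
      · apply div_pos <;> linarith
      · linarith
    · have := min_le_left ((c * T - 1) / (9 * T)) (σ' / 8)
      rw [le_div_iff₀ (by linarith)] at this
      linarith
    · have := min_le_right ((c * T - 1) / (9 * T)) (σ' / 8)
      linarith
  have hcσ : 9 * σ0 < c := by
    by_contra h
    push Not at h
    have : (c - 9 * σ0) * T ≤ 0 := mul_nonpos_of_nonpos_of_nonneg (by linarith) (by linarith)
    linarith
  obtain ⟨K3, lam3, hlam3, th3, hth3, N3, hP2⟩ := phase2 T q hT hq K' hK' lam' σ0 hlam' hσ0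
  set K3' := max K3 1 with hK3'
  set mu : ℝ := lam3 / (8 * (K3' + 1)) with hmu
  have hmu0 : 0 < mu := by positivity
  obtain ⟨K1, lamP, hlamP, N1, hP1⟩ := private_lemma K3' (le_max_right _ _) mu σ0 hmu0 hσ0
  set th1 : ℝ := 1 / (8 * (2 * T + 1)) with hth1
  have hth10 : 0 < th1 := by positivity
  have hth1e : 8 * (2 * T + 1) * th1 = 1 := by rw [hth1]; field_simp
  set lam1 : ℝ := min th1 (min (lamP / 2) (mu * th1)) with hlam1
  have hlam10 : 0 < lam1 := by positivity
  have hl1 : lam1 ≤ th1 := min_le_left _ _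
  have hl2 : 2 * lam1 ≤ lamP := by
    have : lam1 ≤ lamP / 2 := (min_le_right _ _).trans (min_le_left _ _)
    linarith
  have hl3 : lam1 ≤ mu * th1 := (min_le_right _ _).trans (min_le_right _ _)
  set K := K1 + 2 * T + 2 with hK
  set Mc : ℝ := 16 + 4 * K + 4 * (K3' + 1) + 8 * q + 2 / th1 + 2 / th3 + 2 * (2 * T + 1) with hMc
  obtain ⟨N4, hN42, hN4⟩ := large_rpow σ0 hσ0 Mc
  refine ⟨K, σ0, hσ0, lam1 / 2, by positivity, max N1 (max N3 N4), ?_⟩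
  intro V _ G hn hcoh col I0 A0 hI0 hcol0 hA0 hlink0
  set n := Fintype.card V with hnV
  have hnN1 : N1 ≤ n := (le_max_left _ _).trans hn
  have hnN3 : N3 ≤ n := (le_max_left _ _).trans ((le_max_right _ _).trans hn)
  have hnN4 : N4 ≤ n := (le_max_right _ _).trans ((le_max_right _ _).trans hn)
  have hn2 : 2 ≤ n := hN42.trans hnN4
  have hn1 : (1:ℝ) ≤ n := by exact_mod_cast (by omega : 1 ≤ n)
  have hn0 : (0:ℝ) < n := by linarith
  have hz := hN4 n hnN4
  set w : ℝ := (n:ℝ)^(1-c) with hw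
  have hw0 : 0 < w := by positivity
  have hstep : ∀ k x y : ℝ, k ≤ Mc → y ≤ x - σ0 → k * (n:ℝ)^y ≤ (n:ℝ)^x := by
    intro k x y hk hy
    calc k * (n:ℝ)^y ≤ (n:ℝ)^σ0 * (n:ℝ)^(x - σ0) :=
          mul_le_mul (hk.trans hz) (Real.rpow_le_rpow_of_exponent_le hn1 hy) (by positivity) (by positivity)
      _ = (n:ℝ)^x := by rw [← Real.rpow_add hn0]; ring_nf
  have hp1 : 0 < 2 / th1 := by positivity
  have hp3 : 0 < 2 / th3 := by positivity
  have hK0 : (0:ℝ) ≤ K := Nat.cast_nonneg _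
  have hK30 : (0:ℝ) ≤ K3' := Nat.cast_nonneg _
  have hqq0 : (0:ℝ) ≤ q := Nat.cast_nonneg _
  have hM2 : 2 ≤ Mc := by rw [hMc]; linarith
  have hM16 : 16 ≤ Mc := by rw [hMc]; linarith
  have hMK : 4 * K ≤ Mc := by rw [hMc]; linarith
  have hMK3 : 4 * ((K3' : ℝ) + 1) ≤ Mc := by rw [hMc]; linarith
  have hMq : 8 * q ≤ Mc := by rw [hMc]; linarith
  have hMt1 : 2 / th1 ≤ Mc := by rw [hMc]; linarith
  have hMt3 : 2 / th3 ≤ Mc := by rw [hMc]; linarith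
  have hMT : 2 * (2 * T + 1) ≤ Mc := by rw [hMc]; linarith
  -- the expansion parameter
  set t : ℝ := (n:ℝ)^(c - 8 * σ0) with ht
  have ht0 : 0 < t := by positivity
  have htw : ∀ z : ℝ, (n:ℝ)^(1 - 7 * σ0) ≤ z → 8 * t * w ≤ z := by
    intro z hz
    refine le_trans ?_ hz
    calc 8 * t * w = 8 * (n:ℝ)^(c - 8 * σ0 + (1 - c)) := by rw [Real.rpow_add hn0, mul_assoc]
      _ ≤ _ := hstep _ _ _ (by linarith) (by linarith)
  have htz : Mc ≤ t := by
    have := hstep Mc (c - 8 * σ0) 0 le_rfl (by linarith)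
    simpa using this
  have htq : 4 * q ≤ t / 2 := by linarith
  have ht2 : 2 ≤ t / 2 := by linarith
  have htT : 4 * (T:ℝ) ≤ t / 2 := by
    have : (T:ℝ) ≤ q := by exact_mod_cast (by omega : T ≤ q)
    linarith
  have hbig : (n:ℝ) ≤ (t / 2 / 2)^T := by
    have h1 : (n:ℝ)^(c - 9 * σ0) ≤ t / 2 / 2 := by
      have := hstep 4 (c - 8 * σ0) (c - 9 * σ0) (by linarith) (by linarith)
      linarith
    calc (n:ℝ) = (n:ℝ)^(1:ℝ) := (Real.rpow_one _).symm
      _ ≤ (n:ℝ)^((c - 9 * σ0) * T) := Real.rpow_le_rpow_of_exponent_le hn1 hσT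
      _ = ((n:ℝ)^(c - 9 * σ0))^T := by rw [Real.rpow_mul hn0.le, Real.rpow_natCast]
      _ ≤ _ := by gcongr
  have hcardn : ∀ P : Finset V, (P.card : ℝ) ≤ n := fun P => by exact_mod_cast card_le_univ P
  -- restrict the index set and expand
  obtain ⟨I, hII0, hIc⟩ := exists_subset_card_eq hI0
  have hcolI := hcol0.mono hII0 (fun i _ => Subset.refl (A0 i))
  obtain ⟨A, hAs, hAc, hAexp⟩ := expand_lemma G w t hw0 ht0 hcoh col I A0 hcolI
    (fun i hi => htw _ ((Real.rpow_le_rpow_of_exponent_le hn1 (by linarith)).trans (hA0 i (hII0 hi))))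
    (fun i hi => by
      rw [hIc]
      exact (hstep _ _ _ hMK (by linarith)).trans (hA0 i (hII0 hi)))
  have hcol : Colored col I A := hcolI.mono (Subset.refl _) (fun i _ => hAs i)
  have hlink : Link G I A lam1 := by
    refine (hlink0.mono hII0 le_rfl).shrink (t := 1/2) (fun i _ => hAs i) (by linarith) (by linarith) hlam10.le ?_
    intro i hi; have := hAc i hi; linarith
  have hAsz : ∀ i ∈ I, (n:ℝ)^(1 - 2 * σ0) ≤ (A i).card := fun i hi =>
    half_trans (hAc i hi) ((hstep 2 (1 - σ0) _ hM2 (by linarith)).trans (hA0 i (hII0 hi)))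
  have hAne : ∀ i ∈ I, (A i).Nonempty := fun i hi => by
    rw [← card_pos]
    have : (0:ℝ) < (A i).card := lt_of_lt_of_le (by positivity) (hAsz i hi)
    exact_mod_cast this
  -- phase 1
  obtain ⟨J, iL, iP, X, S, U, hJI, hJc, hiL, hiP, hXA, hSA, hXc, hSc, hUc, hpath⟩ :=
    phase1 G col I A hcol hAne (t/2) th1 lam1 hl1 hth10 ht2 hAexp hlink T hT (by omega) htT
      (by linarith) (fun i hi => (hcardn _).trans hbig)
  set B : ℕ → Finset V := fun j => A j \ NS G U (A j) with hB
  have hBs : ∀ j, B j ⊆ A j := fun j => sdiff_subset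
  set I1 := I \ J with hI1
  have hI1I : I1 ⊆ I := sdiff_subset
  have hI1c : K1 ≤ I1.card := by
    rw [hI1, card_sdiff_of_subset hJI]; omega
  have hBc : ∀ j ∈ I1, ((A j).card : ℝ) ≤ 2 * (B j).card := by
    intro j hj
    have h1 := hUc j hj
    have h2 : ((B j).card : ℝ) = (A j).card - (NS G U (A j)).card := by
      simp only [hB]
      rw [card_sdiff_of_subset (NS_subset _ _ _), Nat.cast_sub (card_le_card (NS_subset _ _ _))]
    have h3 : 4 * T * th1 * (A j).card ≤ 1/2 * (A j).card :=
      mul_le_mul_of_nonneg_right (by linarith) (Nat.cast_nonneg _)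
    linarith
  have hBU : ∀ v ∈ U, ∀ j, ∀ z ∈ B j, ¬ G.Adj v z := by
    intro v hv j z hz h
    exact (mem_sdiff.mp hz).2 (mem_NS.mpr ⟨hBs j hz, v, hv, h⟩)
  have hBsz : ∀ j ∈ I1, (n:ℝ)^(1 - 3 * σ0) ≤ (B j).card := fun j hj =>
    half_trans (hBc j hj) ((hstep 2 (1 - 2 * σ0) _ hM2 (by linarith)).trans (hAsz j (hI1I hj)))
  have hthsz : ∀ th : ℝ, 0 < th → 2 / th ≤ Mc → ∀ x y z : ℝ, (n:ℝ)^x ≤ z → y ≤ x - σ0 → (n:ℝ)^y ≤ th * z := by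
    intro th hth hM x y z hz hy
    have h1 := (hstep (2/th) x y hM hy).trans hz
    have h2 : 2 * (n:ℝ)^y ≤ z * th := by
      rwa [div_mul_eq_mul_div, div_le_iff₀ hth] at h1
    have h3 : 0 < (n:ℝ)^y := by positivity
    linarith
  have hXsz : (n:ℝ)^(1 - 3 * σ0) ≤ X.card := 
    (hthsz th1 hth10 hMt1 _ _ _ (hAsz iL (hJI hiL)) (by linarith)).trans hXc
  have hSsz : (n:ℝ)^(1 - 3 * σ0) ≤ S.card := 
    (hthsz th1 hth10 hMt1 _ _ _ (hAsz iP (hJI hiP)) (by linarith)).trans hSc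
  have hneJ : ∀ j ∈ I1, ∀ i ∈ J, i ≠ j := by
    rintro j hj i hi rfl; exact (mem_sdiff.mp hj).2 hi
  -- first private lemma
  obtain ⟨I2, hI2, hI2c, C, Y, g1, g2, g3, g4, g5, g6⟩ := hP1 V G w hnN1 hw0 hcoh X I1 B hI1c
    (fun b hb => (hcol.disjoint (hJI hiL) (hI1I hb) (hneJ b hb _ hiL)).mono hXA (hBs b))
    ((Real.rpow_le_rpow_of_exponent_le hn1 (by linarith)).trans hXsz)
    (fun b hb => (hstep 2 _ _ hM2 (by linarith)).trans (hBsz b hb))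
    (fun x hx b hb => by
      have h1 := hlink iL (hJI hiL) b (hI1I hb) (hneJ b hb _ hiL) x (hXA hx)
      have h2 : ((nb G x (B b)).card : ℝ) ≤ (nb G x (A b)).card := by
        exact_mod_cast card_le_card (nb_mono (hBs b))
      have h3 := hBc b hb
      calc _ ≤ lam1 * (A b).card := h2.trans h1
        _ ≤ lam1 * (2 * (B b).card) := mul_le_mul_of_nonneg_left h3 hlam10.le
        _ = (2 * lam1) * (B b).card := by ring
        _ ≤ _ := mul_le_mul_of_nonneg_right hl2 (Nat.cast_nonneg _))
    (by
      refine (hlink.mono hI1I le_rfl).shrink (t := 1/2) (fun i _ => hBs i) hlam10.le (by linarith) hlamP.le ?_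
      intro i hi; have := hBc i hi; linarith)
  have hI2I : I2 ⊆ I := hI2.trans hI1I
  have hiP2 : iP ∉ I2 := fun h => hneJ _ (hI2 h) _ hiP rfl
  have hCsz : ∀ j ∈ I2, (n:ℝ)^(1 - 4 * σ0) ≤ (C j).card := fun j hj =>
    pow_split hn2 (-σ0) (1 - 3 * σ0) _ (by linarith) _ _ (g2 j hj) (hBsz j (hI2 hj))
  -- the new blockade
  set D0 : ℕ → Finset V := fun j => if j = iP then S else C j with hD0
  have hD0P : D0 iP = S := by simp [hD0]
  have hD0n : ∀ j ∈ I2, D0 j = C j := by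
    intro j hj
    have : j ≠ iP := by rintro rfl; exact hiP2 hj
    simp [hD0, this]
  set I3 := insert iP I2 with hI3
  have hI3c : I3.card = K3' + 1 := by rw [hI3, card_insert_of_notMem hiP2, hI2c]
  have hI3I : I3 ⊆ I := insert_subset (hJI hiP) hI2I
  have hI23 : I2 ⊆ I3 := subset_insert _ _
  have hD0A : ∀ j ∈ I3, D0 j ⊆ A j := by
    intro j hj
    rcases mem_insert.mp hj with rfl | hj
    · rw [hD0P]; exact hSA
    · rw [hD0n j hj]; exact (g1 j hj).trans (hBs j)
  have hcolD0 : Colored col I3 D0 := hcol.mono hI3I hD0A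
  have hD0sz : ∀ j ∈ I3, (n:ℝ)^(1 - 4 * σ0) ≤ (D0 j).card := by
    intro j hj
    rcases mem_insert.mp hj with rfl | hj
    · rw [hD0P]; exact (Real.rpow_le_rpow_of_exponent_le hn1 (by linarith)).trans hSsz
    · rw [hD0n j hj]; exact hCsz j hj
  have hSC : ∀ j ∈ I2, ∑ x ∈ C j, ((nb G x S).card : ℝ) ≤ mu * (C j).card * S.card := by
    intro j hj
    calc _ ≤ ∑ x ∈ C j, (mu * S.card : ℝ) := by
          apply sum_le_sum
          intro x hx
          have h1 := hlink j (hI2I hj) iP (hJI hiP) (hneJ j (hI2 hj) _ hiP).symm x (hBs j (g1 j hj hx))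
          have h2 : ((nb G x S).card : ℝ) ≤ (nb G x (A iP)).card := by
            exact_mod_cast card_le_card (nb_mono hSA)
          calc _ ≤ lam1 * (A iP).card := h2.trans h1
            _ ≤ mu * th1 * (A iP).card := mul_le_mul_of_nonneg_right hl3 (Nat.cast_nonneg _)
            _ = mu * (th1 * (A iP).card) := by ring
            _ ≤ _ := mul_le_mul_of_nonneg_left hSc hmu0.le
      _ = _ := by rw [sum_const, nsmul_eq_mul]; ring
  have hCS : ∀ j ∈ I2, ∑ x ∈ S, ((nb G x (C j)).card : ℝ) ≤ mu * S.card * (C j).card := by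
    intro j hj
    have h1 : ∑ x ∈ S, ((nb G x (C j)).card : ℝ) = ∑ x ∈ C j, ((nb G x S).card : ℝ) := by
      simp only [nb, card_filter, Nat.cast_sum]
      rw [sum_comm]
      refine sum_congr rfl fun x _ => sum_congr rfl fun y _ => ?_
      rw [G.adj_comm]
    rw [h1]; have := hSC j hj; linarith
  obtain ⟨D1, hD1s, hD1c, hD1l⟩ := trim_lemma G I3 D0 mu hmu0 (by
    intro i hi j hj hij
    rcases mem_insert.mp hi with hi' | hi' <;> rcases mem_insert.mp hj with hj' | hj'
    · exact absurd (hi'.trans hj'.symm) hij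
    · rw [hi', hD0P, hD0n j hj']; exact hCS j hj'
    · rw [hj', hD0P, hD0n i hi']; exact hSC i hi'
    · rw [hD0n i hi', hD0n j hj']
      calc _ ≤ ∑ x ∈ C i, (mu * (C j).card : ℝ) := sum_le_sum fun x hx => g6 i hi' j hj' hij x hx
        _ = _ := by rw [sum_const, nsmul_eq_mul]; ring)
  have hD1sz : ∀ j ∈ I3, (n:ℝ)^(1 - 5 * σ0) ≤ (D1 j).card := fun j hj =>
    half_trans (hD1c j hj) ((hstep 2 (1 - 4 * σ0) _ hM2 (by linarith)).trans (hD0sz j hj))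
  have hcolD1 : Colored col I3 D1 := hcolD0.mono (Subset.refl _) (fun i _ => hD1s i)
  obtain ⟨D, hDs, hDc, hDexp⟩ := expand_lemma G w t hw0 ht0 hcoh col I3 D1 hcolD1
    (fun i hi => htw _ ((Real.rpow_le_rpow_of_exponent_le hn1 (by linarith)).trans (hD1sz i hi)))
    (fun i hi => by
      rw [hI3c]; push_cast
      exact (hstep _ _ _ hMK3 (by linarith)).trans (hD1sz i hi))
  have hcolD : Colored col I3 D := hcolD1.mono (Subset.refl _) (fun i _ => hDs i)
  have hDsz : ∀ j ∈ I3, (n:ℝ)^(1 - 6 * σ0) ≤ (D j).card := fun j hj =>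
    half_trans (hDc j hj) ((hstep 2 (1 - 5 * σ0) _ hM2 (by linarith)).trans (hD1sz j hj))
  have hDne : ∀ i ∈ I3, (D i).Nonempty := fun i hi => by
    rw [← card_pos]
    have : (0:ℝ) < (D i).card := lt_of_lt_of_le (by positivity) (hDsz i hi)
    exact_mod_cast this
  have hDlink : Link G I3 D lam3 := by
    refine hD1l.shrink (t := 1/2) (fun i _ => hDs i) (by positivity) ?_ hlam3.le ?_
    · rw [hI3c, hmu]; push_cast
      apply le_of_eq; field_simp; norm_num
    · intro i hi; have := hDc i hi; linarith
  have hDC : ∀ j ∈ I2, D j ⊆ C j := by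
    intro j hj
    have := (hDs j).trans (hD1s j)
    rwa [hD0n j hj] at this
  obtain ⟨s, hs⟩ := hDne iP (mem_insert_self _ _)
  have hsS : s ∈ S := by
    have := (hDs iP).trans (hD1s iP) hs
    rwa [hD0P] at this
  -- paths for every vertex
  have hex : ∀ u : V, ∃ (y : V) (R : List V) (d : ℕ), ∀ j ∈ I2, u ∈ D j → y ∈ Y j ∧ G.Adj y u ∧ ∃ hR : R.length = d + 1,
      d ≤ 2 * T ∧ IP G R ∧ R[0] = y ∧ R[d] = s ∧ (R.map col).Nodup ∧ (∀ v ∈ R, col v ∈ J ∧ v ∈ A (col v)) ∧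
        ∀ v ∈ R, v ∈ U ∨ v = y ∨ v = s := by
    intro u
    by_cases hu : ∃ j ∈ I2, u ∈ D j
    · obtain ⟨j, hj, huj⟩ := hu
      obtain ⟨y, hy, hyu⟩ := g4 j hj u (hDC j hj huj)
      obtain ⟨R, d, hR, r1, r2, r3, r4, r5, r6, r7, r8⟩ := hpath y (g3 j hj hy) s hsS
      refine ⟨y, R, d, fun j' hj' huj' => ?_⟩
      have : j' = j := (hcolD j' (hI23 hj') u huj').symm.trans (hcolD j (hI23 hj) u huj)
      subst this
      exact ⟨hy, hyu, hR, r2, r3, r4, r5, r6, r7, r8⟩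
    · push Not at hu
      exact ⟨u, [], 0, fun j hj huj => absurd huj (hu j hj)⟩
  choose yy RR dd hsp using hex
  obtain ⟨I', hI', hI'c, J2, F, d, f1, f2, f3, f4, f5, f6, f7, f8⟩ := hP2 V G w hnN3 hw0 hcoh col I2 iP D (t/2)
    (by rw [hI2c]; exact le_max_left _ _) hiP2 hcolD hDne ht2 hDexp hDlink htq (fun i hi => (hcardn _).trans hbig)
    (fun i hi => hthsz th3 hth3 hMt3 _ _ _ (hDsz i hi) (by linarith)) s hs dd
    (fun i hi u hu => (hsp u i hi hu).2.2.2.1)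
  have hI'I : I' ⊆ I := hI'.trans hI2I
  have hFC : ∀ j ∈ I', F j ⊆ C j := fun j hj => (f4 j hj).trans (hDC j (hI' hj))
  refine ⟨I', hI'I.trans hII0, hI'c, F, fun j hj => (hFC j hj).trans ((g1 j (hI' hj)).trans ((hBs j).trans (hAs j))), ?_, f7, ?_⟩
  · intro j hj
    have h1 := f6 j hj
    have h2 := hDsz j (hI23 (hI' hj))
    have h3 : (n:ℝ)^(-σ0 + (1 - 6 * σ0)) ≤ (n:ℝ)^(-σ0) * (D j).card := by
      rw [Real.rpow_add hn0]; exact mul_le_mul_of_nonneg_left h2 (by positivity)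
    have h4 := hstep (2 * (2 * T + 1)) (-σ0 + (1 - 6 * σ0)) (1 - σ') hMT (by linarith)
    have h5 : (n:ℝ)^(1 - σ') ≤ ((n:ℝ)^(-σ0) * (D j).card) / (2 * (2 * T + 1)) := by
      rw [le_div_iff₀ (by positivity)]; linarith
    refine h5.trans (le_trans (le_of_eq ?_) h1)
    ring
  · intro a ha b hb hab u hu w' hw'
    obtain ⟨x, rest, hl, x1, x2, x3, x4, x5, x6, x7⟩ := f8 b hb w' hw'
    obtain ⟨y1, y2, hR, y3, y4, y5, y6, y7, y8, y9⟩ := hsp u a (hI' ha) (f4 a ha hu)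
    have hddu := f5 a ha u hu
    rw [hddu] at hR
    simp only [hddu] at y6
    obtain ⟨L, hL, l1, l2, l3, l4⟩ := ear_path G col q d (by omega) J J2 I2 I' iP A F C U s x (yy u) u w' (RR u) rest a b ha hb hab hu hw'
      f1 f2 (by
        rw [Finset.disjoint_left]; intro j hj hj'
        exact hneJ j (hI2 hj') j hj rfl) hI' hFC (fun j hj => (g1 j hj).trans (hBs j))
      (fun v hv j hj z hz => hBU v hv j z (g1 j hj hz)) y2
      (fun j hj hja z hz => g5 a (hI' ha) j hj hja _ y1 z hz)
      hR y4 y5 y6 y7 y8 y9 (hcolD iP (mem_insert_self _ _) s hs) hl x1 x2 x3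
      (fun v hv => ⟨(x4 v hv).1, fun h => hDC _ h (x4 v hv).2⟩) x5 x6 x7
    refine ⟨L, hL, l1, l2, ?_, l4⟩
    intro v hv
    obtain ⟨h1, h2⟩ := l3 v hv
    refine ⟨?_, hAs _ h2⟩
    rcases mem_union.mp h1 with h | h
    · exact mem_sdiff.mpr ⟨hII0 (hJI h), fun h' => hneJ _ (hI2 (hI' h')) _ h rfl⟩
    · exact mem_sdiff.mpr ⟨hII0 (hI2I (mem_sdiff.mp h).1), (mem_sdiff.mp h).2⟩

end MachineTwo

set_option linter.unusedSectionVars false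
set_option linter.unusedVariables false
section Ear
open Classical Finset

set_option maxHeartbeats 2000000 in
lemma Frc.ear {W : Type*} (H : SimpleGraph W) (c : ℝ) (hc : 0 < c) (T q : ℕ) (hT : 1 ≤ T)
    (hcT : 1 < c * T) (hq : 3 * T + 2 ≤ q) (S : Finset W) (x : ℕ → W)
    (hinj : ∀ i ≤ q + 1, ∀ j ≤ q + 1, x i = x j → i = j)
    (hx0 : x 0 ∈ S) (hx1 : x (q + 1) ∈ S) (hxS : ∀ i < q, x (i + 1) ∉ S)
    (had : ∀ i < q, ∀ w, (w ∈ S ∨ ∃ j < q, w = x (j + 1)) →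
      (H.Adj (x (i + 1)) w ↔ w = x i ∨ w = x (i + 2)))
    (hF : Frc H c S) : Frc H c (S ∪ (range q).image (fun i => x (i + 1))) := by
  obtain ⟨K1, σ1, hσ1, lam1, hlam1, N1, hF⟩ := hF
  obtain ⟨K, σ, hσ, lam, hlam, N, hM⟩ := machine c hc T q hT hcT hq (max K1 1) (le_max_right _ _) lam1 σ1 hlam1 hσ1
  refine ⟨K, σ, hσ, lam, hlam, max N N1, ?_⟩
  intro V _ G hn hcoh col I A hI hcol hA hl
  obtain ⟨I', hI'I, hI'c, F, hFA, hFs, hFl, hP⟩ := hM V G ((le_max_left _ _).trans hn) hcoh col I A hI hcol hA hl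
  obtain ⟨f, f1, f2, f3⟩ := hF V G ((le_max_right _ _).trans hn) hcoh col I' F (by rw [hI'c]; exact le_max_left _ _)
    (hcol.mono hI'I hFA) hFs hFl
  have hne : x 0 ≠ x (q + 1) := fun h => by have := hinj 0 (by omega) (q+1) le_rfl h; omega
  have hab : col (f (x 0)) ≠ col (f (x (q+1))) := fun h => hne (f2 hx0 hx1 h)
  obtain ⟨L, hL, hIP, hnd, hLm, hLa⟩ := hP _ (f1 _ hx0).1 _ (f1 _ hx1).1 hab _ (f1 _ hx0).2 _ (f1 _ hx1).2
  set g : ℕ → V := fun i => if hi : i < q then L[i]'(by omega) else f (x 0) with hg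
  have hgi : ∀ i (hi : i < q), g i = L[i]'(by omega) := fun i hi => by simp [hg, hi]
  set f' : W → V := fun w => if h : ∃ i, i < q ∧ w = x (i + 1) then g h.choose else f w with hf'
  have hf'x : ∀ i, i < q → f' (x (i+1)) = g i := by
    intro i hi
    have h : ∃ j, j < q ∧ x (i+1) = x (j + 1) := ⟨i, hi, rfl⟩
    have h2 := h.choose_spec
    have : h.choose = i := by
      have := hinj _ (by omega) _ (by omega) h2.2
      omega
    simp only [hf']
    rw [dif_pos h, this]
  have hf'S : ∀ w ∈ S, f' w = f w := by
    intro w hw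
    simp only [hf']
    rw [dif_neg]
    rintro ⟨i, hi, rfl⟩
    exact hxS i hi hw
  have hgm : ∀ i, i < q → col (g i) ∈ I \ I' ∧ g i ∈ A (col (g i)) := by
    intro i hi
    rw [hgi i hi]
    exact hLm _ (List.getElem_mem _)
  have hginj : ∀ i < q, ∀ j < q, col (g i) = col (g j) → i = j := by
    intro i hi j hj h
    rw [hgi i hi, hgi j hj] at h
    have := (List.Nodup.getElem_inj_iff hnd (i := i) (j := j) (hi := by simp; omega) (hj := by simp; omega)).mp
      (by simpa using h)
    exact this
  have hgg : ∀ i < q, ∀ j < q, (G.Adj (g i) (g j) ↔ (j = i + 1 ∨ i = j + 1)) := by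
    intro i hi j hj
    rw [hgi i hi, hgi j hj]
    rcases lt_trichotomy i j with h | h | h
    · rw [hIP i j (by omega) (by omega) h]; omega
    · subst h; simp
    · rw [G.adj_comm, hIP j i (by omega) (by omega) h]; omega
  have hgS : ∀ i < q, ∀ w ∈ S, (H.Adj (x (i+1)) w ↔ G.Adj (g i) (f w)) := by
    intro i hi w hw
    rw [had i hi w (Or.inl hw), hgi i hi]
    obtain ⟨h1, h2, h3⟩ := hLa i hi
    by_cases hw0 : w = x 0
    · subst hw0
      rw [h1]
      constructor
      · rintro (h | h)
        · exact (hinj _ (by omega) _ (by omega) h).symm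
        · have := hinj _ (by omega) _ (by omega) h; omega
      · rintro rfl; left; rfl
    by_cases hw1 : w = x (q+1)
    · subst hw1
      rw [h2]
      constructor
      · rintro (h | h)
        · have := hinj _ (by omega) _ (by omega) h; omega
        · have := hinj _ (by omega) _ (by omega) h; omega
      · rintro h; right; congr 1; omega
    · refine iff_of_false ?_ ?_
      · rintro (h | h)
        · rcases Nat.eq_zero_or_pos i with rfl | hi0
          · exact hw0 h
          · refine hxS (i-1) (by omega) ?_
            rw [show i - 1 + 1 = i by omega, ← h]; exact hw
        · by_cases hiq : i + 1 = q
          · exact hw1 (by rw [h]; congr 1; omega)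
          · exact hxS (i+1) (by omega) (h ▸ hw)
      · exact h3 _ (f1 w hw).1 (fun h => hw0 (f2 hw hx0 h)) (fun h => hw1 (f2 hw hx1 h)) _ (f1 w hw).2
  have hxx : ∀ i < q, ∀ j < q, (H.Adj (x (i+1)) (x (j+1)) ↔ (j = i + 1 ∨ i = j + 1)) := by
    intro i hi j hj
    rw [had i hi _ (Or.inr ⟨j, hj, rfl⟩)]
    constructor
    · rintro (h | h)
      · have := hinj _ (by omega) _ (by omega) h; omega
      · have := hinj _ (by omega) _ (by omega) h; omega
    · rintro (rfl | rfl)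
      · right; rfl
      · left; rfl
  have hcase : ∀ w ∈ S ∪ (range q).image (fun i => x (i + 1)), w ∈ S ∨ ∃ i < q, w = x (i+1) := by
    intro w hw
    simp only [mem_union, mem_image, mem_range] at hw
    rcases hw with h | ⟨i, hi, h⟩
    · exact Or.inl h
    · exact Or.inr ⟨i, hi, h.symm⟩
  refine ⟨f', ?_, ?_, ?_⟩
  · intro w hw
    rcases hcase w hw with h | ⟨i, hi, rfl⟩
    · rw [hf'S w h]
      exact ⟨hI'I (f1 w h).1, hFA _ (f1 w h).1 (f1 w h).2⟩
    · rw [hf'x i hi]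
      exact ⟨(mem_sdiff.mp (hgm i hi).1).1, (hgm i hi).2⟩
  · intro w hw w' hw' h
    simp only at h
    rcases hcase w hw with h1 | ⟨i, hi, rfl⟩ <;> rcases hcase w' hw' with h2 | ⟨j, hj, rfl⟩
    · rw [hf'S w h1, hf'S w' h2] at h; exact f2 h1 h2 h
    · rw [hf'S w h1, hf'x j hj] at h
      exact absurd (h ▸ (f1 w h1).1) (mem_sdiff.mp (hgm j hj).1).2
    · rw [hf'S w' h2, hf'x i hi] at h
      exact absurd (h.symm ▸ (f1 w' h2).1) (mem_sdiff.mp (hgm i hi).1).2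
    · rw [hf'x i hi, hf'x j hj] at h
      rw [hginj i hi j hj h]
  · intro w hw w' hw'
    rcases hcase w hw with h1 | ⟨i, hi, rfl⟩ <;> rcases hcase w' hw' with h2 | ⟨j, hj, rfl⟩
    · rw [hf'S w h1, hf'S w' h2]; exact f3 w h1 w' h2
    · rw [hf'S w h1, hf'x j hj, H.adj_comm, G.adj_comm]; exact hgS j hj w h1
    · rw [hf'S w' h2, hf'x i hi]; exact hgS i hi w' h2
    · rw [hf'x i hi, hf'x j hj, hgg i hi j hj, hxx i hi j hj]

end Ear

set_option linter.unusedSectionVars false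
set_option linter.unusedVariables false
section HSide
open Classical Finset
variable {W : Type} [Fintype W]

lemma cong_sparse (H : SimpleGraph W) (δ : ℝ) (h : congestion H ≤ δ) (Z : Finset W) (hZ : Z.Nonempty) (hδ : δ < 1):
    (1 - δ) * (∑ v ∈ Z, ((nb H v Z).card : ℝ)) ≤ 2 * ((Z.card : ℝ) - 1) := by
  have hZ1 : (1:ℝ) ≤ Z.card := by exact_mod_cast hZ.card_pos
  set J : H.Subgraph := (⊤ : H.Subgraph).induce (Z : Set W) with hJ
  have hv : J.verts = (Z : Set W) := rfl
  have hdeg : ∀ v, J.spanningCoe.degree v = if v ∈ Z then (nb H v Z).card else 0 := by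
    intro v
    rw [← card_neighborFinset_eq_degree]
    split_ifs with hvZ
    · congr 1
      ext w
      simp [mem_nb, hJ, hvZ]
    · rw [card_eq_zero]
      ext w
      simp [hJ, hvZ]
  have hsum := J.spanningCoe.sum_degrees_eq_twice_card_edges
  rw [sum_congr rfl (fun v _ => hdeg v), sum_ite_mem, univ_inter] at hsum
  have hE : J.spanningCoe.edgeFinset.card = J.edgeSet.ncard := by
    rw [← Subgraph.edgeSet_spanningCoe, ← Set.ncard_coe_finset, coe_edgeFinset]
  rw [hE] at hsum
  have hsum' : (∑ v ∈ Z, ((nb H v Z).card : ℝ)) = 2 * (J.edgeSet.ncard : ℝ) := by exact_mod_cast hsum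
  rw [hsum']
  by_cases hne : J.edgeSet.Nonempty
  · have hpos : (0:ℝ) < J.edgeSet.ncard := by
      exact_mod_cast (Set.ncard_pos (Set.toFinite _)).mpr hne
    have hle : 1 - ((J.verts.ncard : ℝ) - 1) / (J.edgeSet.ncard : ℝ) ≤ δ := by
      refine le_trans (le_csSup ?_ ?_) h
      · refine ⟨1, ?_⟩
        rintro x (hx | ⟨J', hJ', rfl⟩)
        · rw [Set.mem_singleton_iff] at hx; rw [hx]; norm_num
        · have : 1 ≤ J'.verts.ncard := by
            obtain ⟨e, he⟩ := hJ'
            induction e with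
            | h a b =>
              have : a ∈ J'.verts := J'.edge_vert (Subgraph.mem_edgeSet.mp he)
              exact (Set.ncard_pos (Set.toFinite _)).mpr ⟨a, this⟩
          have h1 : (1:ℝ) ≤ J'.verts.ncard := by exact_mod_cast this
          have : 0 ≤ ((J'.verts.ncard : ℝ) - 1) / (J'.edgeSet.ncard : ℝ) :=
            div_nonneg (by linarith) (Nat.cast_nonneg _)
          linarith
      · exact Or.inr ⟨J, hne, rfl⟩
    rw [hv, Set.ncard_coe_finset] at hle
    have h2 : 1 - δ ≤ ((Z.card : ℝ) - 1) / (J.edgeSet.ncard : ℝ) := by linarith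
    rw [le_div_iff₀ hpos] at h2
    linarith
  · rw [Set.not_nonempty_iff_eq_empty] at hne
    rw [hne, Set.ncard_empty]
    simp only [Nat.cast_zero]
    linarith

/-- walk step on darts -/
def stp (other : W → W → W) (d : W × W) : W × W := (d.2, other d.2 d.1)

lemma stp_fst_succ (other : W → W → W) (d : W × W) (i : ℕ) :
    ((stp other)^[i] d).2 = ((stp other)^[i+1] d).1 := by
  rw [Function.iterate_succ_apply']; rfl

lemma stp_rev (H : SimpleGraph W) (S : Finset W) (other : W → W → W)
    (ho : ∀ a ∈ S, ∀ b, other a b ∈ nb H a S ∧ other a b ≠ b) (d : W × W)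
    (hd : d.1 ∈ S ∧ d.2 ∈ S ∧ H.Adj d.1 d.2) 
    (hd' : ∀ k, ((stp other)^[k] d).1 ∈ S ∧ ((stp other)^[k] d).2 ∈ S ∧ 
      H.Adj ((stp other)^[k] d).1 ((stp other)^[k] d).2) (k : ℕ) 
    (h2 : ∀ i, 1 ≤ i → i ≤ k → (nb H ((stp other)^[i] d).1 S).card = 2) :
    (stp other)^[k] (((stp other)^[k] d).swap) = d.swap := by
  induction k with
  | zero => rfl
  | succ k ih =>
    rw [Function.iterate_succ_apply]
    rw [← ih (fun i h1 h => h2 i h1 (by omega))]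
    congr 1
    set e := (stp other)^[k] d with he
    have hs : (stp other)^[k+1] d = (e.2, other e.2 e.1) := by rw [Function.iterate_succ_apply']; rfl
    rw [hs]
    have hc := h2 (k+1) (by omega) le_rfl
    rw [hs] at hc
    simp only at hc
    have he1 := hd' k
    rw [← he] at he1
    simp only [stp, Prod.swap]
    congr 1
    obtain ⟨o1, o2⟩ := ho e.2 he1.2.1 e.1
    obtain ⟨o3, o4⟩ := ho e.2 he1.2.1 (other e.2 e.1)
    have hm : e.1 ∈ nb H e.2 S := mem_nb.mpr ⟨he1.1, he1.2.2.symm⟩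
    by_contra hne
    have : ({e.1, other e.2 e.1, other e.2 (other e.2 e.1)} : Finset W) ⊆ nb H e.2 S := by
      intro y hy
      simp only [mem_insert, mem_singleton] at hy
      rcases hy with rfl | rfl | rfl <;> assumption
    have h3 := card_le_card this
    rw [card_eq_three.mpr ⟨_, _, _, o2.symm, Ne.symm hne, o4.symm, rfl⟩] at h3
    omega

set_option maxHeartbeats 1000000 in
lemma long_path (H : SimpleGraph W) (S : Finset W) (hS : S.Nonempty) (δ : ℝ) (q : ℕ) (hq : 1 ≤ q)
    (hδ : 0 ≤ δ) (hqδ : 3 * q * δ ≤ 1)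
    (hsp : ∀ Z : Finset W, Z.Nonempty →
      (1 - δ) * (∑ v ∈ Z, ((nb H v Z).card : ℝ)) ≤ 2 * ((Z.card : ℝ) - 1))
    (hdeg : ∀ v ∈ S, 2 ≤ (nb H v S).card) :
    ∃ x : ℕ → W, (∀ i, x i ∈ S) ∧ (∀ i ≤ q + 1, ∀ j ≤ q + 1, x i = x j → i = j) ∧
      ∀ i < q, ∀ w ∈ S, (H.Adj (x (i+1)) w ↔ w = x i ∨ w = x (i+2)) := by
  have hex : ∀ a b, ∃ o, a ∈ S → o ∈ nb H a S ∧ o ≠ b := by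
    intro a b
    by_cases ha : a ∈ S
    · obtain ⟨o, ho1, ho2⟩ := exists_mem_ne (by have := hdeg a ha; omega : 1 < (nb H a S).card) b
      exact ⟨o, fun _ => ⟨ho1, ho2⟩⟩
    · exact ⟨a, fun h => absurd h ha⟩
  choose other ho' using hex
  have ho : ∀ a ∈ S, ∀ b, other a b ∈ nb H a S ∧ other a b ≠ b := fun a ha b => ho' a b ha
  set Dt : Finset (W × W) := (S ×ˢ S).filter (fun d => H.Adj d.1 d.2) with hDt
  have hmem : ∀ d, d ∈ Dt ↔ d.1 ∈ S ∧ d.2 ∈ S ∧ H.Adj d.1 d.2 := by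
    intro d; simp [hDt, and_assoc]
  have hstp : ∀ d ∈ Dt, stp other d ∈ Dt := by
    intro d hd
    rw [hmem] at *
    obtain ⟨o1, o2⟩ := ho d.2 hd.2.1 d.1
    rw [mem_nb] at o1
    exact ⟨hd.2.1, o1.1, o1.2⟩
  have hit : ∀ d ∈ Dt, ∀ k, (stp other)^[k] d ∈ Dt := by
    intro d hd k
    induction k with
    | zero => exact hd
    | succ k ih => rw [Function.iterate_succ_apply']; exact hstp _ ih
  have hDc : ∀ P : W → Prop, (Dt.filter (fun d => P d.1)).card = ∑ v ∈ S, if P v then (nb H v S).card else 0 := by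
    intro P
    rw [hDt, filter_filter, card_filter, sum_product]
    refine sum_congr rfl fun v hv => ?_
    split_ifs with hP
    · rw [nb, card_filter]
      refine sum_congr rfl fun w hw => ?_
      simp [hP]
    · simp [hP]
  -- step A
  obtain ⟨d, hd, hd2⟩ : ∃ d ∈ Dt, ∀ i, 1 ≤ i → i ≤ q → (nb H ((stp other)^[i] d).1 S).card = 2 := by
    by_contra hcon
    push Not at hcon
    set St := Dt.filter (fun d => 3 ≤ (nb H d.1 S).card) with hSt
    have hsub : Dt ⊆ (St ×ˢ range q).image (fun p => ((stp other)^[p.2] p.1).swap) := by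
      intro d hd
      have hc := hcon d hd
      have hm := Nat.find_spec hc
      have hmin := fun m hm => Nat.find_min hc (m := m) hm
      set i := Nat.find hc with hi
      obtain ⟨h1, h2, h3⟩ := hm
      obtain ⟨k, hk⟩ : ∃ k, i = k + 1 := ⟨i - 1, by omega⟩
      have hrev := stp_rev H S other ho d ((hmem d).mp hd) (fun k => (hmem _).mp (hit d hd k)) k (by
        intro j hj1 hj2
        by_contra hne
        exact hmin j (by omega) ⟨hj1, by omega, hne⟩)
      rw [mem_image]
      refine ⟨(((stp other)^[k] d).swap, k), ?_, ?_⟩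
      · rw [mem_product]
        refine ⟨?_, by simp; omega⟩
        have hmk := (hmem _).mp (hit d hd k)
        rw [hSt, mem_filter, hmem]
        refine ⟨⟨hmk.2.1, hmk.1, hmk.2.2.symm⟩, ?_⟩
        have : ((stp other)^[k] d).swap.1 = ((stp other)^[i] d).1 := by
          rw [hk, ← stp_fst_succ]; rfl
        rw [this]
        have := hdeg _ ((hmem _).mp (hit d hd i)).1
        omega
      · simp only; rw [hrev]; simp
    have hle := (card_le_card hsub).trans card_image_le
    rw [card_product, card_range] at hle
    have hDt1 : Dt.card = ∑ v ∈ S, (nb H v S).card := by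
      have := hDc (fun _ => True)
      simpa using this
    have hSt1 : St.card + 6 * S.card ≤ 3 * Dt.card := by
      have hStc : St.card = ∑ v ∈ S, if 3 ≤ (nb H v S).card then (nb H v S).card else 0 := by
        rw [hSt]
        convert hDc (fun v => 3 ≤ (nb H v S).card) using 1
        · congr!
        · congr!
      rw [hStc, hDt1, mul_sum, mul_comm 6, ← smul_eq_mul, ← sum_const, ← sum_add_distrib]
      refine sum_le_sum fun v hv => ?_
      have := hdeg v hv
      split_ifs <;> omega
    have h1 := hsp S hS
    have hDt1' : (Dt.card : ℝ) = ∑ v ∈ S, ((nb H v S).card : ℝ) := by exact_mod_cast hDt1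
    rw [← hDt1'] at h1
    have h2 : (St.card : ℝ) + 6 * S.card ≤ 3 * Dt.card := by exact_mod_cast hSt1
    have h3 : (Dt.card : ℝ) ≤ St.card * q := by exact_mod_cast hle
    have hq1 : (1:ℝ) ≤ q := by exact_mod_cast hq
    have h4 : (St.card : ℝ) ≤ 3 * δ * Dt.card - 6 := by nlinarith
    have h5 : (Dt.card : ℝ) ≤ (3 * δ * Dt.card - 6) * q := h3.trans (mul_le_mul_of_nonneg_right h4 (by linarith))
    have h6 : (3 * q * δ) * (Dt.card : ℝ) ≤ 1 * Dt.card := mul_le_mul_of_nonneg_right hqδ (Nat.cast_nonneg _)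
    nlinarith
  set z : ℕ → W := fun i => ((stp other)^[i] d).1 with hz
  have hz2 : ∀ i, ((stp other)^[i] d).2 = z (i+1) := fun i => stp_fst_succ other d i
  have hzS : ∀ i, z i ∈ S := fun i => ((hmem _).mp (hit d hd i)).1
  have hzA : ∀ i, H.Adj (z i) (z (i+1)) := fun i => by
    rw [← hz2]; exact ((hmem _).mp (hit d hd i)).2.2
  have hzn : ∀ i, z (i+2) ≠ z i := by
    intro i
    have : z (i+2) = other (z (i+1)) (z i) := by
      rw [← hz2 (i+1), Function.iterate_succ_apply']
      simp only [stp]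
      rw [hz2]
    rw [this]
    exact (ho _ (hzS _) _).2
  refine ⟨z, hzS, ?_, ?_⟩
  · by_contra hcon
    have hex : ∃ j, j ≤ q + 1 ∧ ∃ i < j, z i = z j := by
      push Not at hcon
      obtain ⟨i, hi, j, hj, hij, hne⟩ := hcon
      rcases lt_or_gt_of_ne hne with h | h
      · exact ⟨j, hj, i, h, hij⟩
      · exact ⟨i, hi, j, h, hij.symm⟩
    have hm := Nat.find_spec hex
    have hmin := fun m hm => Nat.find_min hex (m := m) hm
    set j := Nat.find hex with hj
    obtain ⟨hjq, i, hij, hzij⟩ := hm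
    have hinj : ∀ a < j, ∀ b < j, z a = z b → a = b := by
      intro a ha b hb hab
      by_contra hne
      rcases lt_or_gt_of_ne hne with h | h
      · exact hmin b hb ⟨by omega, a, h, hab⟩
      · exact hmin a ha ⟨by omega, b, h, hab.symm⟩
    have hr1 : j ≠ i + 1 := by
      intro h
      have := hzA i
      rw [← h, ← hzij] at this
      exact this.ne rfl
    have hr2 : j ≠ i + 2 := by
      intro h
      exact hzn i (by rw [← h, hzij])
    set Z := (Ico i j).image z with hZ
    have hZc : Z.card = j - i := by
      rw [hZ, card_image_of_injOn, Nat.card_Ico]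
      intro a ha b hb hab
      simp only [coe_Ico, Set.mem_Ico] at ha hb
      exact hinj a ha.2 b hb.2 hab
    have hmZ : ∀ k, i ≤ k → k ≤ j → z k ∈ Z := by
      intro k h1 h2
      rw [hZ, mem_image]
      rcases Nat.lt_or_ge k j with h | h
      · exact ⟨k, by simp; omega, rfl⟩
      · exact ⟨i, by simp; omega, by rw [hzij]; congr 1; omega⟩
    have hd2Z : ∀ v ∈ Z, 2 ≤ (nb H v Z).card := by
      intro v hv
      rw [hZ, mem_image] at hv
      obtain ⟨k, hk, rfl⟩ := hv
      rw [mem_Ico] at hk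
      obtain ⟨p, hp1, hp2, hp3⟩ : ∃ p ∈ Z, H.Adj (z k) p ∧ p ≠ z (k+1) := by
        by_cases hki : k = i
        · refine ⟨z (j-1), hmZ _ (by omega) (by omega), ?_, ?_⟩
          · have := hzA (j-1)
            rw [show j - 1 + 1 = j by omega, ← hzij] at this
            rw [hki]; exact this.symm
          · intro h
            have := hinj _ (by omega) _ (by omega) h
            omega
        · refine ⟨z (k-1), hmZ _ (by omega) (by omega), ?_, ?_⟩
          · have := hzA (k-1)
            rw [show k - 1 + 1 = k by omega] at this
            exact this.symm
          · intro h
            have := hzn (k-1)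
            rw [show k - 1 + 2 = k + 1 by omega] at this
            exact this h.symm
      rw [← card_pair hp3]
      refine card_le_card ?_
      intro y hy
      simp only [mem_insert, mem_singleton] at hy
      rcases hy with rfl | rfl
      · exact mem_nb.mpr ⟨hp1, hp2⟩
      · exact mem_nb.mpr ⟨hmZ _ (by omega) (by omega), hzA k⟩
    have h1 := hsp Z ⟨z i, hmZ i le_rfl hij.le⟩
    have h2 : (2:ℝ) * Z.card ≤ ∑ v ∈ Z, ((nb H v Z).card : ℝ) := by
      rw [mul_comm, ← nsmul_eq_mul, ← sum_const]
      exact sum_le_sum fun v hv => by exact_mod_cast hd2Z v hv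
    have hq1 : (1:ℝ) ≤ q := by exact_mod_cast hq
    have hδ1 : 3 * δ ≤ 1 := by nlinarith
    have h3 : (1 - δ) * (2 * Z.card) ≤ 2 * ((Z.card : ℝ) - 1) :=
      (mul_le_mul_of_nonneg_left h2 (by linarith)).trans h1
    have h4 : (Z.card : ℝ) ≤ q + 1 := by
      rw [hZc]; exact_mod_cast (by omega : j - i ≤ q + 1)
    have h5 : δ * Z.card ≤ δ * (q + 1) := mul_le_mul_of_nonneg_left h4 hδ
    nlinarith
  · intro i hi w hw
    have hc := hd2 (i+1) (by omega) (by omega)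
    change (nb H (z (i+1)) S).card = 2 at hc
    have heq : nb H (z (i+1)) S = {z i, z (i+2)} := by
      symm
      apply eq_of_subset_of_card_le
      · intro y hy
        simp only [mem_insert, mem_singleton] at hy
        rcases hy with rfl | rfl
        · exact mem_nb.mpr ⟨hzS _, (hzA i).symm⟩
        · exact mem_nb.mpr ⟨hzS _, hzA (i+1)⟩
      · rw [hc, card_pair (hzn i).symm]
    have : w ∈ nb H (z (i+1)) S ↔ w = z i ∨ w = z (i+2) := by rw [heq]; simp
    rw [← this, mem_nb]
    exact ⟨fun h => ⟨hw, h⟩, fun h => h.2⟩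

lemma Frc.all (H : SimpleGraph W) (c δ : ℝ) (hc : 0 < c) (T q : ℕ) (hT : 1 ≤ T)
    (hcT : 1 < c * T) (hq : 3 * T + 2 ≤ q) (hδ : 0 ≤ δ) (hqδ : 3 * q * δ ≤ 1)
    (hcong : congestion H ≤ δ) (S : Finset W) : Frc H c S := by
  have hδ1 : δ < 1 := by
    have : (5:ℝ) ≤ q := by exact_mod_cast (by omega : 5 ≤ q)
    nlinarith
  induction S using Finset.strongInduction with
  | H S ih =>
    rcases S.eq_empty_or_nonempty with rfl | hS
    · exact Frc.empty H c
    by_cases hleaf : ∃ v ∈ S, (nb H v S).card ≤ 1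
    · obtain ⟨v, hv, hv1⟩ := hleaf
      have := ih _ (erase_ssubset hv)
      rw [← insert_erase hv]
      refine Frc.leaf H c hc _ v (notMem_erase v S) ?_ this
      rcases Nat.le_one_iff_eq_zero_or_eq_one.mp hv1 with h | h
      · right
        intro w hw ha
        rw [card_eq_zero] at h
        have : w ∈ nb H v S := mem_nb.mpr ⟨mem_of_mem_erase hw, ha⟩
        rw [h] at this
        simp at this
      · left
        obtain ⟨u, hu⟩ := card_eq_one.mp h
        have hum : u ∈ nb H v S := by rw [hu]; simp
        rw [mem_nb] at hum
        refine ⟨u, mem_erase.mpr ⟨hum.2.ne.symm, hum.1⟩, fun w hw => ?_⟩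
        have : w ∈ nb H v S ↔ w = u := by rw [hu]; simp
        rw [← this, mem_nb]
        exact ⟨fun h => ⟨mem_of_mem_erase hw, h⟩, fun h => h.2⟩
    · push Not at hleaf
      obtain ⟨x, hxS, hinj, hadj⟩ := long_path H S hS δ q (by omega) hδ hqδ
        (fun Z hZ => cong_sparse H δ hcong Z hZ hδ1) (fun v hv => hleaf v hv)
      set P := (range q).image (fun i => x (i + 1)) with hP
      have hPS : P ⊆ S := by
        intro w hw
        rw [hP, mem_image] at hw
        obtain ⟨i, _, rfl⟩ := hw
        exact hxS _
      have hnP : ∀ k ≤ q + 1, (k = 0 ∨ k = q + 1) → x k ∉ P := by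
        intro k hk hk' hw
        rw [hP, mem_image] at hw
        obtain ⟨i, hi, h⟩ := hw
        rw [mem_range] at hi
        have := hinj _ (by omega) _ hk h
        omega
      have hss : S \ P ⊂ S := by
        refine ⟨sdiff_subset, fun h => ?_⟩
        have := h (hxS 1)
        rw [mem_sdiff] at this
        refine this.2 ?_
        rw [hP, mem_image]
        exact ⟨0, by simp; omega, rfl⟩
      rw [← sdiff_union_of_subset hPS]
      refine Frc.ear H c hc T q hT hcT hq (S \ P) x hinj (mem_sdiff.mpr ⟨hxS _, hnP _ (by omega) (by simp)⟩)
        (mem_sdiff.mpr ⟨hxS _, hnP _ (by omega) (by simp)⟩) ?_ ?_ (ih _ hss)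
      · intro i hi h
        rw [mem_sdiff] at h
        refine h.2 ?_
        rw [hP, mem_image]
        exact ⟨i, by simpa using hi, rfl⟩
      · intro i hi w hw
        refine hadj i hi w ?_
        rcases hw with hw | ⟨j, _, rfl⟩
        · exact (mem_sdiff.mp hw).1
        · exact hxS _

end HSide

set_option linter.unusedSectionVars false
set_option linter.unusedVariables false
section Rodl
open Classical Finset

set_option maxHeartbeats 1000000 in
lemma pairL {W : Type} (H : SimpleGraph W) (ε : ℝ) (hε : 0 < ε) (S : Finset W) :
    ∃ C : ℝ, 0 < C ∧ ∀ (V : Type) [Fintype V] [Nonempty V] (G : SimpleGraph V) (D : W → Finset V),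
      (∀ w ∈ S, (D w).Nonempty) → (∀ u ∈ S, ∀ v ∈ S, u ≠ v → Disjoint (D u) (D v)) →
      (∃ f : W → V, (∀ w ∈ S, f w ∈ D w) ∧ ∀ w ∈ S, ∀ w' ∈ S, H.Adj w w' ↔ G.Adj (f w) (f w')) ∨
      ∃ u ∈ S, ∃ v ∈ S, u ≠ v ∧ ∃ X ⊆ D u, ∃ Y ⊆ D v, ((D u).card : ℝ) ≤ C * X.card ∧
        ((D v).card : ℝ) ≤ C * Y.card ∧ ((∀ x ∈ X, ((nb G x Y).card : ℝ) ≤ ε * Y.card) ∨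
          (∀ x ∈ X, ((nb Gᶜ x Y).card : ℝ) ≤ ε * Y.card)) := by
  induction S using Finset.induction_on with
  | empty =>
    refine ⟨1, one_pos, fun V _ _ G D _ _ => Or.inl ⟨fun _ => Classical.arbitrary V, by simp, by simp⟩⟩
  | insert v S hv ih =>
    obtain ⟨C', hC', ih⟩ := ih
    refine ⟨max (max (S.card : ℝ) 1) (C' / ε), by positivity, ?_⟩
    intro V _ _ G D hD hdis
    have hdS : ∀ u ∈ S, ∀ w ∈ S, u ≠ w → Disjoint (D u) (D w) := fun u hu w hw =>
      hdis u (mem_insert_of_mem hu) w (mem_insert_of_mem hw)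
    set Gw : W → SimpleGraph V := fun w => if H.Adj v w then G else Gᶜ with hGw
    by_cases hgood : ∃ x ∈ D v, ∀ w ∈ S, ε * ((D w).card : ℝ) < (nb (Gw w) x (D w)).card
    · obtain ⟨x, hx, hxg⟩ := hgood
      have hsub : ∀ w, nb (Gw w) x (D w) ⊆ D w := fun w => nb_subset _ _ _
      have hne : ∀ w ∈ S, (nb (Gw w) x (D w)).Nonempty := by
        intro w hw
        rw [← card_pos]
        have := hxg w hw
        have h2 : (0:ℝ) < (nb (Gw w) x (D w)).card := lt_of_le_of_lt (by positivity) this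
        exact_mod_cast h2
      rcases ih V G (fun w => nb (Gw w) x (D w)) hne (fun u hu w hw huw =>
        disjoint_of_subset_left (hsub u) (disjoint_of_subset_right (hsub w) (hdS u hu w hw huw))) with
        ⟨f, f1, f2⟩ | ⟨u, hu, w, hw, huw, X, hX, Y, hY, h1, h2, h3⟩
      · left
        have hfv : ∀ w ∈ S, Function.update f v x w = f w := fun w hw =>
          Function.update_of_ne (by rintro rfl; exact hv hw) _ _
        have hfvv : Function.update f v x v = x := Function.update_self _ _ _
        have key : ∀ w ∈ S, H.Adj v w ↔ G.Adj x (f w) := by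
          intro w hw
          have := f1 w hw
          simp only [mem_nb, hGw] at this
          by_cases ha : H.Adj v w
          · simp only [ha, if_true] at this
            exact iff_of_true ha this.2
          · simp only [ha, if_false] at this
            exact iff_of_false ha (by have := this.2; rw [compl_adj] at this; exact this.2)
        refine ⟨Function.update f v x, ?_, ?_⟩
        · intro w hw
          rcases mem_insert.mp hw with rfl | hw1
          · rw [hfvv]; exact hx
          · rw [hfv w hw1]; exact hsub w (f1 w hw1)
        · intro w hw w' hw'
          rcases mem_insert.mp hw with rfl | hw1 <;> rcases mem_insert.mp hw' with rfl | hw1'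
          · simp
          · rw [hfvv, hfv w' hw1']; exact key w' hw1'
          · rw [hfvv, hfv w hw1, H.adj_comm, G.adj_comm]; exact key w hw1
          · rw [hfv w hw1, hfv w' hw1']; exact f2 w hw1 w' hw1'
      · right
        have hb : ∀ u ∈ S, ∀ X : Finset V, ((nb (Gw u) x (D u)).card : ℝ) ≤ C' * X.card →
            ((D u).card : ℝ) ≤ max (max (S.card : ℝ) 1) (C' / ε) * X.card := by
          intro u hu X h
          have h4 := (hxg u hu).le.trans h
          have h5 : ((D u).card : ℝ) ≤ C' / ε * X.card := by
            rw [div_mul_eq_mul_div, le_div_iff₀ hε]; linarith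
          exact h5.trans (mul_le_mul_of_nonneg_right (le_max_right _ _) (Nat.cast_nonneg _))
        exact ⟨u, mem_insert_of_mem hu, w, mem_insert_of_mem hw, huw, X, hX.trans (hsub u), Y, hY.trans (hsub w),
          hb u hu X h1, hb w hw Y h2, h3⟩
    · right
      push Not at hgood
      set bad : W → Finset V := fun w => (D v).filter (fun x => ((nb (Gw w) x (D w)).card : ℝ) ≤ ε * (D w).card) with hbad
      have hcov : D v ⊆ S.biUnion bad := by
        intro x hx
        obtain ⟨w, hw, h⟩ := hgood x hx
        rw [mem_biUnion]
        exact ⟨w, hw, mem_filter.mpr ⟨hx, h⟩⟩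
      have hDv := hD v (mem_insert_self _ _)
      have hSne : S.Nonempty := by
        obtain ⟨x, hx⟩ := hDv
        have := hcov hx
        rw [mem_biUnion] at this
        exact ⟨this.choose, this.choose_spec.1⟩
      obtain ⟨w, hw, hwc⟩ : ∃ w ∈ S, (D v).card ≤ S.card * (bad w).card := by
        by_contra hcon
        push Not at hcon
        have h1 := sum_lt_sum_of_nonempty hSne hcon
        rw [sum_const, smul_eq_mul, ← mul_sum] at h1
        have h2 := (card_le_card hcov).trans card_biUnion_le
        have h3 := Nat.mul_le_mul_left S.card h2
        omega
      have hvw : v ≠ w := by rintro rfl; exact hv hw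
      refine ⟨v, mem_insert_self _ _, w, mem_insert_of_mem hw, hvw, bad w, filter_subset _ _, D w, Subset.rfl, ?_, ?_, ?_⟩
      · have h1 : ((D v).card : ℝ) ≤ S.card * (bad w).card := by exact_mod_cast hwc
        exact h1.trans (mul_le_mul_of_nonneg_right ((le_max_left _ _).trans (le_max_left _ _)) (Nat.cast_nonneg _))
      · have : (1:ℝ) ≤ max (max (S.card : ℝ) 1) (C' / ε) := (le_max_right _ _).trans (le_max_left _ _)
        exact le_mul_of_one_le_left (Nat.cast_nonneg _) this
      · by_cases ha : H.Adj v w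
        · left
          intro x hx
          have := (mem_filter.mp hx).2
          simpa [hGw, ha] using this
        · right
          intro x hx
          have := (mem_filter.mp hx).2
          simpa [hGw, ha] using this

lemma split_sets {W V : Type} (S : Finset W) (m : ℕ) (U : Finset V) (h : S.card * m ≤ U.card) :
    ∃ D : W → Finset V, (∀ w ∈ S, D w ⊆ U ∧ (D w).card = m) ∧
      ∀ u ∈ S, ∀ v ∈ S, u ≠ v → Disjoint (D u) (D v) := by
  induction S using Finset.induction_on generalizing U with
  | empty => exact ⟨fun _ => ∅, by simp, by simp⟩
  | insert a S ha ih =>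
    rw [card_insert_of_notMem ha, add_mul, one_mul] at h
    obtain ⟨X, hX, hXc⟩ := exists_subset_card_eq (by omega : m ≤ U.card)
    obtain ⟨D, h1, h2⟩ := ih (U \ X) (by rw [card_sdiff_of_subset hX, hXc]; omega)
    have hfv : ∀ w ∈ S, Function.update D a X w = D w := fun w hw =>
      Function.update_of_ne (by rintro rfl; exact ha hw) _ _
    have hfvv : Function.update D a X a = X := Function.update_self _ _ _
    have hd : ∀ w ∈ S, Disjoint X (D w) := fun w hw =>
      disjoint_of_subset_right (h1 w hw).1 disjoint_sdiff
    refine ⟨Function.update D a X, ?_, ?_⟩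
    · intro w hw
      rcases mem_insert.mp hw with rfl | hw1
      · rw [hfvv]; exact ⟨hX, hXc⟩
      · rw [hfv w hw1]; exact ⟨(h1 w hw1).1.trans sdiff_subset, (h1 w hw1).2⟩
    · intro w hw w' hw' hne
      rcases mem_insert.mp hw with rfl | hw1 <;> rcases mem_insert.mp hw' with rfl | hw1'
      · exact absurd rfl hne
      · rw [hfvv, hfv w' hw1']; exact hd w' hw1'
      · rw [hfvv, hfv w hw1]; exact (hd w hw1).symm
      · rw [hfv w hw1, hfv w' hw1']; exact h2 w hw1 w' hw1' hne

/-- a list of pairwise disjoint, one-sided sparse sets inside `U` -/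
def BL {V : Type} [Fintype V] (G : SimpleGraph V) (U : Finset V) (C lam : ℝ) (m : ℕ) : Prop :=
  ∃ L : List (Finset V), L.length = m ∧ (∀ X ∈ L, X ⊆ U ∧ (U.card : ℝ) ≤ C * X.card) ∧
    L.Pairwise (fun X Y => Disjoint X Y ∧ ∀ x ∈ X, ((nb G x Y).card : ℝ) ≤ lam * Y.card)

lemma BL.mono {V : Type} [Fintype V] {G : SimpleGraph V} {U : Finset V} {C C' lam : ℝ} {m : ℕ}
    (h : BL G U C lam m) (hC : C ≤ C') : BL G U C' lam m := by
  obtain ⟨L, h1, h2, h3⟩ := h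
  exact ⟨L, h1, fun X hX => ⟨(h2 X hX).1, (h2 X hX).2.trans (mul_le_mul_of_nonneg_right hC (Nat.cast_nonneg _))⟩, h3⟩

lemma BL.one {V : Type} [Fintype V] (G : SimpleGraph V) (U : Finset V) (lam : ℝ) : BL G U 1 lam 1 :=
  ⟨[U], rfl, by simp, by simp⟩

lemma BL.sub {V : Type} [Fintype V] {G : SimpleGraph V} {U X : Finset V} {C C0 lam : ℝ} {m : ℕ}
    (h : BL G X C lam m) (hC0 : 0 < C0) (hX : X ⊆ U) (hc : (U.card : ℝ) ≤ C0 * X.card) : BL G U (C0 * C) lam m := by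
  obtain ⟨L, h1, h2, h3⟩ := h
  refine ⟨L, h1, fun Y hY => ⟨(h2 Y hY).1.trans hX, hc.trans ?_⟩, h3⟩
  rw [mul_assoc]
  exact mul_le_mul_of_nonneg_left (h2 Y hY).2 hC0.le

lemma BL.append {V : Type} [Fintype V] {G : SimpleGraph V} {U X Y : Finset V} {C C0 lam ε : ℝ} {m m' : ℕ}
    (h : BL G X C lam m) (h' : BL G Y C lam m') (hC0 : 0 < C0) (hX : X ⊆ U) (hY : Y ⊆ U)
    (hc : (U.card : ℝ) ≤ C0 * X.card) (hc' : (U.card : ℝ) ≤ C0 * Y.card) (hd : Disjoint X Y) (hε : 0 ≤ ε)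
    (hs : ∀ x ∈ X, ((nb G x Y).card : ℝ) ≤ ε * Y.card) (hεC : ε * C ≤ lam) :
    BL G U (C0 * C) lam (m + m') := by
  obtain ⟨L, h1, h2, h3⟩ := h.sub hC0 hX hc
  obtain ⟨L0, k1, k2, k3⟩ := h
  obtain ⟨L', g1, g2, g3⟩ := h'
  refine ⟨L0 ++ L', by simp [k1, g1], ?_, ?_⟩
  · intro Z hZ
    rw [List.mem_append] at hZ
    rcases hZ with hZ | hZ
    · refine ⟨(k2 Z hZ).1.trans hX, hc.trans ?_⟩
      rw [mul_assoc]
      exact mul_le_mul_of_nonneg_left (k2 Z hZ).2 hC0.le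
    · refine ⟨(g2 Z hZ).1.trans hY, hc'.trans ?_⟩
      rw [mul_assoc]
      exact mul_le_mul_of_nonneg_left (g2 Z hZ).2 hC0.le
  · rw [List.pairwise_append]
    refine ⟨k3, g3, fun A hA B hB => ⟨?_, fun x hx => ?_⟩⟩
    · exact disjoint_of_subset_left (k2 A hA).1 (disjoint_of_subset_right (g2 B hB).1 hd)
    · calc ((nb G x B).card : ℝ) ≤ (nb G x Y).card := by exact_mod_cast card_le_card (nb_mono (g2 B hB).1)
        _ ≤ ε * Y.card := hs x ((k2 A hA).1 hx)
        _ ≤ ε * (C * B.card) := mul_le_mul_of_nonneg_left (g2 B hB).2 hε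
        _ = (ε * C) * B.card := by ring
        _ ≤ _ := mul_le_mul_of_nonneg_right hεC (Nat.cast_nonneg _)

set_option maxHeartbeats 1000000 in
lemma rodl_list {W : Type} [Fintype W] (H : SimpleGraph W) (lam : ℝ) (hlam : 0 < lam) (s : ℕ) :
    ∀ i j : ℕ, i + j = s → ∃ C : ℝ, 0 < C ∧ ∃ N : ℕ, ∀ (V : Type) [Fintype V] (G : SimpleGraph V),
      ¬ Contains G H → ∀ U : Finset V, N ≤ U.card → BL G U C lam (2 ^ i) ∨ BL Gᶜ U C lam (2 ^ j) := by
  induction s with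
  | zero =>
    intro i j hij
    obtain ⟨rfl, rfl⟩ : i = 0 ∧ j = 0 := by omega
    exact ⟨1, one_pos, 0, fun V _ G _ U _ => Or.inl (BL.one G U lam)⟩
  | succ s ih =>
    intro i j hij
    rcases Nat.eq_zero_or_pos i with rfl | hi
    · exact ⟨1, one_pos, 0, fun V _ G _ U _ => Or.inl (BL.one G U lam)⟩
    rcases Nat.eq_zero_or_pos j with rfl | hj
    · exact ⟨1, one_pos, 0, fun V _ G _ U _ => Or.inr (BL.one Gᶜ U lam)⟩
    obtain ⟨i, rfl⟩ : ∃ k, i = k + 1 := ⟨i - 1, by omega⟩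
    obtain ⟨j, rfl⟩ : ∃ k, j = k + 1 := ⟨j - 1, by omega⟩
    obtain ⟨C1, hC1, N1, ih1⟩ := ih i (j+1) (by omega)
    obtain ⟨C2, hC2, N2, ih2⟩ := ih (i+1) j (by omega)
    set Cm := max C1 C2 with hCm
    have hCm0 : 0 < Cm := lt_max_of_lt_left hC1
    set ε := lam / Cm with hε
    have hε0 : 0 < ε := by positivity
    have hεC : ε * Cm ≤ lam := by rw [hε, div_mul_cancel₀ _ hCm0.ne']
    obtain ⟨C3, hC3, hpair⟩ := pairL H ε hε0 (univ : Finset W)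
    set h := Fintype.card W with hh
    set C0 : ℝ := (2 * h + 1) * C3 with hC0
    have hC0p : 0 < C0 := by positivity
    refine ⟨C0 * Cm, by positivity, max (h + 1) ⌈C0 * (max N1 N2 : ℕ)⌉₊, ?_⟩
    intro V _ G hG U hU
    have hU1 : h + 1 ≤ U.card := (le_max_left _ _).trans hU
    have hU2 : C0 * (max N1 N2 : ℕ) ≤ U.card :=
      (Nat.le_ceil _).trans (by exact_mod_cast (le_max_right _ _).trans hU)
    have hUne : U.Nonempty := by rw [← card_pos]; omega
    have : Nonempty V := ⟨hUne.choose⟩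
    obtain ⟨D, hD1, hD2⟩ := split_sets (univ : Finset W) (U.card / h) U (by
      rw [card_univ]; exact Nat.mul_div_le _ _)
    have hDc : ∀ w, 1 ≤ (D w).card ∧ (U.card : ℝ) ≤ (2 * h + 1) * (D w).card := by
      intro w
      rw [(hD1 w (mem_univ _)).2]
      have hh0 : 0 < h := Fintype.card_pos_iff.mpr ⟨w⟩
      have h1 : 1 ≤ U.card / h := (Nat.one_le_div_iff hh0).mpr (by omega)
      refine ⟨h1, ?_⟩
      have h2 : U.card ≤ (2 * h + 1) * (U.card / h) := by
        have := Nat.div_add_mod U.card h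
        have h3 := Nat.mod_lt U.card hh0
        nlinarith
      exact_mod_cast h2
    rcases hpair V G D (fun w _ => by rw [← card_pos]; exact (hDc w).1) hD2 with
      ⟨f, f1, f2⟩ | ⟨u, hu, v, hv, huv, X, hX, Y, hY, h1, h2, h3⟩
    · exfalso
      apply hG
      refine ⟨⟨⟨f, ?_⟩, ?_⟩⟩
      · intro a b hab
        by_contra hne
        refine Finset.disjoint_left.mp (hD2 a (mem_univ _) b (mem_univ _) hne) (f1 a (mem_univ _)) ?_
        rw [hab]; exact f1 b (mem_univ _)
      · intro a b
        exact (f2 a (mem_univ _) b (mem_univ _)).symm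
    · have hXU : X ⊆ U := hX.trans (hD1 u hu).1
      have hYU : Y ⊆ U := hY.trans (hD1 v hv).1
      have hXc : (U.card : ℝ) ≤ C0 * X.card := by
        refine (hDc u).2.trans ?_
        rw [hC0, mul_assoc]
        exact mul_le_mul_of_nonneg_left h1 (by positivity)
      have hYc : (U.card : ℝ) ≤ C0 * Y.card := by
        refine (hDc v).2.trans ?_
        rw [hC0, mul_assoc]
        exact mul_le_mul_of_nonneg_left h2 (by positivity)
      have hXN : max N1 N2 ≤ X.card := by
        have := le_of_mul_le_mul_left (hU2.trans hXc) hC0p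
        exact_mod_cast this
      have hYN : max N1 N2 ≤ Y.card := by
        have := le_of_mul_le_mul_left (hU2.trans hYc) hC0p
        exact_mod_cast this
      have hXY : Disjoint X Y := disjoint_of_subset_left hX (disjoint_of_subset_right hY (hD2 u hu v hv huv))
      rcases h3 with h3 | h3
      · rcases ih1 V G hG X ((le_max_left _ _).trans hXN) with hx | hx
        · rcases ih1 V G hG Y ((le_max_left _ _).trans hYN) with hy | hy
          · left
            rw [pow_succ, mul_two]
            exact BL.append (hx.mono (le_max_left _ _)) (hy.mono (le_max_left _ _)) hC0p hXU hYU hXc hYc hXY hε0.le h3 hεC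
          · right
            exact (hy.mono (le_max_left _ _)).sub hC0p hYU hYc
        · right
          exact (hx.mono (le_max_left _ _)).sub hC0p hXU hXc
      · rcases ih2 V G hG X ((le_max_right _ _).trans hXN) with hx | hx
        · left
          exact (hx.mono (le_max_right _ _)).sub hC0p hXU hXc
        · rcases ih2 V G hG Y ((le_max_right _ _).trans hYN) with hy | hy
          · left
            exact (hy.mono (le_max_right _ _)).sub hC0p hYU hYc
          · right
            rw [pow_succ, mul_two]
            exact BL.append (hx.mono (le_max_right _ _)) (hy.mono (le_max_right _ _)) hC0p hXU hYU hXc hYc hXY hε0.le h3 hεC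

lemma sum_nb_symm {V : Type} [Fintype V] (G : SimpleGraph V) (X Y : Finset V) :
    ∑ x ∈ X, ((nb G x Y).card : ℝ) = ∑ y ∈ Y, ((nb G y X).card : ℝ) := by
  simp only [nb, card_filter, Nat.cast_sum]
  rw [sum_comm]
  refine sum_congr rfl fun y _ => sum_congr rfl fun x _ => ?_
  rw [G.adj_comm]

lemma BL.blockade {V : Type} [Fintype V] {G : SimpleGraph V} {U : Finset V} {C lam : ℝ} {m K : ℕ}
    (h : BL G U C (lam / (4 * (K + 1))) m) (hK : K ≤ m) (hlam : 0 < lam) (hC : 0 < C) :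
    ∃ (col : V → ℕ) (I : Finset ℕ) (A : ℕ → Finset V), I.card = K ∧ Colored col I A ∧
      (∀ i ∈ I, (U.card : ℝ) ≤ 2 * C * (A i).card) ∧ Link G I A lam := by
  obtain ⟨L, h1, h2, h3⟩ := h
  rw [List.pairwise_iff_getElem] at h3
  set B : ℕ → Finset V := fun i => if hi : i < m then L[i]'(by omega) else ∅ with hB
  have hBi : ∀ i (hi : i < m), B i = L[i]'(by omega) := fun i hi => by simp [hB, hi]
  have hmu : 0 < lam / (4 * (K + 1)) := by positivity
  have hlt : ∀ i < m, ∀ j < m, i < j →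
      ∑ x ∈ B i, ((nb G x (B j)).card : ℝ) ≤ lam / (4 * (K + 1)) * (B i).card * (B j).card := by
    intro i hi j hj hij
    have := (h3 i j (by omega) (by omega) hij).2
    rw [← hBi i hi, ← hBi j hj] at this
    calc ∑ x ∈ B i, ((nb G x (B j)).card : ℝ) ≤ ∑ x ∈ B i, lam / (4 * (K + 1)) * (B j).card := sum_le_sum this
      _ = _ := by rw [sum_const, nsmul_eq_mul]; ring
  have hdis : ∀ i < m, ∀ j < m, i ≠ j → Disjoint (B i) (B j) := by
    intro i hi j hj hij
    rw [hBi i hi, hBi j hj]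
    rcases lt_or_gt_of_ne hij with h | h
    · exact (h3 i j (by omega) (by omega) h).1
    · exact (h3 j i (by omega) (by omega) h).1.symm
  obtain ⟨B', g1, g2, g3⟩ := trim_lemma G (range K) B _ hmu (by
    intro i hi j hj hij
    rw [mem_range] at hi hj
    rcases lt_or_gt_of_ne hij with h | h
    · exact hlt i (by omega) j (by omega) h
    · rw [sum_nb_symm]
      refine (hlt j (by omega) i (by omega) h).trans (le_of_eq (by ring)))
  refine ⟨fun v => if h : ∃ i, i < m ∧ v ∈ B i then h.choose else 0, range K, B', card_range K, ?_, ?_, ?_⟩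
  · intro i hi v hv
    rw [mem_range] at hi
    have hex : ∃ i, i < m ∧ v ∈ B i := ⟨i, by omega, g1 i hv⟩
    simp only
    rw [dif_pos hex]
    by_contra hne
    exact Finset.disjoint_left.mp (hdis _ hex.choose_spec.1 i (by omega) hne) hex.choose_spec.2 (g1 i hv)
  · intro i hi
    have hi' := mem_range.mp hi
    have h4 := (h2 _ (List.getElem_mem (by omega : i < L.length))).2
    rw [← hBi i (by omega)] at h4
    have h5 := mul_le_mul_of_nonneg_left (g2 i hi) hC.le
    linarith
  · refine g3.mono Subset.rfl ?_
    rw [card_range]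
    have : 4 * (K:ℝ) * (lam / (4 * (K + 1))) = lam * (K / (K + 1)) := by field_simp
    rw [this]
    have : (K:ℝ) / (K + 1) ≤ 1 := by rw [div_le_one (by positivity)]; linarith
    nlinarith

end Rodl

set_option linter.unusedSectionVars false
set_option linter.unusedVariables false
section Final
open Classical Finset

lemma frc_blockade_false {W : Type} [Fintype W] (H : SimpleGraph W) {V : Type} (G : SimpleGraph V)
    (col : V → ℕ) (f : W → V) (hinj : Set.InjOn (fun w => col (f w)) ((univ : Finset W) : Set W))
    (hadj : ∀ w ∈ (univ : Finset W), ∀ w' ∈ (univ : Finset W), H.Adj w w' ↔ G.Adj (f w) (f w')) :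
    Contains G H := by
  refine ⟨⟨⟨f, ?_⟩, ?_⟩⟩
  · intro a b hab
    exact hinj (by simp) (by simp) (by simp [hab])
  · intro a b
    exact (hadj a (mem_univ _) b (mem_univ _)).symm

lemma core (c : ℝ) (hc : 0 < c) {W : Type} [Fintype W] (H : SimpleGraph W)
    (hcong : congestion H ≤ c / (9 + 15 * c)) :
    ∃ N : ℕ, ∀ (V : Type) [Fintype V] (G : SimpleGraph V), N ≤ Fintype.card V →
      ¬ Contains G H → ¬ Contains Gᶜ H → Coh G ((Fintype.card V : ℝ) ^ (1 - c)) →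
      Coh Gᶜ ((Fintype.card V : ℝ) ^ (1 - c)) → False := by
  have hfl1 := Nat.lt_floor_add_one (1 / c)
  have hfl2 := Nat.floor_le (show 0 ≤ 1 / c by positivity)
  have hfl3 := Nat.floor_le (show 0 ≤ 3 / c by positivity)
  obtain ⟨K, σ, hσ, lam, hlam, N1, hF⟩ := Frc.all H c (c / (9 + 15 * c)) hc (⌊1 / c⌋₊ + 1) (⌊3 / c⌋₊ + 5)
    (by omega) (by
      push_cast
      rw [div_lt_iff₀ hc] at hfl1
      linarith) (by
      have : 3 * ⌊1 / c⌋₊ ≤ ⌊3 / c⌋₊ := by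
        apply Nat.le_floor
        push_cast
        have : 3 / c = 3 * (1 / c) := by ring
        linarith
      omega) (by positivity) (by
      push_cast
      rw [le_div_iff₀ hc] at hfl3
      rw [← mul_div_assoc, div_le_one (by positivity)]
      nlinarith) hcong univ
  obtain ⟨C, hC, N2, hR⟩ := rodl_list H (lam / (4 * (K + 1))) (by positivity) (K + K) K K rfl
  obtain ⟨N3, hN32, hN3⟩ := large_rpow σ hσ (2 * C)
  refine ⟨max N1 (max N2 N3), ?_⟩
  intro V _ G hn hG hG' hcoh hcoh'
  set n := Fintype.card V with hnV
  have hnN1 : N1 ≤ n := (le_max_left _ _).trans hn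
  have hnN2 : N2 ≤ n := (le_max_left _ _).trans ((le_max_right _ _).trans hn)
  have hnN3 : N3 ≤ n := (le_max_right _ _).trans ((le_max_right _ _).trans hn)
  have hn0 : (0:ℝ) < n := by exact_mod_cast (by omega : 0 < n)
  have hK : K ≤ 2 ^ K := Nat.lt_two_pow_self.le
  have hsz : ∀ x : ℕ, (n:ℝ) ≤ 2 * C * x → (n:ℝ) ^ (1 - σ) ≤ x := by
    intro x hx
    have h1 : (n:ℝ) ^ σ * (n:ℝ) ^ (1 - σ) = n := by
      rw [← Real.rpow_add hn0]; simp
    have h2 := mul_le_mul_of_nonneg_right (hN3 n hnN3) (Real.rpow_nonneg hn0.le (1 - σ))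
    have h3 : 2 * C * (n:ℝ) ^ (1 - σ) ≤ 2 * C * x := by linarith
    exact le_of_mul_le_mul_left h3 (by positivity)
  have main : ∀ G' : SimpleGraph V, BL G' univ C (lam / (4 * (K + 1))) (2 ^ K) →
      Coh G' ((n : ℝ) ^ (1 - c)) → Contains G' H := by
    intro G' hB hcG
    obtain ⟨col, I, A, a1, a2, a3, a4⟩ := hB.blockade hK hlam hC
    rw [card_univ] at a3
    obtain ⟨f, _, f2, f3⟩ := hF V G' hnN1 hcG col I A a1.ge a2 (fun i hi => hsz _ (a3 i hi)) a4
    exact frc_blockade_false H G' col f f2 f3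
  rcases hR V G hG univ (by rw [card_univ]; exact hnN2) with h | h
  · exact hG (main G h hcoh)
  · exact hG' (main Gᶜ h hcoh')

lemma main_of_core (c : ℝ) (hc : 0 < c) {W : Type} [Fintype W] (H : SimpleGraph W)
    (hcong : congestion H ≤ c / (9 + 15 * c)) :
    ∃ ε : ℝ, 0 < ε ∧ ∀ {V : Type} [Fintype V] (G : SimpleGraph V),
      1 < Fintype.card V → ¬ Contains G H → ¬ Contains Gᶜ H →
      ∃ A B : Set V, PurePair G A B ∧
        ε * (Fintype.card V : ℝ) ^ (1 - c) ≤ (A.ncard : ℝ) ∧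
        ε * (Fintype.card V : ℝ) ^ (1 - c) ≤ (B.ncard : ℝ) := by
  obtain ⟨N, hN⟩ := core c hc H hcong
  refine ⟨1 / (N + 1), by positivity, ?_⟩
  intro V _ G hV hG hG'
  set n := Fintype.card V with hnV
  have hn1 : (1:ℝ) ≤ n := by exact_mod_cast hV.le
  have hw0 : (0:ℝ) ≤ (n:ℝ) ^ (1 - c) := Real.rpow_nonneg (by linarith) _
  have hε1 : (1:ℝ) / (N + 1) ≤ 1 := by
    rw [div_le_one (by positivity)]
    linarith [Nat.cast_nonneg (α := ℝ) N]
  rcases Nat.lt_or_ge n N with hlt | hge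
  · obtain ⟨a, b, hab⟩ := Fintype.exists_pair_of_one_lt_card hV
    have hle : 1 / ((N:ℝ) + 1) * (n:ℝ) ^ (1 - c) ≤ 1 := by
      have h1 : (n:ℝ) ^ (1 - c) ≤ (n:ℝ) ^ (1:ℝ) := Real.rpow_le_rpow_of_exponent_le hn1 (by linarith)
      rw [Real.rpow_one] at h1
      have h2 : (n:ℝ) ≤ N := by exact_mod_cast hlt.le
      rw [one_div_mul_eq_div, div_le_one (by positivity)]
      linarith
    refine ⟨{a}, {b}, ⟨by simpa using hab, ?_⟩, by simpa using hle, by simpa using hle⟩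
    by_cases h : G.Adj a b
    · left; simpa using h
    · right; simpa using h
  · by_contra hcon
    push Not at hcon
    have hle : 1 / ((N:ℝ) + 1) * (n:ℝ) ^ (1 - c) ≤ (n:ℝ) ^ (1 - c) := mul_le_of_le_one_left hw0 hε1
    have key : ∀ A B : Finset V, PurePair G (A : Set V) (B : Set V) →
        (A.card : ℝ) < (n:ℝ) ^ (1 - c) ∨ (B.card : ℝ) < (n:ℝ) ^ (1 - c) := by
      intro A B hAB
      by_contra h
      push Not at h
      have := hcon A B hAB (by rw [Set.ncard_coe_finset]; exact hle.trans h.1)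
      rw [Set.ncard_coe_finset] at this
      linarith [hle.trans h.2]
    refine hN V G hge hG hG' ?_ ?_
    · intro A B hd hA
      exact key A B ⟨by exact_mod_cast hd, Or.inr (by simpa using hA)⟩
    · intro A B hd hA
      refine key A B ⟨by exact_mod_cast hd, Or.inl ?_⟩
      intro a ha b hb
      have hne : a ≠ b := by
        rintro rfl
        exact Finset.disjoint_left.mp hd ha hb
      have := hA a ha b hb
      rw [compl_adj] at this
      by_contra h
      exact this ⟨hne, h⟩

end Final

/-- if one of `H`, `Hᶜ` has congestion at most `c/(9+15c)`, then there is
`ε > 0` such that every graph `G` with `|G| > 1` that is `H`-free and `Hᶜ`-free has a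
pure pair `A, B` with `|A|, |B| ≥ ε|G|^{1-c}`. -/
theorem statement_0 (c : ℝ) (hc : 0 < c) {W : Type} [Fintype W] (H : SimpleGraph W)
    (hcong : congestion H ≤ c / (9 + 15 * c) ∨ congestion Hᶜ ≤ c / (9 + 15 * c)) :
    ∃ ε : ℝ, 0 < ε ∧ ∀ {V : Type} [Fintype V] (G : SimpleGraph V),
      1 < Fintype.card V → ¬ Contains G H → ¬ Contains G Hᶜ →
      ∃ A B : Set V, PurePair G A B ∧
        ε * (Fintype.card V : ℝ) ^ (1 - c) ≤ (A.ncard : ℝ) ∧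
        ε * (Fintype.card V : ℝ) ^ (1 - c) ≤ (B.ncard : ℝ) := by
  rcases hcong with h | h
  · obtain ⟨ε, hε, hm⟩ := main_of_core c hc H h
    refine ⟨ε, hε, fun {V} _ G hV h1 h2 => hm G hV h1 ?_⟩
    rintro ⟨e⟩
    apply h2
    have := SimpleGraph.Embedding.complEquiv e
    rw [compl_compl] at this
    exact ⟨this⟩
  · obtain ⟨ε, hε, hm⟩ := main_of_core c hc Hᶜ h
    refine ⟨ε, hε, fun {V} _ G hV h1 h2 => hm G hV h2 ?_⟩
    rintro ⟨e⟩
    exact h1 ⟨SimpleGraph.Embedding.complEquiv.symm e⟩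

end PurePairs
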